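/- arXiv:math/9903097 — 2 statements merged into one kernel-verified Lean document; each statement's English description precedes it below -/
import Mathlib

section
/- Let 𝓚 ⊆ 𝓛 ⊆ 𝓕 be a tower of fields with 𝓕|𝓛 and 𝓛|𝓚 finitely generated, equipped with a common valuation P. If (𝓕|𝓛,P) is uniformizable and (𝓛|𝓚,P) is uniformizable, then (𝓕|𝓚,P) is uniformizable. -/
/-! Common valuation-theoretic notions, following F.-V. Kuhlmann,
"On local uniformization in arbitrary characteristic I".

A valued field `(F, P)` is modelled by a field `F` together with a
`ValuationSubring F` (the valuation ring `𝓞` of the place `P`). -/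

namespace LocalUnif

variable {F : Type*} [Field F]

/-- `x` lies in the maximal ideal of the valuation subring `O`,
i.e. the residue `xP` is `0` (equivalently `v_P x > 0`, or `x = 0`). -/
def InMax (O : ValuationSubring F) (x : F) : Prop := x = 0 ∨ x⁻¹ ∉ O

/-- `x` is a unit of the valuation subring `O`, i.e. `v_P x = 0`. -/
def IsVUnit (O : ValuationSubring F) (x : F) : Prop := x ≠ 0 ∧ x ∈ O ∧ x⁻¹ ∈ O

/-- The valuation with valuation ring `O` is trivial on the subfield `K`;
equivalently, every nonzero element of `K` is a unit of `O`. -/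
def TrivialOn (O : ValuationSubring F) (K : Subfield F) : Prop :=
  ∀ x ∈ K, x ∈ O ∧ x⁻¹ ∈ O

/-- The residue field of `O` equals (the isomorphic image of) the subfield `K`:
every element of `O` is congruent to an element of `K` modulo the maximal ideal.
(For a place `P` of `F|K` this says that `P` is a rational place, `FP = K`.) -/
def ResidueEq (O : ValuationSubring F) (K : Subfield F) : Prop :=
  ∀ x ∈ O, ∃ c ∈ K, InMax O (x - c)

/-- The residue field of `O` is algebraic over (the image of) `K`; for a place of
`F|K` this says that `P` is zero-dimensional. -/
def ResidueAlgebraic (O : ValuationSubring F) (K : Subfield F) : Prop :=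
  ∀ x ∈ O, ∃ p : Polynomial F, p ≠ 0 ∧ (∀ i, p.coeff i ∈ K) ∧ InMax O (Polynomial.eval x p)

/-- The values `v_P (x i)` are rationally independent modulo `v_P K`:
no nontrivial ℤ-linear combination of the values lies in `ℚ ⊗ v_P K`
(equivalently, in `v_P K`, by clearing denominators). -/
def ValIndepMod (O : ValuationSubring F) (K : Subfield F) {ρ : ℕ} (x : Fin ρ → F) : Prop :=
  (∀ i, x i ≠ 0) ∧
  ∀ e : Fin ρ → ℤ, (∃ c ∈ K, c ≠ 0 ∧ IsVUnit O ((∏ i, x i ^ e i) / c)) → e = 0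

/-- The residues `(y i)P` are algebraically independent over the residue field `KP`:
for every polynomial with coefficients in `𝓞_K = K ∩ O`, at least one of which is
a unit, the value of the polynomial at `y` is a unit (so its residue is nonzero). -/
def ResIndep (O : ValuationSubring F) (K : Subfield F) {τ : ℕ} (y : Fin τ → F) : Prop :=
  (∀ i, y i ∈ O) ∧
  ∀ p : MvPolynomial (Fin τ) F, (∀ m, p.coeff m ∈ K ∧ p.coeff m ∈ O) →
    (∃ m, IsVUnit O (p.coeff m)) → ¬ InMax O (MvPolynomial.eval y p)

/-- `dim_ℚ (ℚ ⊗ (v_P F / v_P K)) = ρ`: there is a maximal set of `ρ` elements of `F`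
whose values are rationally independent modulo `v_P K`. -/
def RatRankEq (O : ValuationSubring F) (K : Subfield F) (ρ : ℕ) : Prop :=
  (∃ x : Fin ρ → F, ValIndepMod O K x) ∧ ∀ x : Fin (ρ + 1) → F, ¬ ValIndepMod O K x

/-- `trdeg (FP | KP) = τ`: there is a maximal set of `τ` elements of `O` whose
residues are algebraically independent over `KP`. -/
def ResTrdegEq (O : ValuationSubring F) (K : Subfield F) (τ : ℕ) : Prop :=
  (∃ y : Fin τ → F, ResIndep O K y) ∧ ∀ y : Fin (τ + 1) → F, ¬ ResIndep O K y

/-- `trdeg (F | K) = d`. -/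
def TrdegEq (K : Subfield F) (d : ℕ) : Prop :=
  ∃ t : Fin d → F, IsTranscendenceBasis ↥K t

/-- `P` is an Abhyankar place of `F|K`:
`trdeg F|K = trdeg FP|K + dim_ℚ (ℚ ⊗ v_P F)`. -/
def IsAbhyankar (O : ValuationSubring F) (K : Subfield F) : Prop :=
  ∃ d ρ τ : ℕ, d = ρ + τ ∧ TrdegEq K d ∧ RatRankEq O K ρ ∧ ResTrdegEq O K τ

/-- The value group of `O` is archimedean ordered (rank at most 1):
for any two positive values `v_P a, v_P b` there is `n` with `n · v_P a ≥ v_P b`. -/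
def RankOne (O : ValuationSubring F) : Prop :=
  ∀ a b : F, a ≠ 0 → InMax O a → b ≠ 0 → InMax O b → ∃ n : ℕ, a ^ n / b ∈ O

/-- The value group of `O` has (rank) at least `r`: there is a chain of `r` positive
values, each infinitely larger than the previous one. -/
def RankAtLeast (O : ValuationSubring F) (r : ℕ) : Prop :=
  ∃ a : Fin r → F, (∀ i, a i ≠ 0 ∧ InMax O (a i)) ∧
    ∀ i j : Fin r, i < j → ∀ n : ℕ, a i ^ n / a j ∉ O

/-- The value group of `O` has rank exactly `r`. -/
def RankEq (O : ValuationSubring F) (r : ℕ) : Prop :=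
  RankAtLeast O r ∧ ¬ RankAtLeast O (r + 1)

/-- The valuation is discrete: its value group is order isomorphic to `ℤ`,
i.e. there is a uniformizer `π` with every value an integer multiple of `v_P π`. -/
def IsDiscrete (O : ValuationSubring F) : Prop :=
  ∃ π : F, π ≠ 0 ∧ InMax O π ∧ ∀ x : F, x ≠ 0 → ∃ n : ℤ, IsVUnit O (x / π ^ n)

/-- `F|K` is an algebraic function field: a finitely generated field extension of
transcendence degree at least 1. -/
def IsFunctionField (K : Subfield F) : Prop :=
  (∃ S : Finset F, IntermediateField.adjoin ↥K (S : Set F) = ⊤) ∧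
  ∃ x : F, Transcendental ↥K x

/-- The data of a weak uniformization of `(𝓛|𝓚, P)` (both subfields of an ambient
valued field `F`, `𝓚 ⊆ 𝓛`) with uniformizing transcendence basis `t` and generators
`η`: there are polynomials `f i` in `n` variables `X₁, …, Xₙ` with coefficients in
`𝓞_𝓚[t₁,…,tₛ]` such that (U1) `X j` does not occur in `f i` for `i < j`,
(U2) `f i (η) = 0`, and (U3) the residue of `det J_f (η)` is nonzero; moreover `t`
is a transcendence basis of `𝓛|𝓚` inside `𝓞_𝓛` and `𝓛 = 𝓚(t, η)`. -/
def UnifData (𝓛 𝓚 : Subfield F) (O : ValuationSubring F) {s n : ℕ}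
    (t : Fin s → F) (η : Fin n → F) : Prop :=
  (∀ i, t i ∈ 𝓛 ∧ t i ∈ O) ∧ (∀ i, η i ∈ 𝓛 ∧ η i ∈ O) ∧
  AlgebraicIndependent ↥𝓚 t ∧
  (∀ z ∈ 𝓛, IsAlgebraic ↥(IntermediateField.adjoin ↥𝓚 (Set.range t)) z) ∧
  Subfield.closure ((𝓚 : Set F) ∪ Set.range t ∪ Set.range η) = 𝓛 ∧
  ∃ f : Fin n → MvPolynomial (Fin n) F,
    (∀ i m, (f i).coeff m ∈
      Subring.closure ((↑(𝓚.toSubring ⊓ O.toSubring) : Set F) ∪ Set.range t)) ∧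
    (∀ i j : Fin n, (i : ℕ) < (j : ℕ) → MvPolynomial.degreeOf j (f i) = 0) ∧
    (∀ i, MvPolynomial.eval η (f i) = 0) ∧
    IsVUnit O (Matrix.det (Matrix.of fun i j : Fin n =>
      MvPolynomial.eval η (MvPolynomial.pderiv j (f i))))

/-- `(𝓛|𝓚, P)` is uniformizable with respect to `ζ₁, …, ζ_m`:
there is a weak uniformization whose generators `η` include all the `ζ k`. -/
def UnifWrt (𝓛 𝓚 : Subfield F) (O : ValuationSubring F) {m : ℕ} (ζ : Fin m → F) : Prop :=
  ∃ (s n : ℕ) (t : Fin s → F) (η : Fin n → F),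
    UnifData 𝓛 𝓚 O t η ∧ ∃ σ : Fin m → Fin n, ∀ k, η (σ k) = ζ k

/-- `(𝓛|𝓚, P)` is uniformizable: uniformizable with respect to every finite
list of elements of `𝓞_𝓛`. -/
def UnifIn (𝓛 𝓚 : Subfield F) (O : ValuationSubring F) : Prop :=
  ∀ (m : ℕ) (ζ : Fin m → F), (∀ k, ζ k ∈ 𝓛 ∧ ζ k ∈ O) → UnifWrt 𝓛 𝓚 O ζ

section Defectless

variable {K L : Type*} [Field K] [Field L]

/-- The values of the `a i` lie in pairwise distinct cosets modulo the value group of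
the ground field along `φ`; thus there are at least `e` distinct cosets. -/
def ValClassIndep (φ : K →+* L) (OL : ValuationSubring L) {e : ℕ} (a : Fin e → L) : Prop :=
  (∀ i, a i ≠ 0) ∧ ∀ i j : Fin e, i ≠ j →
    ¬ ∃ c : K, c ≠ 0 ∧ IsVUnit OL (a i / (a j * φ c))

/-- The ramification index `e = (v_P L : v_P K)` of `OL` over the ground field along `φ`. -/
def RamIdxEq (φ : K →+* L) (OL : ValuationSubring L) (e : ℕ) : Prop :=
  (∃ a : Fin e → L, ValClassIndep φ OL a) ∧ ∀ a : Fin (e + 1) → L, ¬ ValClassIndep φ OL a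

/-- The residues of the `b i` are linearly independent over the residue field of the
ground field along `φ`. -/
def ResLinIndep (φ : K →+* L) (OK : ValuationSubring K) (OL : ValuationSubring L)
    {f : ℕ} (b : Fin f → L) : Prop :=
  (∀ i, b i ∈ OL) ∧ ∀ c : Fin f → K, (∀ i, c i ∈ OK) → (∃ i, ¬ InMax OK (c i)) →
    ¬ InMax OL (∑ i, φ (c i) * b i)

/-- The inertia degree `f = [LP : KP]` of `OL` over `(K, OK)` along `φ`. -/
def InertiaDegEq (φ : K →+* L) (OK : ValuationSubring K) (OL : ValuationSubring L)
    (f : ℕ) : Prop :=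
  (∃ b : Fin f → L, ResLinIndep φ OK OL b) ∧ ∀ b : Fin (f + 1) → L, ¬ ResLinIndep φ OK OL b

end Defectless

/-- `(K, OK)` is a defectless (stable) valued field: for every finite extension `L|K`
(inside a fixed algebraic closure) the fundamental equality
`[L : K] = ∑ᵢ eᵢ fᵢ` holds, the sum running over all extensions of the valuation. -/
def IsDefectless (K : Type*) [Field K] (OK : ValuationSubring K) : Prop :=
  ∀ L : IntermediateField K (AlgebraicClosure K), FiniteDimensional K ↥L →
    ∃ (g : ℕ) (Os : Fin g → ValuationSubring ↥L) (e f : Fin g → ℕ),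
      Function.Injective Os ∧
      (∀ O' : ValuationSubring ↥L, O'.comap (algebraMap K ↥L) = OK ↔ ∃ i, O' = Os i) ∧
      (∀ i, RamIdxEq (algebraMap K ↥L) (Os i) (e i)) ∧
      (∀ i, InertiaDegEq (algebraMap K ↥L) OK (Os i) (f i)) ∧
      Module.finrank K ↥L = ∑ i, e i * f i

/-- The extension `𝓛|𝓚` of subfields of `F` is separable (in the general sense of
MacLane): every finitely generated subextension is separably generated, i.e. admits
a separating transcendence basis. -/
def IsSeparableExt (𝓚 𝓛 : Subfield F) : Prop :=
  ∀ S : Finset F, ↑S ⊆ (𝓛 : Set F) →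
    ∃ (d : ℕ) (u : Fin d → F), (∀ i, u i ∈ 𝓛) ∧ AlgebraicIndependent ↥𝓚 u ∧
      ∀ x ∈ Subfield.closure ((𝓚 : Set F) ∪ ↑S),
        IsSeparable ↥(IntermediateField.adjoin ↥𝓚 (Set.range u)) x

/-- The embedding of a subfield `K`, on which the valuation is trivial, into
the residue field of `O`. -/
noncomputable def resEmb (O : ValuationSubring F) (K : Subfield F) (h : ∀ x ∈ K, x ∈ O) :
    ↥K →+* IsLocalRing.ResidueField ↥O :=
  (IsLocalRing.residue ↥O).comp
    { toFun := fun x => (⟨x.1, h x.1 x.2⟩ : ↥O)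
      map_one' := rfl
      map_mul' := fun _ _ => rfl
      map_zero' := rfl
      map_add' := fun _ _ => rfl }

end LocalUnif

/-! By (U1) the Jacobian matrix is lower triangular, so (U3) says that each diagonal entry
`∂fᵢ/∂Xᵢ (η)` is a unit. A weak uniformization is therefore a tower of elements `ηᵢ`, each of them
a root of a one-variable polynomial over `𝓞_𝓚[t, η₁, …, ηᵢ₋₁]` whose derivative at `ηᵢ` is a unit.
The polynomials of such a tower for `𝓕|𝓛` involve only finitely many constants from `𝓞_𝓛`.
Uniformizing `𝓛|𝓚` with respect to these constants makes them generators of the lower tower, so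
the upper tower can be put on top of it. -/

namespace LocalUnif

open Polynomial (aeval derivative)

section AlgebraicTowers

variable {F : Type*} [Field F]

theorem isAlgebraic_of_forall_mem_isAlgebraic {M N : Subfield F}
    (hN : ∀ x ∈ N, IsAlgebraic M x) {z : F} (hz : IsAlgebraic N z) : IsAlgebraic M z := by
  let toClosure : N →+* algebraicClosure M F :=
    N.subtype.codRestrict (algebraicClosure M F) fun x ↦ mem_algebraicClosure_iff.2 (hN x x.2)
  have hz' : IsAlgebraic (algebraicClosure M F) z :=
    hz.ringHom_of_comp_eq toClosure (RingHom.id F) toClosure.injective rfl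
  exact hz'.restrictScalars M

theorem isAlgebraic_adjoin_of_tower {K L : Subfield F} {T T' U : Set F}
    (hL : ∀ x ∈ L, IsAlgebraic (IntermediateField.adjoin K T) x) (hT : T ⊆ U) (hT' : T' ⊆ U)
    {z : F} (hz : IsAlgebraic (IntermediateField.adjoin L T') z) :
    IsAlgebraic (IntermediateField.adjoin K U) z := by
  let M := (IntermediateField.adjoin K U).toSubfield
  have hMT : (IntermediateField.adjoin K T).toSubfield ≤ M := IntermediateField.adjoin.mono K T U hT
  have hLM : ∀ x ∈ L, IsAlgebraic M x := fun x hx ↦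
    isAlgebraic_of_forall_mem_isAlgebraic (N := (IntermediateField.adjoin K T).toSubfield)
      (fun y hy ↦ isAlgebraic_algebraMap (⟨y, hMT hy⟩ : M)) (hL x hx)
  have hLT' : (IntermediateField.adjoin L T').toSubfield ≤ (algebraicClosure M F).toSubfield := by
    rw [IntermediateField.adjoin_toSubfield, Subfield.closure_le]
    rintro x (⟨l, rfl⟩ | hx)
    · exact mem_algebraicClosure_iff.2 (hLM l l.2)
    · exact mem_algebraicClosure_iff.2
        (isAlgebraic_algebraMap (⟨x, IntermediateField.subset_adjoin K U (hT' hx)⟩ : M))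
  exact isAlgebraic_of_forall_mem_isAlgebraic
    (M := M) (N := (IntermediateField.adjoin L T').toSubfield)
    (fun x hx ↦ mem_algebraicClosure_iff.1 (hLT' hx)) hz

theorem algebraicIndependent_append_of_tower {K L : Subfield F} (hKL : K ≤ L) {s s' : ℕ}
    {t : Fin s → F} {t' : Fin s' → F} (htL : ∀ i, t i ∈ L) (ht : AlgebraicIndependent K t)
    (ht' : AlgebraicIndependent L t') : AlgebraicIndependent K (Fin.append t' t) := by
  let := (Subfield.inclusion hKL).toAlgebra
  have : IsScalarTower K L F := .of_algebraMap_eq fun _ ↦ rfl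
  have hsum : AlgebraicIndependent K (Sum.elim t' t) :=
    ht.sumElim_of_tower (S := L) (Set.range_subset_iff.2 fun i ↦ ⟨⟨t i, htL i⟩, rfl⟩) ht'
  refine (algebraicIndependent_equiv' finSumFinEquiv ?_).1 hsum
  ext (j | j) <;> simp

end AlgebraicTowers

theorem exists_finset_mem_closure_union {R : Type*} [Ring R] {A B : Set R} {x : R}
    (hx : x ∈ Subring.closure (A ∪ B)) :
    ∃ A₀ : Finset R, (A₀ : Set R) ⊆ A ∧ x ∈ Subring.closure (A₀ ∪ B) := by
  classical
  let family (A₀ : {A₀ : Finset R // (A₀ : Set R) ⊆ A}) : Subring R :=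
    Subring.closure (A₀.1 ∪ B)
  have hdir : Directed (· ≤ ·) family := fun A₁ A₂ ↦
    ⟨⟨A₁.1 ∪ A₂.1, by simpa using ⟨A₁.2, A₂.2⟩⟩,
      Subring.closure_mono (Set.union_subset_union_left B (by simp)),
      Subring.closure_mono (Set.union_subset_union_left B (by simp))⟩
  have : Nonempty {A₀ : Finset R // (A₀ : Set R) ⊆ A} := ⟨∅, by simp⟩
  have hle : Subring.closure (A ∪ B) ≤ ⨆ A₀, family A₀ := by
    rw [Subring.closure_le]
    rintro y (hy | hy)
    · exact Subring.mem_iSup_of_directed hdir |>.2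
        ⟨⟨{y}, by simpa using hy⟩, Subring.subset_closure (by simp)⟩
    · exact Subring.mem_iSup_of_directed hdir |>.2
        ⟨⟨∅, by simp⟩, Subring.subset_closure (by simp [hy])⟩
  obtain ⟨A₀, hxA₀⟩ := (Subring.mem_iSup_of_directed hdir).1 (hle hx)
  exact ⟨A₀.1, A₀.2, hxA₀⟩

theorem toSubring_adjoin_closure {A : Type*} [CommRing A] (S T : Set A) :
    (Algebra.adjoin (Subring.closure S) T).toSubring = Subring.closure (S ∪ T) := by
  have hrange : Set.range (algebraMap (Subring.closure S) A) = Subring.closure S :=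
    Subtype.range_coe
  rw [Algebra.adjoin_eq_ring_closure, hrange, Subring.closure_union, Subring.closure_union,
    Subring.closure_eq]

theorem forall_coeff_mem_iff_exists_map_eq {σ A : Type*} [CommRing A] {R : Subring A}
    {f : MvPolynomial σ A} :
    (∀ m, f.coeff m ∈ R) ↔ ∃ p : MvPolynomial σ R, p.map (algebraMap R A) = f := by
  constructor
  · intro hf
    refine MvPolynomial.mem_range_map_iff_coeffs_subset.2 fun c hc ↦ ?_
    obtain ⟨m, -, rfl⟩ := MvPolynomial.mem_coeffs_iff.1 hc
    exact ⟨⟨f.coeff m, hf m⟩, rfl⟩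
  · rintro ⟨p, rfl⟩ m
    rw [MvPolynomial.coeff_map]
    exact (p.coeff m).2

theorem eval_pderiv_mem {σ A : Type*} [CommRing A] {R : Subring A} {f : MvPolynomial σ A}
    (hf : ∀ m, f.coeff m ∈ R) {η : σ → A} (hη : ∀ i, η i ∈ R) (i : σ) :
    MvPolynomial.eval η (MvPolynomial.pderiv i f) ∈ R := by
  refine MvPolynomial.eval_mem (fun m _ ↦ ?_) hη
  rw [MvPolynomial.coeff_pderiv]
  exact mul_mem (hf _) (add_mem (natCast_mem R _) (one_mem R))

theorem det_eval_pderiv_of_mem_supported_Iic {σ A : Type*} [Fintype σ] [LinearOrder σ] [CommRing A]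
    {f : σ → MvPolynomial σ A} (hf : ∀ i, f i ∈ MvPolynomial.supported A (Set.Iic i)) (η : σ → A) :
    (Matrix.of fun i j ↦ MvPolynomial.eval η (MvPolynomial.pderiv j (f i))).det =
      ∏ i, MvPolynomial.eval η (MvPolynomial.pderiv i (f i)) := by
  refine Matrix.det_of_isLowerTriangular _ fun i j hij ↦ ?_
  have hj : j ∉ (f i).vars := fun h ↦ (MvPolynomial.mem_supported.1 (hf i) h).not_gt hij
  simp [MvPolynomial.pderiv_eq_zero_of_notMem_vars hj]

theorem range_append {α : Type*} {m n : ℕ} (x : Fin m → α) (y : Fin n → α) :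
    Set.range (Fin.append x y) = Set.range x ∪ Set.range y := by
  rw [← Set.Sum.elim_range, ← Fin.append_comp_sumElim]
  exact (finSumFinEquiv.surjective.range_comp (Fin.append x y)).symm

section PartialEvaluation

variable {R A σ : Type*} [CommRing R] [CommRing A] [Algebra R A] {η : σ → A} {s : Set σ} {i : σ}

theorem exists_polynomial_of_mem_supported_insert (hi : i ∉ s) {p : MvPolynomial σ R}
    (hp : p ∈ MvPolynomial.supported R (insert i s)) :
    ∃ g : Polynomial (Algebra.adjoin R (η '' s)),
      aeval (η i) g = MvPolynomial.aeval η p ∧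
      aeval (η i) (derivative g) = MvPolynomial.aeval η (MvPolynomial.pderiv i p) := by
  induction hp using Algebra.adjoin_induction with
  | mem _ hX =>
    obtain ⟨j, rfl | hj, rfl⟩ := hX
    · exact ⟨.X, by simp⟩
    · refine ⟨.C ⟨η j, Algebra.subset_adjoin ⟨j, hj, rfl⟩⟩, ?_⟩
      simp [MvPolynomial.pderiv_X_of_ne (ne_of_mem_of_not_mem hj hi),
        Subalgebra.algebraMap_apply]
  | algebraMap r =>
    exact ⟨.C (algebraMap R _ r), by simp [MvPolynomial.algebraMap_eq, Subalgebra.algebraMap_apply]⟩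
  | add p q _ _ hp hq =>
    obtain ⟨g, hg, hg'⟩ := hp
    obtain ⟨h, hh, hh'⟩ := hq
    exact ⟨g + h, by simp [hg, hg', hh, hh']⟩
  | mul p q _ _ hp hq =>
    obtain ⟨g, hg, hg'⟩ := hp
    obtain ⟨h, hh, hh'⟩ := hq
    exact ⟨g * h, by simp [hg, hg', hh, hh', mul_comm, add_comm]⟩

theorem map_aeval_supported (η : σ → A) (s : Set σ) :
    (MvPolynomial.supported R s).map (MvPolynomial.aeval η) = Algebra.adjoin R (η '' s) := by
  simp [MvPolynomial.supported, AlgHom.map_adjoin, Set.image_image]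

theorem exists_mem_supported_insert_of_polynomial (hi : i ∉ s)
    (g : Polynomial (Algebra.adjoin R (η '' s))) :
    ∃ p ∈ MvPolynomial.supported R (insert i s),
      MvPolynomial.aeval η p = aeval (η i) g ∧
      MvPolynomial.aeval η (MvPolynomial.pderiv i p) = aeval (η i) (derivative g) := by
  induction g using Polynomial.induction_on with
  | C a =>
    obtain ⟨p, hp, hpa⟩ := (map_aeval_supported (R := R) η s).ge a.2
    have hip : i ∉ p.vars := fun h ↦ hi (MvPolynomial.mem_supported.1 hp h)
    refine ⟨p, MvPolynomial.supported_mono (Set.subset_insert i s) hp, ?_⟩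
    simpa [MvPolynomial.pderiv_eq_zero_of_notMem_vars hip, Subalgebra.algebraMap_apply] using hpa
  | add g h hg hh =>
    obtain ⟨p, hp, hpg, hpg'⟩ := hg
    obtain ⟨q, hq, hqh, hqh'⟩ := hh
    exact ⟨p + q, add_mem hp hq, by simp [hpg, hpg', hqh, hqh']⟩
  | monomial n a h =>
    obtain ⟨p, hp, hpa, hpa'⟩ := h
    refine ⟨p * .X i, mul_mem hp (Algebra.subset_adjoin ⟨i, .inl rfl, rfl⟩), ?_⟩
    rw [pow_succ, ← mul_assoc, Polynomial.derivative_mul, MvPolynomial.pderiv_mul]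
    simp only [map_add, map_mul, hpa, hpa', MvPolynomial.aeval_X, MvPolynomial.pderiv_X_self,
      Polynomial.aeval_X, Polynomial.derivative_X, map_one, and_self]

end PartialEvaluation

section HenselRoots

variable {F : Type*} [Field F] {O : ValuationSubring F}

theorem isVUnit_iff_valuation_eq_one {x : F} : IsVUnit O x ↔ O.valuation x = 1 := by
  rw [IsVUnit, ← O.valuation_le_one_iff, ← O.valuation_le_one_iff, map_inv₀]
  constructor
  · rintro ⟨hx0, hx, hx'⟩
    exact hx.antisymm ((inv_le_one₀ (zero_lt_iff.2 ((map_ne_zero _).2 hx0))).1 hx')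
  · intro hx
    exact ⟨(map_ne_zero O.valuation).1 (hx ▸ one_ne_zero), by simp [hx], by simp [hx]⟩

theorem isVUnit_prod_iff {ι : Type*} [Fintype ι] {x : ι → F} (hx : ∀ i, x i ∈ O) :
    IsVUnit O (∏ i, x i) ↔ ∀ i, IsVUnit O (x i) := by
  simp_rw [isVUnit_iff_valuation_eq_one, map_prod]
  rw [Finset.prod_eq_one_iff_of_le_one' fun i _ ↦ (O.valuation_le_one_iff _).2 (hx i)]
  simp

/-- `x` is a root of a polynomial over `R` whose derivative at `x` is a unit of `O`, as in the
hypothesis of Hensel's lemma. -/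
def IsHenselRoot (O : ValuationSubring F) (R : Subring F) (x : F) : Prop :=
  ∃ g : Polynomial F, (∀ k, g.coeff k ∈ R) ∧ g.eval x = 0 ∧ IsVUnit O (g.derivative.eval x)

theorem IsHenselRoot.mono {R R' : Subring F} {x : F} (hx : IsHenselRoot O R x) (hR : R ≤ R') :
    IsHenselRoot O R' x := by
  obtain ⟨g, hgR, hg⟩ := hx
  exact ⟨g, fun k ↦ hR (hgR k), hg⟩

theorem isHenselRoot_toSubring_iff {R : Type*} [CommRing R] [Algebra R F] {B : Subalgebra R F}
    {x : F} : IsHenselRoot O B.toSubring x ↔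
      ∃ g : Polynomial B, aeval x g = 0 ∧ IsVUnit O (aeval x (derivative g)) := by
  simp_rw [← Polynomial.eval_map_algebraMap, ← Polynomial.derivative_map]
  constructor
  · rintro ⟨g, hgB, hg⟩
    obtain ⟨h, rfl⟩ : ∃ h : Polynomial B, h.map (algebraMap B F) = g :=
      (Polynomial.mem_lifts g).1 <| (Polynomial.lifts_iff_coeff_lifts g).2 fun k ↦
        ⟨⟨g.coeff k, hgB k⟩, rfl⟩
    exact ⟨h, hg⟩
  · rintro ⟨g, hg⟩
    exact ⟨g.map (algebraMap B F), fun k ↦ by simp [Subalgebra.algebraMap_apply], hg⟩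

theorem IsHenselRoot.exists_finset {A B : Set F} {x : F}
    (hx : IsHenselRoot O (Subring.closure (A ∪ B)) x) :
    ∃ A₀ : Finset F, (A₀ : Set F) ⊆ A ∧ IsHenselRoot O (Subring.closure (A₀ ∪ B)) x := by
  classical
  obtain ⟨g, hgAB, hg⟩ := hx
  choose T hTA hT using fun k ↦ exists_finset_mem_closure_union (hgAB k)
  refine ⟨g.support.biUnion T, by simpa using fun k _ ↦ hTA k, g, fun k ↦ ?_, hg⟩
  by_cases hk : k ∈ g.support
  · exact Subring.closure_mono
      (Set.union_subset_union_left B (Finset.subset_biUnion_of_mem T hk)) (hT k)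
  · exact Polynomial.notMem_support_iff.1 hk ▸ zero_mem _

theorem isHenselRoot_iff_exists_mvPolynomial {σ : Type*} {S : Set F} {η : σ → F} {s : Set σ} {i : σ}
    (hi : i ∉ s) :
    IsHenselRoot O (Subring.closure (S ∪ η '' s)) (η i) ↔
      ∃ f : MvPolynomial σ F, (∀ m, f.coeff m ∈ Subring.closure S) ∧
        f ∈ MvPolynomial.supported F (insert i s) ∧ MvPolynomial.eval η f = 0 ∧
        IsVUnit O (MvPolynomial.eval η (MvPolynomial.pderiv i f)) := by
  rw [← toSubring_adjoin_closure, isHenselRoot_toSubring_iff]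
  have hsupp (p : MvPolynomial σ (Subring.closure S)) :
      p.map (algebraMap (Subring.closure S) F) ∈ MvPolynomial.supported F (insert i s) ↔
        p ∈ MvPolynomial.supported (Subring.closure S) (insert i s) := by
    rw [MvPolynomial.mem_supported, MvPolynomial.mem_supported,
      MvPolynomial.vars_map_of_injective _ Subtype.val_injective]
  have heval (p : MvPolynomial σ (Subring.closure S)) :
      MvPolynomial.eval η (p.map (algebraMap (Subring.closure S) F)) = MvPolynomial.aeval η p :=
    MvPolynomial.eval_map _ _ _
  simp_rw [forall_coeff_mem_iff_exists_map_eq]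
  constructor
  · rintro ⟨g, hroot, hunit⟩
    obtain ⟨p, hp, hpg, hpg'⟩ := exists_mem_supported_insert_of_polynomial hi g
    refine ⟨_, ⟨p, rfl⟩, (hsupp p).2 hp, ?_, ?_⟩
    · rw [heval, hpg, hroot]
    · rwa [MvPolynomial.pderiv_map, heval, hpg']
  · rintro ⟨_, ⟨p, rfl⟩, hp, hroot, hunit⟩
    rw [MvPolynomial.pderiv_map, heval] at hunit
    rw [heval] at hroot
    obtain ⟨g, hg, hg'⟩ := exists_polynomial_of_mem_supported_insert (η := η) hi ((hsupp p).1 hp)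
    exact ⟨g, hg.trans hroot, hg' ▸ hunit⟩

end HenselRoots

section HenselTowers

variable {F : Type*} [Field F] {O : ValuationSubring F} {S : Set F} {n : ℕ} {η : Fin n → F}

/-- `η₁, …, ηₙ` is obtained by successively adjoining Hensel roots to the subring generated by `S`.
This is the one-variable form of conditions (U1)–(U3), with `S = 𝓞_𝓚 ∪ {t₁, …, tₛ}`. -/
def IsHenselTower (O : ValuationSubring F) (S : Set F) (η : Fin n → F) : Prop :=
  ∀ i, IsHenselRoot O (Subring.closure (S ∪ η '' Set.Iio i)) (η i)

theorem isHenselTower_iff_exists_mvPolynomial (hS : S ⊆ O) (hη : ∀ i, η i ∈ O) :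
    IsHenselTower O S η ↔ ∃ f : Fin n → MvPolynomial (Fin n) F,
      (∀ i m, (f i).coeff m ∈ Subring.closure S) ∧
      (∀ i j : Fin n, (i : ℕ) < (j : ℕ) → MvPolynomial.degreeOf j (f i) = 0) ∧
      (∀ i, MvPolynomial.eval η (f i) = 0) ∧
      IsVUnit O (Matrix.of fun i j ↦
        MvPolynomial.eval η (MvPolynomial.pderiv j (f i))).det := by
  have hsupp (i : Fin n) (p : MvPolynomial (Fin n) F) :
      (∀ j : Fin n, (i : ℕ) < (j : ℕ) → p.degreeOf j = 0) ↔
        p ∈ MvPolynomial.supported F (insert i (Set.Iio i)) := by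
    simp_rw [MvPolynomial.mem_supported, Set.subset_def, Set.Iio_insert, Set.mem_Iic,
      Finset.mem_coe, MvPolynomial.mem_vars_iff_degreeOf_ne_zero, Fin.val_fin_lt]
    exact forall_congr' fun j ↦ by rw [← not_lt, ← not_imp_not]
  have hdet (f : Fin n → MvPolynomial (Fin n) F) (hfS : ∀ i m, (f i).coeff m ∈ Subring.closure S)
      (hf : ∀ i, f i ∈ MvPolynomial.supported F (insert i (Set.Iio i))) :
      IsVUnit O (Matrix.of fun i j ↦ MvPolynomial.eval η (MvPolynomial.pderiv j (f i))).det ↔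
        ∀ i, IsVUnit O (MvPolynomial.eval η (MvPolynomial.pderiv i (f i))) := by
    simp only [Set.Iio_insert] at hf
    rw [det_eval_pderiv_of_mem_supported_Iic hf, isVUnit_prod_iff]
    exact fun i ↦ eval_pderiv_mem (R := O.toSubring)
      (fun m ↦ Subring.closure_le.2 hS (hfS i m)) hη i
  simp_rw [IsHenselTower, isHenselRoot_iff_exists_mvPolynomial Set.self_notMem_Iio, hsupp]
  constructor
  · intro h
    choose f hfS hf hroot hunit using h
    exact ⟨f, hfS, hf, hroot, (hdet f hfS hf).2 hunit⟩
  · rintro ⟨f, hfS, hf, hroot, hunit⟩ i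
    exact ⟨f i, hfS i, hf i, hroot i, (hdet f hfS hf).1 hunit i⟩

theorem IsHenselTower.mono {S' : Set F} (hη : IsHenselTower O S η) (hS : S ⊆ S') :
    IsHenselTower O S' η := fun i ↦
  (hη i).mono (Subring.closure_mono (Set.union_subset_union_left _ hS))

theorem IsHenselTower.append {n' : ℕ} {η' : Fin n' → F} (hη : IsHenselTower O S η)
    (hη' : IsHenselTower O (S ∪ Set.range η) η') : IsHenselTower O S (Fin.append η η') := by
  intro k
  induction k using Fin.addCases with
  | left i =>
    rw [Fin.append_left]
    refine (hη i).mono (Subring.closure_mono (Set.union_subset_union_right S ?_))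
    rintro _ ⟨j, hj, rfl⟩
    exact ⟨Fin.castAdd n' j, hj, Fin.append_left η η' j⟩
  | right i =>
    rw [Fin.append_right]
    refine (hη' i).mono (Subring.closure_mono ?_)
    rw [Set.union_assoc]
    refine Set.union_subset_union_right S (Set.union_subset ?_ ?_)
    · rintro _ ⟨j, rfl⟩
      exact ⟨Fin.castAdd n' j, Fin.lt_def.2 (j.isLt.trans_le (Nat.le_add_right n i)),
        Fin.append_left η η' j⟩
    · rintro _ ⟨j, hj, rfl⟩
      exact ⟨Fin.natAdd n j, by simpa using hj, Fin.append_right η η' j⟩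

theorem IsHenselTower.exists_finset {A B : Set F} (hη : IsHenselTower O (A ∪ B) η) :
    ∃ A₀ : Finset F, (A₀ : Set F) ⊆ A ∧ IsHenselTower O (A₀ ∪ B) η := by
  classical
  simp_rw [IsHenselTower, Set.union_assoc] at hη ⊢
  choose T hTA hT using fun i ↦ (hη i).exists_finset
  refine ⟨Finset.univ.biUnion T, by simpa using hTA, fun i ↦ (hT i).mono ?_⟩
  exact Subring.closure_mono (Set.union_subset_union_left _
    (Finset.subset_biUnion_of_mem T (Finset.mem_univ i)))

end HenselTowers

section UniformizationData

variable {F : Type*} [Field F] {O : ValuationSubring F} {K L M : Subfield F} {s s' n n' : ℕ}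
  {t : Fin s → F} {η : Fin n → F} {t' : Fin s' → F} {η' : Fin n' → F}

theorem unifData_iff : UnifData L K O t η ↔
    Set.range t ⊆ O ∧ Set.range η ⊆ O ∧ AlgebraicIndependent K t ∧
      (∀ z ∈ L, IsAlgebraic (IntermediateField.adjoin K (Set.range t)) z) ∧
      Subfield.closure (K ∪ Set.range t ∪ Set.range η) = L ∧
      IsHenselTower O (↑(K.toSubring ⊓ O.toSubring) ∪ Set.range t) η := by
  have hconst (ht : Set.range t ⊆ O) : ↑(K.toSubring ⊓ O.toSubring) ∪ Set.range t ⊆ (O : Set F) :=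
    Set.union_subset (fun _ hx ↦ hx.2) ht
  constructor
  · rintro ⟨ht, hη, hind, halg, hgen, hf⟩
    have htO : Set.range t ⊆ O := Set.range_subset_iff.2 fun i ↦ (ht i).2
    exact ⟨htO, Set.range_subset_iff.2 fun i ↦ (hη i).2, hind, halg, hgen,
      (isHenselTower_iff_exists_mvPolynomial (hconst htO) fun i ↦ (hη i).2).2 hf⟩
  · rintro ⟨ht, hη, hind, halg, hgen, htower⟩
    rw [Set.range_subset_iff] at hη
    have hsub : (K : Set F) ∪ Set.range t ∪ Set.range η ⊆ L := Subfield.closure_le.1 hgen.le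
    exact ⟨fun i ↦ ⟨hsub (.inl (.inr ⟨i, rfl⟩)), ht ⟨i, rfl⟩⟩,
      fun i ↦ ⟨hsub (.inr ⟨i, rfl⟩), hη i⟩, hind, halg, hgen,
      (isHenselTower_iff_exists_mvPolynomial (hconst ht) hη).1 htower⟩

theorem UnifData.append (h' : UnifData M L O t' η') (h : UnifData L K O t η)
    (hη' : IsHenselTower O (Set.range η ∪ Set.range t') η') :
    UnifData M K O (Fin.append t' t) (Fin.append η η') := by
  rw [unifData_iff] at h h' ⊢
  obtain ⟨ht', hη'O, hind', halg', hgen', -⟩ := h'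
  obtain ⟨ht, hηO, hind, halg, hgen, htower⟩ := h
  have hsub : (K : Set F) ∪ Set.range t ∪ Set.range η ⊆ L := Subfield.closure_le.1 hgen.le
  have hKL : K ≤ L := fun x hx ↦ hsub (.inl (.inl hx))
  have htL : ∀ i, t i ∈ L := fun i ↦ hsub (.inl (.inr ⟨i, rfl⟩))
  rw [range_append, range_append]
  refine ⟨Set.union_subset ht' ht, Set.union_subset hηO hη'O,
    algebraicIndependent_append_of_tower hKL htL hind hind', fun z hz ↦ ?_, ?_, ?_⟩
  · exact isAlgebraic_adjoin_of_tower halg Set.subset_union_right Set.subset_union_left (halg' z hz)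
  · rw [← hgen', ← hgen]
    simp only [Subfield.closure_union, Subfield.closure_eq]
    ac_rfl
  · refine .append (htower.mono ?_) (hη'.mono ?_)
    · exact Set.union_subset_union_right _ Set.subset_union_right
    · rw [Set.union_comm _ (Set.range η)]
      exact Set.union_subset_union_right _
        (Set.subset_union_left.trans Set.subset_union_right)

end UniformizationData

end LocalUnif

open LocalUnif in
theorem statement_2_general {F : Type*} [Field F] {O : ValuationSubring F} {K L M : Subfield F}
    {m : ℕ} {ζ : Fin m → F} (h₁ : UnifWrt M L O ζ) (h₂ : UnifIn L K O) : UnifWrt M K O ζ := by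
  obtain ⟨s', n', t', η', h', σ', hσ'⟩ := h₁
  obtain ⟨-, -, -, -, -, htower'⟩ := unifData_iff.1 h'
  obtain ⟨A₀, hA₀, htower⟩ := htower'.exists_finset
  obtain ⟨s, n, t, η, h, σ, hσ⟩ := h₂ _ ((↑) ∘ A₀.equivFin.symm) fun k ↦ hA₀ (Subtype.coe_prop _)
  have hA₀η : (A₀ : Set F) ⊆ Set.range η := fun a ha ↦
    ⟨σ (A₀.equivFin ⟨a, ha⟩), by simp [hσ]⟩
  exact ⟨s' + s, n + n', Fin.append t' t, Fin.append η η',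
    h'.append h (htower.mono (Set.union_subset_union_left _ hA₀η)),
    fun k ↦ Fin.natAdd n (σ' k), fun k ↦ by rw [Fin.append_right, hσ']⟩

open LocalUnif in
/-- Theorem 1.2 of the paper, transitivity of relative
uniformization. For a tower `𝓚 ⊆ 𝓛 ⊆ 𝓕` of fields with `𝓕|𝓛` and `𝓛|𝓚`
finitely generated, equipped with a common valuation: if `(𝓕|𝓛, P)` and
`(𝓛|𝓚, P)` are uniformizable, then so is `(𝓕|𝓚, P)`. -/
theorem statement_2
    (𝓕 : Type*) [Field 𝓕] (O : ValuationSubring 𝓕)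
    (𝓚 𝓛 : Subfield 𝓕) (h𝓚𝓛 : 𝓚 ≤ 𝓛)
    (hfg1 : ∃ S : Finset 𝓕, IntermediateField.adjoin ↥𝓛 (S : Set 𝓕) = ⊤)
    (hfg2 : ∃ S : Finset 𝓕, ↑S ⊆ (𝓛 : Set 𝓕) ∧
      Subfield.closure ((𝓚 : Set 𝓕) ∪ ↑S) = 𝓛)
    (h1 : UnifIn ⊤ 𝓛 O) (h2 : UnifIn 𝓛 𝓚 O) :
    UnifIn ⊤ 𝓚 O :=
  fun m ζ hζ ↦ statement_2_general (h1 m ζ hζ) h2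
end

section
/- Let F|K be an algebraic function field and P a rational Abhyankar place of F|K of rank 1; that is, FP = K, the value group v_PF is archimedean ordered, and trdeg F|K = dim_ℚ(ℚ ⊗_ℤ v_PF). Then (F|K,P) is uniformizable. -/
/-!
A place of rank one is a nonarchimedean norm on `F`, trivial on `K`. Since `P` is rational and
Abhyankar, the value group is free of rank `trdeg F|K`: it has a basis consisting of the values of
a transcendence basis `x` of `F|K`, and distinct Laurent monomials in `x` have distinct norms.

The ring `K[x, x⁻¹]` is dense in `F`. Indeed, let `n` be the degree of the completion of `F` over
that of `K(x)`. Since `FP = K`, the nonzero elements of an `m`-dimensional `K`-subspace of `F` have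
exactly `m` values. A basis of the extension turns the elements of `K[x]` above a given bound into
a space of `n` times the dimension, but its values already occur among those of `K[x]` above a
slightly smaller bound; as their number grows polynomially, `n = 1`.

Moreover, `F|K(x)` is separable: if `b` is a basis of `K` over `K ^ p`, then the elements
`b k * x ^ ρ` with `0 ≤ ρ i < p` are linearly independent over `F ^ p`, because the values of the
`x ^ ρ` are distinct modulo `p` and the residues of the `b k` are independent over `K ^ p`.

Therefore every `ζ` in the valuation ring is approximated by a Laurent polynomial `b` so well that
rescaling its minimal equation at `b` gives `ζ = b + π * u`, where `u` is a simple root modulo the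
maximal ideal of a polynomial `g` over `K[x, x⁻¹]`. By Perron's algorithm `x` can be replaced by
another value basis in which all the Laurent polynomials involved become polynomials. The equations
`g k (u k) = 0` and `ζ k = b k + π k * u k` then form a triangular system whose Jacobian determinant
is a unit.
-/

namespace LocalUnif

/-! ### Value bases and Perron's algorithm -/

section Monomial

variable {F ι : Type*} [Field F] [Fintype ι] {x x' : ι → F}

/-- The Laurent monomial `∏ i, x i ^ e i`. -/
def laurentMonomial (x : ι → F) (e : ι → ℤ) : F := ∏ i, x i ^ e i

@[simp] lemma laurentMonomial_zero (x : ι → F) : laurentMonomial x 0 = 1 := by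
  simp [laurentMonomial]

lemma laurentMonomial_add (hx : ∀ i, x i ≠ 0) (e f : ι → ℤ) :
    laurentMonomial x (e + f) = laurentMonomial x e * laurentMonomial x f := by
  simp only [laurentMonomial, ← Finset.prod_mul_distrib, Pi.add_apply]
  exact Finset.prod_congr rfl fun i _ ↦ zpow_add₀ (hx i) _ _

lemma laurentMonomial_neg (x : ι → F) (e : ι → ℤ) :
    laurentMonomial x (-e) = (laurentMonomial x e)⁻¹ := by
  simp [laurentMonomial]

lemma laurentMonomial_sub (hx : ∀ i, x i ≠ 0) (e f : ι → ℤ) :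
    laurentMonomial x (e - f) = laurentMonomial x e / laurentMonomial x f := by
  rw [sub_eq_add_neg, laurentMonomial_add hx, laurentMonomial_neg, div_eq_mul_inv]

lemma laurentMonomial_zsmul (x : ι → F) (n : ℤ) (e : ι → ℤ) :
    laurentMonomial x (n • e) = laurentMonomial x e ^ n := by
  simp only [laurentMonomial, ← Finset.prod_zpow, Pi.smul_apply, smul_eq_mul]
  exact Finset.prod_congr rfl fun i _ ↦ by rw [mul_comm, zpow_mul]

lemma laurentMonomial_sum {κ : Type*} (hx : ∀ i, x i ≠ 0) (s : Finset κ) (f : κ → ι → ℤ) :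
    laurentMonomial x (∑ k ∈ s, f k) = ∏ k ∈ s, laurentMonomial x (f k) := by
  classical
  induction s using Finset.induction_on with
  | empty => simp
  | insert k s hk ih => rw [Finset.sum_insert hk, Finset.prod_insert hk, laurentMonomial_add hx, ih]

lemma laurentMonomial_single [DecidableEq ι] (x : ι → F) (j : ι) (n : ℤ) :
    laurentMonomial x (Pi.single j n) = x j ^ n := by
  rw [laurentMonomial, Finset.prod_eq_single j (fun b _ hb ↦ by simp [hb]) (by simp),
    Pi.single_eq_same]

lemma laurentMonomial_ne_zero (hx : ∀ i, x i ≠ 0) (e : ι → ℤ) : laurentMonomial x e ≠ 0 :=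
  Finset.prod_ne_zero_iff.mpr fun i _ ↦ zpow_ne_zero _ (hx i)

lemma exists_laurentMonomial_comp (hx : ∀ i, x i ≠ 0)
    (h : ∀ i, ∃ e, x' i = laurentMonomial x e) (f : ι → ℤ) :
    ∃ e, laurentMonomial x' f = laurentMonomial x e := by
  choose g hg using h
  refine ⟨∑ i, f i • g i, ?_⟩
  simp only [laurentMonomial_sum hx, laurentMonomial_zsmul, ← hg]
  rfl

lemma laurentMonomial_mem_closure {e : ι → ℤ} (he : ∀ i, 0 ≤ e i) :
    laurentMonomial x e ∈ Submonoid.closure (Set.range x) := by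
  refine Submonoid.prod_mem _ fun i _ ↦ ?_
  lift e i to ℕ using he i with n
  rw [zpow_natCast]
  exact Submonoid.pow_mem _ (Submonoid.subset_closure (Set.mem_range_self i)) _

lemma exists_laurentMonomial_of_mem_closure (hx : ∀ i, x i ≠ 0) {y : F}
    (hy : y ∈ Submonoid.closure (Set.range x)) : ∃ e, y = laurentMonomial x e := by
  classical
  induction hy using Submonoid.closure_induction with
  | mem _ h =>
    obtain ⟨i, rfl⟩ := h
    exact ⟨Pi.single i 1, by simp [laurentMonomial_single]⟩
  | one => exact ⟨0, by simp⟩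
  | mul _ _ _ _ h₁ h₂ =>
    obtain ⟨⟨e, rfl⟩, ⟨f, rfl⟩⟩ := And.intro h₁ h₂
    exact ⟨e + f, (laurentMonomial_add hx e f).symm⟩

end Monomial

section ValueBasis

variable {F ι : Type*} [NormedField F] [Fintype ι] {x : ι → F}

/-- The values of the `x i` are positive and form a `ℤ`-basis of the value group, which is written
multiplicatively: `‖y‖` plays the role of `exp (-v y)`. -/
structure IsValueBasis (x : ι → F) : Prop where
  ne_zero : ∀ i, x i ≠ 0
  norm_lt_one : ∀ i, ‖x i‖ < 1
  exists_norm_eq : ∀ y : F, y ≠ 0 → ∃ e, ‖y‖ = ‖laurentMonomial x e‖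
  eq_zero_of_norm_eq_one : ∀ e, ‖laurentMonomial x e‖ = 1 → e = 0

lemma norm_laurentMonomial_injective (hx : ∀ i, x i ≠ 0)
    (h : ∀ e, ‖laurentMonomial x e‖ = 1 → e = 0) :
    Function.Injective fun e ↦ ‖laurentMonomial x e‖ := by
  intro e f (hef : ‖laurentMonomial x e‖ = ‖laurentMonomial x f‖)
  have hf : ‖laurentMonomial x f‖ ≠ 0 := norm_ne_zero_iff.mpr (laurentMonomial_ne_zero hx f)
  exact sub_eq_zero.mp <| h _ <| by rw [laurentMonomial_sub hx, norm_div, hef, div_self hf]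

lemma IsValueBasis.norm_injective (hx : IsValueBasis x) :
    Function.Injective fun e ↦ ‖laurentMonomial x e‖ :=
  norm_laurentMonomial_injective hx.ne_zero hx.eq_zero_of_norm_eq_one

lemma IsValueBasis.norm_coord_ne (hx : IsValueBasis x) {i j : ι} (hij : i ≠ j) :
    ‖x i‖ ≠ ‖x j‖ := by
  classical
  intro h
  have := hx.norm_injective (a₁ := Pi.single i 1) (a₂ := Pi.single j 1)
    (by simpa [laurentMonomial_single] using h)
  simpa [hij] using congrFun this i

lemma IsValueBasis.one_lt_norm (hx : IsValueBasis x) {e : ι → ℤ} (he : ∀ i, e i ≤ 0) {j : ι}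
    (hj : e j < 0) : 1 < ‖laurentMonomial x e‖ := by
  have hpos (i) : 0 < ‖x i‖ := norm_pos_iff.mpr (hx.ne_zero i)
  calc (1 : ℝ) = ∏ _i : ι, 1 := by simp
    _ < ∏ i, ‖x i‖ ^ e i := Finset.prod_lt_prod (by simp)
        (fun i _ ↦ one_le_zpow_of_nonpos₀ (hpos i) (hx.norm_lt_one i).le (he i))
        ⟨j, Finset.mem_univ _, one_lt_zpow_of_neg₀ (hpos j) (hx.norm_lt_one j) hj⟩
    _ = ‖laurentMonomial x e‖ := by simp [laurentMonomial, norm_prod]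

end ValueBasis

section Refinement

variable {F ι : Type*} [Field F] [Fintype ι] {x x' x'' : ι → F}

/-- A monomial change of coordinates: the `x' i` are Laurent monomials in `x`, and the `x i` are
monomials with nonnegative exponents in `x'`. -/
structure RefinesTo (x x' : ι → F) : Prop where
  exists_eq : ∀ i, ∃ e, x' i = laurentMonomial x e
  mem_closure : ∀ i, x i ∈ Submonoid.closure (Set.range x')

lemma RefinesTo.refl (x : ι → F) : RefinesTo x x := by
  classical
  exact ⟨fun i ↦ ⟨Pi.single i 1, by simp [laurentMonomial_single]⟩,
    fun i ↦ Submonoid.subset_closure ⟨i, rfl⟩⟩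

lemma RefinesTo.closure_le (h : RefinesTo x x') :
    Submonoid.closure (Set.range x) ≤ Submonoid.closure (Set.range x') :=
  Submonoid.closure_le.mpr (Set.range_subset_iff.mpr h.mem_closure)

lemma RefinesTo.trans (hx : ∀ i, x i ≠ 0) (h : RefinesTo x x') (h' : RefinesTo x' x'') :
    RefinesTo x x'' where
  exists_eq i := by
    obtain ⟨e, he⟩ := h'.exists_eq i
    simpa only [he] using exists_laurentMonomial_comp hx h.exists_eq e
  mem_closure i := h'.closure_le (h.mem_closure i)

end Refinement

section Blowup

variable {F ι : Type*} [Field F] [DecidableEq ι] {x : ι → F} {i j : ι}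

/-- The coordinate change of the `i`-th chart of the blow-up along `x i = x j = 0`. -/
def blowup (x : ι → F) (i j : ι) : ι → F := Function.update x i (x i / x j)

lemma blowup_self (x : ι → F) (i j : ι) : blowup x i j i = x i / x j := by simp [blowup]

lemma blowup_of_ne (x : ι → F) (j : ι) {k : ι} (hk : k ≠ i) : blowup x i j k = x k := by
  simp [blowup, hk]

lemma blowup_ne_zero (hx : ∀ i, x i ≠ 0) (i j k : ι) : blowup x i j k ≠ 0 := by
  by_cases hk : k = i
  · simpa [hk, blowup_self] using ⟨hx i, hx j⟩
  · simpa only [blowup_of_ne x j hk] using hx k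

variable [Fintype ι]

lemma laurentMonomial_blowup (hx : ∀ i, x i ≠ 0) (hij : i ≠ j) (e : ι → ℤ) :
    laurentMonomial (blowup x i j) e = laurentMonomial x (e - Pi.single j (e i)) := by
  have hcoord (k) : blowup x i j k ^ e k = x k ^ e k * if k = i then (x j ^ e i)⁻¹ else 1 := by
    by_cases hk : k = i
    · subst hk; simp [blowup_self, div_eq_mul_inv, mul_zpow]
    · simp [blowup_of_ne, hk]
  rw [laurentMonomial_sub hx, laurentMonomial_single, laurentMonomial,
    Finset.prod_congr rfl fun k _ ↦ hcoord k, Finset.prod_mul_distrib, Finset.prod_ite_eq',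
    if_pos (Finset.mem_univ _), div_eq_mul_inv, laurentMonomial]

lemma laurentMonomial_blowup_update (hx : ∀ i, x i ≠ 0) (hij : i ≠ j) (e : ι → ℤ) :
    laurentMonomial (blowup x i j) (Function.update e j (e j + e i)) = laurentMonomial x e := by
  rw [laurentMonomial_blowup hx hij]
  congr 1
  ext k
  by_cases hk : k = j
  · subst hk; simp [hij]
  · simp [hk]

lemma refinesTo_blowup (hx : ∀ i, x i ≠ 0) (hij : i ≠ j) : RefinesTo x (blowup x i j) where
  exists_eq k := by
    by_cases hk : k = i
    · exact ⟨Pi.single i 1 - Pi.single j 1, by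
        simp [hk, blowup_self, laurentMonomial_sub hx, laurentMonomial_single]⟩
    · exact ⟨Pi.single k 1, by simp [blowup_of_ne, hk, laurentMonomial_single]⟩
  mem_closure k := by
    have hmem (l) : blowup x i j l ∈ Submonoid.closure (Set.range (blowup x i j)) :=
      Submonoid.subset_closure ⟨l, rfl⟩
    by_cases hk : k = i
    · have hprod : x i = blowup x i j i * blowup x i j j := by
        rw [blowup_self, blowup_of_ne x j hij.symm, div_mul_cancel₀ _ (hx j)]
      simpa only [hk, ← hprod] using mul_mem (hmem i) (hmem j)
    · simpa only [blowup_of_ne x j hk] using hmem k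

end Blowup

section Perron

variable {F ι : Type*} [NormedField F] [Fintype ι] {x : ι → F}

lemma IsValueBasis.blowup [DecidableEq ι] {i j : ι} (hx : IsValueBasis x) (hij : i ≠ j)
    (h : ‖x i‖ < ‖x j‖) :
    IsValueBasis (blowup x i j) where
  ne_zero := blowup_ne_zero hx.ne_zero i j
  norm_lt_one k := by
    by_cases hk : k = i
    · rwa [hk, blowup_self, norm_div, div_lt_one (norm_pos_iff.mpr (hx.ne_zero j))]
    · simpa only [blowup_of_ne x j hk] using hx.norm_lt_one k
  exists_norm_eq y hy := by
    obtain ⟨e, he⟩ := hx.exists_norm_eq y hy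
    exact ⟨_, he.trans (by rw [← laurentMonomial_blowup_update hx.ne_zero hij e])⟩
  eq_zero_of_norm_eq_one e he := by
    rw [laurentMonomial_blowup hx.ne_zero hij] at he
    have he' := hx.eq_zero_of_norm_eq_one _ he
    have hi : e i = 0 := by simpa [hij] using congrFun he' i
    simpa [hi] using he'

/-- After some refinement of the value basis `x`, the Laurent monomial with exponents `e` becomes
a monomial with nonnegative exponents. -/
def HasMonomialization (x : ι → F) (e : ι → ℤ) : Prop :=
  ∃ x', IsValueBasis x' ∧ RefinesTo x x' ∧ laurentMonomial x e ∈ Submonoid.closure (Set.range x')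

lemma hasMonomialization_of_nonneg (hx : IsValueBasis x) {e : ι → ℤ} (he : ∀ i, 0 ≤ e i) :
    HasMonomialization x e :=
  ⟨x, hx, .refl x, laurentMonomial_mem_closure he⟩

lemma HasMonomialization.of_blowup [DecidableEq ι] (hx : ∀ i, x i ≠ 0) {i j : ι} (hij : i ≠ j)
    {e : ι → ℤ} (h : HasMonomialization (blowup x i j) (Function.update e j (e j + e i))) :
    HasMonomialization x e := by
  obtain ⟨x', hx', href, hmem⟩ := h
  rw [laurentMonomial_blowup_update hx hij] at hmem
  exact ⟨x', hx', (refinesTo_blowup hx hij).trans hx href, hmem⟩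

lemma card_filter_update_lt {α : Type*} [DecidableEq ι] (p : α → Prop) [DecidablePred p]
    {e : ι → α} {k : ι} {v : α} (hk : p (e k)) (hv : ¬ p v) :
    (Finset.univ.filter fun l ↦ p (Function.update e k v l)).card <
      (Finset.univ.filter fun l ↦ p (e l)).card := by
  refine Finset.card_lt_card <| (Finset.ssubset_iff_of_subset fun l ↦ ?_).mpr
    ⟨k, by simpa using hk, by simpa using hv⟩
  by_cases hl : l = k
  · simp [hl, hv]
  · simp [hl]

lemma abs_add_lt_of_mul_neg {a b : ℤ} (h : a * b < 0) (hab : |a| ≤ |b|) : |a + b| < |b| := by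
  rcases mul_neg_iff.mp h with ⟨h₁, h₂⟩ | ⟨h₁, h₂⟩ <;> grind

lemma add_mul_self_nonneg_of_abs_le {a b : ℤ} (hab : |a| ≤ |b|) : 0 ≤ (a + b) * b := by
  rcases le_total 0 b with hb | hb
  · exact mul_nonneg (by grind) hb
  · exact mul_nonneg_of_nonpos_of_nonpos (by grind) hb

/-- One round of Perron's algorithm. The pivot `e k` is an exponent of maximal absolute value `B`;
let `e j` have the opposite sign. Depending on which of `x j`, `x k` has the larger value, one of
the two blow-ups is admissible: it either shrinks the pivot, or keeps it and makes `e j` vanish or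
agree with it in sign. -/
lemma hasMonomialization_of_pivot {B : ℤ} {c : ℕ}
    (ih : ∀ (x : ι → F) (e : ι → ℤ), IsValueBasis x → ‖laurentMonomial x e‖ ≤ 1 →
      (∀ l, |e l| ≤ B) → (Finset.univ.filter fun l ↦ |e l| = B).card < c → HasMonomialization x e)
    (k : ι) (hx : IsValueBasis x) {e : ι → ℤ} (hnorm : ‖laurentMonomial x e‖ ≤ 1)
    (hB : ∀ l, |e l| ≤ B) (hk : |e k| = B) (hk0 : e k ≠ 0)
    (hc : (Finset.univ.filter fun l ↦ |e l| = B).card ≤ c) : HasMonomialization x e := by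
  classical
  induction ht : (Finset.univ.filter fun l ↦ e l * e k < 0).card using Nat.strong_induction_on
    generalizing x e with | _ t iht
  by_cases hopp : ∃ j, e j * e k < 0
  · obtain ⟨j, hj⟩ := hopp
    have hjk : j ≠ k := by rintro rfl; nlinarith
    have hle : |e j| ≤ |e k| := hk ▸ hB j
    have habs : |e j + e k| < B := hk ▸ abs_add_lt_of_mul_neg hj hle
    have hbound (m) : ∀ l, |Function.update e m (e j + e k) l| ≤ B := fun l ↦ by
      by_cases hl : l = m
      · simpa [hl] using habs.le
      · simpa [hl] using hB l
    rcases (hx.norm_coord_ne hjk).lt_or_gt with hlt | hlt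
    · refine .of_blowup hx.ne_zero hjk (ih _ _ (hx.blowup hjk hlt) ?_ ?_ ?_)
      · rwa [laurentMonomial_blowup_update hx.ne_zero hjk]
      · simpa only [add_comm] using hbound k
      · exact (card_filter_update_lt (|·| = B) hk (by rw [add_comm]; exact habs.ne)).trans_le hc
    · have hpivot : Function.update e j (e j + e k) k = e k := by simp [hjk.symm]
      refine .of_blowup hx.ne_zero hjk.symm
        (iht _ ?_ (hx.blowup hjk.symm hlt) ?_ (hbound j) ?_ ?_ ?_ rfl)
      · rw [← ht, hpivot]
        exact card_filter_update_lt (· * e k < 0) hj (add_mul_self_nonneg_of_abs_le hle).not_gt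
      · rwa [laurentMonomial_blowup_update hx.ne_zero hjk.symm]
      · rwa [hpivot]
      · rwa [hpivot]
      · refine (Finset.card_le_card fun l ↦ ?_).trans hc
        by_cases hl : l = j
        · simp [hl, habs.ne]
        · simp [hl]
  · push Not at hopp
    rcases hk0.lt_or_gt with hneg | hpos
    · have hnonpos (l) : e l ≤ 0 := by nlinarith [hopp l]
      exact absurd hnorm (not_le.mpr (hx.one_lt_norm hnonpos hneg))
    · exact hasMonomialization_of_nonneg hx fun l ↦ by nlinarith [hopp l]

lemma hasMonomialization_of_abs_le (B : ℕ) (hx : IsValueBasis x) {e : ι → ℤ}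
    (hnorm : ‖laurentMonomial x e‖ ≤ 1) (hB : ∀ l, |e l| ≤ B) : HasMonomialization x e := by
  induction B generalizing x e with
  | zero => exact hasMonomialization_of_nonneg hx fun l ↦ (abs_nonpos_iff.mp (hB l)).ge
  | succ B ihB =>
    induction hc : (Finset.univ.filter fun l ↦ |e l| = (B + 1 : ℕ)).card
      using Nat.strong_induction_on generalizing x e with | _ c ihc
    by_cases hmax : ∃ k, |e k| = (B + 1 : ℕ)
    · obtain ⟨k, hk⟩ := hmax
      refine hasMonomialization_of_pivot
        (fun y f hy hf hfB hlt ↦ ihc _ hlt hy hf hfB rfl) k hx hnorm hB hk ?_ hc.le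
      rw [← abs_pos, hk]
      positivity
    · push Not at hmax
      exact ihB hx hnorm fun l ↦ by grind [hB l, hmax l]

lemma exists_refinesTo_laurentMonomial_mem_closure (S : Finset (ι → ℤ)) (hx : IsValueBasis x)
    (hS : ∀ e ∈ S, ‖laurentMonomial x e‖ ≤ 1) :
    ∃ x', IsValueBasis x' ∧ RefinesTo x x' ∧
      ∀ e ∈ S, laurentMonomial x e ∈ Submonoid.closure (Set.range x') := by
  classical
  induction S using Finset.induction_on with
  | empty => exact ⟨x, hx, .refl x, by simp⟩
  | insert e S _ ih =>
    rw [Finset.forall_mem_insert] at hS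
    obtain ⟨x₁, hx₁, href₁, hmem₁⟩ := ih hS.2
    obtain ⟨f, hf⟩ := exists_laurentMonomial_comp hx₁.ne_zero
      (fun i ↦ exists_laurentMonomial_of_mem_closure hx₁.ne_zero (href₁.mem_closure i)) e
    have hbound (l) : |f l| ≤ (∑ k, (f k).natAbs : ℕ) := by
      rw [Int.abs_eq_natAbs]
      exact_mod_cast Finset.single_le_sum (fun k _ ↦ Nat.zero_le (f k).natAbs) (Finset.mem_univ l)
    obtain ⟨x₂, hx₂, href₂, hmem₂⟩ := hasMonomialization_of_abs_le _ hx₁ (hf ▸ hS.1) hbound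
    refine ⟨x₂, hx₂, href₁.trans hx.ne_zero href₂, Finset.forall_mem_insert _ _ _ |>.mpr ⟨?_, ?_⟩⟩
    · rwa [hf]
    · exact fun e' he' ↦ href₂.closure_le (hmem₁ e' he')

end Perron

section TriviallyNormed

variable {F : Type*} [NormedField F] {K : Subfield F}

/-- The valuation of `F` is trivial on the subfield `K`. -/
def IsTriviallyNormed (K : Subfield F) : Prop := ∀ c ∈ K, c ≠ 0 → ‖c‖ = 1

lemma IsTriviallyNormed.norm_le_one (hK : IsTriviallyNormed K) (c : K) : ‖(c : F)‖ ≤ 1 := by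
  rcases eq_or_ne (c : F) 0 with h | h
  · simp [h]
  · exact (hK c c.2 h).le

variable [IsUltrametricDist F]

lemma exists_norm_sum_eq {κ : Type*} {s : Finset κ} (hs : s.Nonempty) {f : κ → F}
    (hf : Set.InjOn (fun k ↦ ‖f k‖) s) :
    ∃ i ∈ s, ‖∑ j ∈ s, f j‖ = ‖f i‖ ∧ ∀ j ∈ s, ‖f j‖ ≤ ‖f i‖ := by
  classical
  obtain ⟨i, hi, hmax⟩ := s.exists_max_image (fun j ↦ ‖f j‖) hs
  refine ⟨i, hi, ?_, hmax⟩
  rw [← Finset.add_sum_erase s f hi]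
  rcases (s.erase i).eq_empty_or_nonempty with h0 | h0
  · simp [h0]
  obtain ⟨k, hk, hk_le⟩ := IsUltrametricDist.exists_norm_finsetSum_le_of_nonempty h0 f
  have hk_mem := Finset.mem_of_mem_erase hk
  have hlt : ‖∑ j ∈ s.erase i, f j‖ < ‖f i‖ := hk_le.trans_lt <|
    (hmax k hk_mem).lt_of_ne fun h ↦ Finset.ne_of_mem_erase hk (hf hk_mem hi h)
  rw [IsUltrametricDist.norm_add_eq_max_of_norm_ne_norm hlt.ne', max_eq_left hlt.le]

variable {κ : Type*} {v : κ → F}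

lemma exists_norm_linearCombination_eq (hK : IsTriviallyNormed K)
    (hv : Function.Injective fun k ↦ ‖v k‖) {s : κ →₀ K} (hs : s ≠ 0) :
    ∃ k ∈ s.support, ‖Finsupp.linearCombination K v s‖ = ‖v k‖ ∧
      ∀ k' ∈ s.support, ‖v k'‖ ≤ ‖v k‖ := by
  have norm_smul_eq : ∀ k ∈ s.support, ‖s k • v k‖ = ‖v k‖ := fun k hk ↦ by
    rw [Algebra.smul_def, norm_mul]
    exact (congrArg (· * ‖v k‖) (hK _ (s k).2 (by simpa using hk))).trans (one_mul _)
  obtain ⟨k, hk, hsum, hmax⟩ := exists_norm_sum_eq (Finsupp.support_nonempty_iff.mpr hs)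
    (f := fun k ↦ s k • v k) fun i hi j hj hij ↦ hv <| by
      simpa only [norm_smul_eq i hi, norm_smul_eq j hj] using hij
  refine ⟨k, hk, ?_, fun k' hk' ↦ ?_⟩
  · rw [Finsupp.linearCombination_apply, Finsupp.sum, hsum, norm_smul_eq k hk]
  · simpa only [norm_smul_eq k hk, norm_smul_eq k' hk'] using hmax k' hk'

lemma linearIndependent_of_norm_injective (hK : IsTriviallyNormed K)
    (hv : Function.Injective fun k ↦ ‖v k‖) (hv0 : ∀ k, v k ≠ 0) : LinearIndependent K v := by
  rw [linearIndependent_iff]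
  intro s hs
  by_contra h
  obtain ⟨k, -, hk, -⟩ := exists_norm_linearCombination_eq hK hv h
  exact hv0 k (norm_eq_zero.mp (by rw [← hk, hs, norm_zero]))

lemma exists_norm_eq_of_mem_span (hK : IsTriviallyNormed K)
    (hv : Function.Injective fun k ↦ ‖v k‖) {y : F}
    (hy : y ∈ Submodule.span K (Set.range v)) (hy0 : y ≠ 0) : ∃ k, ‖y‖ = ‖v k‖ := by
  obtain ⟨s, rfl⟩ := Finsupp.mem_span_range_iff_exists_finsupp.mp hy
  obtain ⟨k, -, hk, -⟩ := exists_norm_linearCombination_eq hK hv (s := s)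
    (by rintro rfl; simp at hy0)
  exact ⟨k, hk⟩

end TriviallyNormed

section LaurentSubalgebra

lemma closure_le_adjoin (R : Type*) {A : Type*} [CommSemiring R] [Semiring A] [Algebra R A]
    (S : Set A) : Submonoid.closure S ≤ (Algebra.adjoin R S).toSubmonoid :=
  Submonoid.closure_le.mpr Algebra.subset_adjoin

variable {F ι : Type*} [Field F] [Fintype ι] {K : Subfield F} {x x' : ι → F}

/-- The ring `K[x₁, x₁⁻¹, …, x_d, x_d⁻¹]` of Laurent polynomials in `x`. -/
def laurentSubalgebra (K : Subfield F) (x : ι → F) : Subalgebra K F :=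
  Algebra.adjoin K (Set.range (laurentMonomial x))

lemma laurentMonomial_mem_laurentSubalgebra (x : ι → F) (e : ι → ℤ) :
    laurentMonomial x e ∈ laurentSubalgebra K x :=
  Algebra.subset_adjoin ⟨e, rfl⟩

lemma mem_laurentSubalgebra_iff (hx : ∀ i, x i ≠ 0) {y : F} :
    y ∈ laurentSubalgebra K x ↔ ∃ s, Finsupp.linearCombination K (laurentMonomial x) s = y := by
  have hspan : Subalgebra.toSubmodule (laurentSubalgebra K x) =
      Submodule.span K (Set.range (laurentMonomial x)) := by
    refine Algebra.adjoin_eq_span_of_subset K ?_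
    let M : Submonoid F :=
      { carrier := Set.range (laurentMonomial x)
        one_mem' := ⟨0, laurentMonomial_zero x⟩
        mul_mem' := by
          rintro _ _ ⟨e, rfl⟩ ⟨f, rfl⟩
          exact ⟨e + f, laurentMonomial_add hx e f⟩ }
    exact fun z hz ↦ Submodule.subset_span ((Submonoid.closure_le (S := M)).mpr le_rfl hz)
  rw [← Subalgebra.mem_toSubmodule, hspan, Finsupp.mem_span_range_iff_exists_finsupp]
  rfl

lemma RefinesTo.adjoin_range_le_laurentSubalgebra (h : RefinesTo x x') :
    Algebra.adjoin K (Set.range x') ≤ laurentSubalgebra K x := by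
  refine Algebra.adjoin_le ?_
  rintro _ ⟨i, rfl⟩
  obtain ⟨e, he⟩ := h.exists_eq i
  exact he ▸ laurentMonomial_mem_laurentSubalgebra x e

lemma laurentSubalgebra_le_adjoin (x : ι → F) :
    laurentSubalgebra K x ≤ (IntermediateField.adjoin K (Set.range x)).toSubalgebra := by
  refine Algebra.adjoin_le ?_
  rintro _ ⟨e, rfl⟩
  exact (IntermediateField.adjoin K (Set.range x)).prod_mem fun i _ ↦
    zpow_mem (IntermediateField.subset_adjoin K _ (Set.mem_range_self i)) (e i)

end LaurentSubalgebra

section NormedMonomials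

variable {F ι : Type*} [NormedField F] [Fintype ι] {K : Subfield F} {x : ι → F}

lemma norm_prod_pow_injective (hinj : Function.Injective fun e ↦ ‖laurentMonomial x e‖) :
    Function.Injective fun ν : ι → ℕ ↦ ‖∏ i, x i ^ ν i‖ := by
  intro μ ν h
  have := hinj (a₁ := fun i ↦ (μ i : ℤ)) (a₂ := fun i ↦ (ν i : ℤ))
    (by simpa [laurentMonomial] using h)
  exact funext fun i ↦ Nat.cast_injective (congrFun this i)

variable [IsUltrametricDist F]

lemma exists_norm_eq_of_mem_adjoin (hK : IsTriviallyNormed K)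
    (hinj : Function.Injective fun e ↦ ‖laurentMonomial x e‖) {y : F}
    (hy : y ∈ Algebra.adjoin K (Set.range x)) (hy0 : y ≠ 0) :
    ∃ ν : ι → ℕ, ‖y‖ = ‖∏ i, x i ^ ν i‖ := by
  refine exists_norm_eq_of_mem_span hK (norm_prod_pow_injective hinj) ?_ hy0
  rw [← Subalgebra.mem_toSubmodule, Algebra.adjoin_eq_span] at hy
  refine Submodule.span_mono (fun z hz ↦ ?_) hy
  obtain ⟨ν, rfl⟩ := Submonoid.exists_of_mem_closure_range x z hz
  exact ⟨ν, rfl⟩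

lemma algebraicIndependent_of_norm_injective (hK : IsTriviallyNormed K) (hx : ∀ i, x i ≠ 0)
    (hinj : Function.Injective fun e ↦ ‖laurentMonomial x e‖) : AlgebraicIndependent K x := by
  have hli : LinearIndependent K fun ν : ι →₀ ℕ ↦ ∏ i, x i ^ ν i :=
    linearIndependent_of_norm_injective hK
      ((norm_prod_pow_injective hinj).comp DFunLike.coe_injective)
      fun ν ↦ Finset.prod_ne_zero_iff.mpr fun i _ ↦ pow_ne_zero _ (hx i)
  rw [algebraicIndependent_iff]
  intro p hp
  rw [MvPolynomial.aeval_def, MvPolynomial.eval₂_eq'] at hp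
  ext ν
  by_cases hν : ν ∈ p.support
  · simpa using linearIndependent_iff'.mp hli p.support p.coeff hp ν hν
  · simpa using hν

/-- Perron's algorithm for Laurent polynomials: by `exists_norm_linearCombination_eq`, all the
monomials of a Laurent polynomial in the valuation ring lie in the valuation ring. -/
lemma exists_refinesTo_mem_adjoin (hK : IsTriviallyNormed K) (hx : IsValueBasis x) (S : Finset F)
    (hS : ∀ y ∈ S, y ∈ laurentSubalgebra K x ∧ ‖y‖ ≤ 1) :
    ∃ x', IsValueBasis x' ∧ RefinesTo x x' ∧ ∀ y ∈ S, y ∈ Algebra.adjoin K (Set.range x') := by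
  classical
  have hS_eq (y : S) := (mem_laurentSubalgebra_iff hx.ne_zero).mp (hS y y.2).1
  choose s hs using hS_eq
  have norm_le_one : ∀ e ∈ Finset.univ.biUnion fun y ↦ (s y).support,
      ‖laurentMonomial x e‖ ≤ 1 := fun e he ↦ by
    obtain ⟨y, -, hy⟩ := Finset.mem_biUnion.mp he
    have hs0 : s y ≠ 0 := fun h ↦ by simp [h] at hy
    obtain ⟨e', -, hnorm, hmax⟩ := exists_norm_linearCombination_eq hK hx.norm_injective hs0
    exact (hmax e hy).trans (by rw [← hnorm, hs]; exact (hS y y.2).2)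
  obtain ⟨x', hx', href, hmem⟩ :=
    exists_refinesTo_laurentMonomial_mem_closure _ hx norm_le_one
  refine ⟨x', hx', href, fun y hy ↦ ?_⟩
  have hy_eq : Finsupp.linearCombination K (laurentMonomial x) (s ⟨y, hy⟩) = y := hs ⟨y, hy⟩
  rw [← hy_eq]
  exact sum_mem fun e he ↦ Subalgebra.smul_mem _ (closure_le_adjoin K _ <|
    hmem e <| Finset.mem_biUnion.mpr ⟨⟨y, hy⟩, Finset.mem_univ _, he⟩) _

end NormedMonomials

/-! ### Counting values -/

section LatticePoints

variable {ι : Type*} [Fintype ι] {r : ι → ℝ} {ρ : ℝ}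

/-- The exponents `ν` with `ρ < ∏ i, r i ^ ν i`: for `0 < r i < 1` these are the lattice points of
the simplex `∑ i, ν i * log (r i) > log ρ` of the nonnegative orthant. -/
def latticePoints (r : ι → ℝ) (ρ : ℝ) : Set (ι → ℕ) := {ν | ρ < ∏ i, r i ^ ν i}

lemma finite_latticePoints (hr0 : ∀ i, 0 ≤ r i) (hr1 : ∀ i, r i < 1) (hρ : 0 < ρ) :
    (latticePoints r ρ).Finite := by
  choose N hN using fun i ↦ exists_pow_lt_of_lt_one hρ (hr1 i)
  refine (Set.Finite.pi' (t := fun i ↦ Set.Iio (N i)) fun i ↦ Set.finite_Iio _).subset ?_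
  refine fun ν (hν : ρ < _) i ↦ not_le.mp fun (hi : N i ≤ ν i) ↦ ?_
  have prod_le : ∏ j, r j ^ ν j ≤ r i ^ ν i := by
    classical
    rw [← Finset.mul_prod_erase _ _ (Finset.mem_univ i)]
    exact mul_le_of_le_one_right (pow_nonneg (hr0 i) _) <| Finset.prod_le_one
      (fun j _ ↦ pow_nonneg (hr0 j) _) fun j _ ↦ pow_le_one₀ (hr0 j) (hr1 j).le
  have pow_le : r i ^ ν i ≤ r i ^ N i := pow_le_pow_of_le_one (hr0 i) (hr1 i).le hi
  linarith [hN i]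

lemma ncard_latticePoints_pos (hr0 : ∀ i, 0 ≤ r i) (hr1 : ∀ i, r i < 1) (hρ : 0 < ρ)
    (hρ1 : ρ < 1) : 0 < (latticePoints r ρ).ncard :=
  (Set.ncard_pos (finite_latticePoints hr0 hr1 hρ)).mpr ⟨0, by simpa [latticePoints] using hρ1⟩

lemma div_mem_latticePoints (hr0 : ∀ i, 0 ≤ r i) (hr1 : ∀ i, r i < 1) (k : ℕ) {ν : ι → ℕ}
    (hν : ν ∈ latticePoints r (ρ ^ k)) : (fun i ↦ ν i / k) ∈ latticePoints r ρ := by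
  change ρ ^ k < _ at hν
  refine not_le.mp fun (h : _ ≤ ρ) ↦ hν.not_ge ?_
  calc ∏ i, r i ^ ν i ≤ ∏ i, (r i ^ (ν i / k)) ^ k :=
        Finset.prod_le_prod (fun i _ ↦ pow_nonneg (hr0 i) _) fun i _ ↦ by
          rw [← pow_mul]
          exact pow_le_pow_of_le_one (hr0 i) (hr1 i).le (Nat.div_mul_le_self _ _)
    _ = (∏ i, r i ^ (ν i / k)) ^ k := Finset.prod_pow _ _ _
    _ ≤ ρ ^ k := pow_le_pow_left₀ (Finset.prod_nonneg fun i _ ↦ pow_nonneg (hr0 i) _) h k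

lemma ncard_latticePoints_pow_le (hr0 : ∀ i, 0 ≤ r i) (hr1 : ∀ i, r i < 1) (hρ : 0 < ρ) {k : ℕ}
    (hk : 0 < k) :
    (latticePoints r (ρ ^ k)).ncard ≤ k ^ Fintype.card ι * (latticePoints r ρ).ncard := by
  have := (finite_latticePoints hr0 hr1 hρ).to_subtype
  have := (finite_latticePoints hr0 hr1 (pow_pos hρ k)).to_subtype
  let divMod (ν : latticePoints r (ρ ^ k)) : (ι → Fin k) × latticePoints r ρ :=
    (fun i ↦ ⟨ν.1 i % k, Nat.mod_lt _ hk⟩, ⟨_, div_mem_latticePoints hr0 hr1 k ν.2⟩)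
  have divMod_injective : Function.Injective divMod := fun μ ν h ↦ by
    ext i
    have hmod := Fin.ext_iff.mp (congrFun (congrArg Prod.fst h) i)
    have hdiv := congrFun (Subtype.ext_iff.mp (congrArg Prod.snd h)) i
    rw [← Nat.div_add_mod (μ.1 i) k, ← Nat.div_add_mod (ν.1 i) k]
    exact congrArg₂ _ (congrArg _ hdiv) hmod
  calc (latticePoints r (ρ ^ k)).ncard
      ≤ Nat.card ((ι → Fin k) × latticePoints r ρ) :=
        Nat.card_le_card_of_injective divMod divMod_injective
    _ = k ^ Fintype.card ι * (latticePoints r ρ).ncard := by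
        rw [Nat.card_prod, Nat.card_fun, Nat.card_coe_set_eq, Nat.card_fin,
          Nat.card_eq_fintype_card]

lemma exists_pow_lt_two_pow (d : ℕ) : ∃ k : ℕ, 0 < k ∧ k ^ d < 2 ^ (k - 1) := by
  have hlim := tendsto_pow_const_div_const_pow_of_one_lt d (one_lt_two (α := ℝ))
  obtain ⟨k, hlt, hk⟩ := ((hlim.eventually_lt_const one_half_pos).and
    (Filter.eventually_gt_atTop 0)).exists
  refine ⟨k, hk, ?_⟩
  obtain ⟨m, rfl⟩ := Nat.exists_eq_add_one_of_ne_zero hk.ne'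
  rw [div_lt_iff₀ (by positivity), pow_succ 2] at hlt
  exact_mod_cast (show ((m + 1 : ℕ) : ℝ) ^ d < 2 ^ m by linarith)

/-- The number of lattice points grows polynomially in `log ρ`, so it cannot be multiplied by
`n ≥ 2` at each of the first `k` steps of length `log c` when `k` is large. -/
lemma lt_two_of_mul_ncard_latticePoints_le (hr0 : ∀ i, 0 ≤ r i) (hr1 : ∀ i, r i < 1) {c : ℝ}
    (hc : 0 < c) (hc1 : c < 1) {k n : ℕ} (hk0 : 0 < k)
    (hk : k ^ Fintype.card ι < 2 ^ (k - 1)) (h : ∀ ρ, 0 < ρ → c ^ k ≤ c * ρ →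
      n * (latticePoints r ρ).ncard ≤ (latticePoints r (c * ρ)).ncard) :
    n < 2 := by
  by_contra! hn
  have growth (j : ℕ) (hj : j + 1 ≤ k) :
      n ^ j * (latticePoints r c).ncard ≤ (latticePoints r (c ^ (j + 1))).ncard := by
    induction j with
    | zero => simp
    | succ j ih =>
      have hstep := h (c ^ (j + 1)) (by positivity) <| by
        rw [← pow_succ']; exact pow_le_pow_of_le_one hc.le hc1.le hj
      rw [← pow_succ'] at hstep
      calc n ^ (j + 1) * (latticePoints r c).ncard
          = n * (n ^ j * (latticePoints r c).ncard) := by ring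
        _ ≤ n * (latticePoints r (c ^ (j + 1))).ncard := by gcongr; exact ih (by omega)
        _ ≤ _ := hstep
  have hle := growth (k - 1) (by omega)
  rw [Nat.sub_add_cancel hk0] at hle
  have hpow : n ^ (k - 1) ≤ k ^ Fintype.card ι := Nat.le_of_mul_le_mul_right
    (hle.trans (ncard_latticePoints_pow_le hr0 hr1 hc hk0)) (ncard_latticePoints_pos hr0 hr1 hc hc1)
  exact absurd (hk.trans_le (Nat.pow_le_pow_left hn (k - 1))) (not_lt.mpr hpow)

end LatticePoints

section ResidueField

variable {F : Type*} [NormedField F] {K : Subfield F}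

/-- The valuation is trivial on `K`, and `K` maps onto the residue field of `F`. -/
structure IsCoefficientField (K : Subfield F) : Prop where
  isTriviallyNormed : IsTriviallyNormed K
  exists_norm_sub_lt_one : ∀ y : F, ‖y‖ ≤ 1 → ∃ c ∈ K, ‖y - c‖ < 1

variable [IsUltrametricDist F]

/-- The elements of norm less than `t` of a subspace over a trivially normed field. -/
def submoduleLt (hK : IsTriviallyNormed K) {t : ℝ} (ht : 0 < t) (V : Submodule K F) :
    Submodule K F where
  carrier := {y | y ∈ V ∧ ‖y‖ < t}
  zero_mem' := ⟨zero_mem _, by simpa using ht⟩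
  add_mem' ha hb := ⟨add_mem ha.1 hb.1,
    (IsUltrametricDist.norm_add_le_max _ _).trans_lt (max_lt ha.2 hb.2)⟩
  smul_mem' c y hy := ⟨V.smul_mem c hy.1, by
    rw [Algebra.smul_def, norm_mul]
    exact (mul_le_of_le_one_left (norm_nonneg _) (hK.norm_le_one c)).trans_lt hy.2⟩

/-- Dividing by `v` and taking the residue shows that `V` is spanned by `v` modulo smaller norms. -/
lemma le_submoduleLt_sup_span (hK : IsCoefficientField K) {V : Submodule K F} {v : F}
    (hv : v ∈ V) (hv0 : v ≠ 0) (hmax : ∀ y ∈ V, ‖y‖ ≤ ‖v‖) :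
    V ≤ submoduleLt hK.isTriviallyNormed (norm_pos_iff.mpr hv0) V ⊔ Submodule.span K {v} := by
  intro y hy
  obtain ⟨c, hc, hlt⟩ := hK.exists_norm_sub_lt_one (y / v) <| by
    rw [norm_div]; exact div_le_one_of_le₀ (hmax y hy) (norm_nonneg v)
  have hcv : (⟨c, hc⟩ : K) • v ∈ Submodule.span K {v} :=
    Submodule.smul_mem _ _ (Submodule.mem_span_singleton_self v)
  rw [← sub_add_cancel y ((⟨c, hc⟩ : K) • v)]
  refine Submodule.add_mem_sup ⟨sub_mem hy (V.smul_mem _ hv), ?_⟩ hcv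
  have hsub : y - (⟨c, hc⟩ : K) • v = (y / v - c) * v := by
    rw [sub_mul, div_mul_cancel₀ _ hv0]; rfl
  rw [hsub, norm_mul]
  exact mul_lt_of_lt_one_left (norm_pos_iff.mpr hv0) hlt

lemma finrank_le_card_norms (hK : IsCoefficientField K) (T : Finset ℝ) (V : Submodule K F)
    (hV : ∀ y ∈ V, y ≠ 0 → ‖y‖ ∈ T) : FiniteDimensional K V ∧ Module.finrank K V ≤ T.card := by
  induction T using Finset.induction_on_max generalizing V with
  | empty =>
    obtain rfl : V = ⊥ := (Submodule.eq_bot_iff V).mpr fun y hy ↦ by_contra fun h ↦ by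
      simpa using hV y hy h
    exact ⟨inferInstance, by simp⟩
  | insert t T ht ih =>
    have htT : t ∉ T := fun h ↦ lt_irrefl _ (ht t h)
    by_cases hv : ∃ v ∈ V, v ≠ 0 ∧ ‖v‖ = t
    · obtain ⟨v, hv, hv0, rfl⟩ := hv
      have hmax : ∀ y ∈ V, ‖y‖ ≤ ‖v‖ := fun y hy ↦ by
        rcases eq_or_ne y 0 with rfl | hy0
        · simp
        · exact (Finset.mem_insert.mp (hV y hy hy0)).elim Eq.le fun h ↦ (ht _ h).le
      let V' := submoduleLt hK.isTriviallyNormed (norm_pos_iff.mpr hv0) V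
      obtain ⟨hfin, hrank⟩ := ih V' fun y hy hy0 ↦
        (Finset.mem_insert.mp (hV y hy.1 hy0)).resolve_left hy.2.ne
      have hle : V ≤ V' ⊔ Submodule.span K {v} := le_submoduleLt_sup_span hK hv hv0 hmax
      refine ⟨Submodule.finiteDimensional_of_le hle, (Submodule.finrank_mono hle).trans ?_⟩
      calc Module.finrank K (V' ⊔ Submodule.span K {v} : Submodule K F)
          ≤ Module.finrank K V' + Module.finrank K (Submodule.span K {v}) :=
            Submodule.finrank_add_le_finrank_add_finrank _ _
        _ ≤ (insert ‖v‖ T).card := by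
            rw [Finset.card_insert_of_notMem htT, finrank_span_singleton hv0]; omega
    · obtain ⟨hfin, hrank⟩ := ih V fun y hy hy0 ↦
        (Finset.mem_insert.mp (hV y hy hy0)).resolve_left fun h ↦ hv ⟨y, hy, hy0, h⟩
      exact ⟨hfin, hrank.trans (Finset.card_le_card (Finset.subset_insert _ _))⟩

end ResidueField

section MonomialSpan

variable {F ι : Type*} [NormedField F] [Fintype ι] {K : Subfield F} {x : ι → F} {ρ : ℝ}

/-- The polynomials in `x` all of whose monomials have norm greater than `ρ`. -/
def monomialSpan (K : Subfield F) (x : ι → F) (ρ : ℝ) : Submodule K F :=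
  Submodule.span K (Set.range fun ν : latticePoints (‖x ·‖) ρ ↦ ∏ i, x i ^ ν.1 i)

lemma monomialSpan_le_adjoin (K : Subfield F) (x : ι → F) (ρ : ℝ) :
    monomialSpan K x ρ ≤ Subalgebra.toSubmodule (Algebra.adjoin K (Set.range x)) := by
  refine Submodule.span_le.mpr ?_
  rintro _ ⟨ν, rfl⟩
  exact Subalgebra.prod_mem _ fun i _ ↦
    Subalgebra.pow_mem _ (Algebra.subset_adjoin (Set.mem_range_self i)) _

variable [IsUltrametricDist F]

lemma norm_le_one_of_mem_adjoin (hK : IsTriviallyNormed K) (hx : IsValueBasis x) {y : F}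
    (hy : y ∈ Algebra.adjoin K (Set.range x)) : ‖y‖ ≤ 1 := by
  rcases eq_or_ne y 0 with rfl | hy0
  · simp
  obtain ⟨ν, hν⟩ := exists_norm_eq_of_mem_adjoin hK hx.norm_injective hy hy0
  rw [hν, norm_prod]
  exact Finset.prod_le_one (fun _ _ ↦ norm_nonneg _) fun i _ ↦ by
    rw [norm_pow]; exact pow_le_one₀ (norm_nonneg _) (hx.norm_lt_one i).le

lemma lt_norm_of_mem_monomialSpan (hK : IsTriviallyNormed K) (hx : IsValueBasis x) {y : F}
    (hy : y ∈ monomialSpan K x ρ) (hy0 : y ≠ 0) : ρ < ‖y‖ := by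
  obtain ⟨ν, hν⟩ := exists_norm_eq_of_mem_span hK
    ((norm_prod_pow_injective hx.norm_injective).comp Subtype.val_injective) hy hy0
  simpa only [hν, Function.comp_apply, norm_prod, norm_pow] using ν.2.out

lemma finrank_monomialSpan (hK : IsTriviallyNormed K) (hx : IsValueBasis x) (hρ : 0 < ρ) :
    FiniteDimensional K (monomialSpan K x ρ) ∧
      Module.finrank K (monomialSpan K x ρ) = (latticePoints (‖x ·‖) ρ).ncard := by
  have hfin := finite_latticePoints (fun i ↦ norm_nonneg (x i)) hx.norm_lt_one hρ
  have := hfin.fintype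
  have hli : LinearIndependent K fun ν : latticePoints (‖x ·‖) ρ ↦ ∏ i, x i ^ ν.1 i :=
    linearIndependent_of_norm_injective hK
      ((norm_prod_pow_injective hx.norm_injective).comp Subtype.val_injective)
      fun ν ↦ Finset.prod_ne_zero_iff.mpr fun i _ ↦ pow_ne_zero _ (hx.ne_zero i)
  refine ⟨FiniteDimensional.span_of_finite K (Set.finite_range _), ?_⟩
  rw [monomialSpan, finrank_span_eq_card hli, ← Nat.card_eq_fintype_card, Nat.card_coe_set_eq]

lemma exists_norm_eq_of_norm_pow_eq (hK : IsTriviallyNormed K) (hx : IsValueBasis x) {y D : F}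
    (hy0 : y ≠ 0) {n : ℕ} (hn : n ≠ 0) (hD : D ∈ Algebra.adjoin K (Set.range x))
    (h : ‖y‖ ^ n = ‖D‖) : ∃ ν : ι → ℕ, ‖y‖ = ‖∏ i, x i ^ ν i‖ := by
  have hD0 : D ≠ 0 := norm_ne_zero_iff.mp (h ▸ pow_ne_zero n (norm_ne_zero_iff.mpr hy0))
  obtain ⟨μ, hμ⟩ := exists_norm_eq_of_mem_adjoin hK hx.norm_injective hD hD0
  obtain ⟨e, he⟩ := hx.exists_norm_eq y hy0
  have hne : (n : ℤ) • e = fun i ↦ (μ i : ℤ) := hx.norm_injective <| by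
    simp only [laurentMonomial_zsmul, zpow_natCast, norm_pow, ← he, h, hμ]
    simp [laurentMonomial]
  have he0 (i) : 0 ≤ e i := by
    have hi : (n : ℤ) * e i = μ i := congrFun hne i
    exact nonneg_of_mul_nonneg_right (hi ▸ Int.natCast_nonneg _)
      (Int.natCast_pos.mpr (Nat.pos_of_ne_zero hn))
  lift e to ι → ℕ using he0
  exact ⟨e, by simpa [laurentMonomial] using he⟩

end MonomialSpan

section Counting

lemma matrix_det_mem {R S κ : Type*} [CommRing R] [SetLike S R] [SubringClass S R] [Fintype κ]
    [DecidableEq κ] {s : S} {A : Matrix κ κ R} (hA : ∀ i j, A i j ∈ s) : A.det ∈ s := by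
  rw [Matrix.det_apply]
  refine sum_mem fun σ _ ↦ ?_
  rw [Units.smul_def]
  exact zsmul_mem (prod_mem fun i _ ↦ hA _ _) _

variable {F ι κ : Type*} [NormedField F] [IsUltrametricDist F] [Fintype ι] [Fintype κ]
  [DecidableEq κ] [Nonempty κ] {K : Subfield F} {x : ι → F} {e : κ → F} {c ρ : ℝ}

lemma card_mul_ncard_latticePoints_le (hK : IsCoefficientField K) (hx : IsValueBasis x)
    (hc : 0 < c) (hρ : 0 < ρ)
    (hcoord : ∀ a : κ → F, (∀ j, a j ∈ Algebra.adjoin K (Set.range x)) →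
      ∀ j, c * ‖a j‖ ≤ ‖∑ j, a j * e j‖)
    (M : κ → Matrix κ κ F) (hM : ∀ j p q, M j p q ∈ Algebra.adjoin K (Set.range x))
    (hdet : ∀ a : κ → F, (∀ j, a j ∈ Algebra.adjoin K (Set.range x)) →
      c * ρ < ‖∑ j, a j * e j‖ →
      ‖∑ j, a j * e j‖ ^ Fintype.card κ = ‖(∑ j, a j • M j).det‖) :
    Fintype.card κ * (latticePoints (‖x ·‖) ρ).ncard ≤
      (latticePoints (‖x ·‖) (c * ρ)).ncard := by
  classical
  have hKt := hK.isTriviallyNormed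
  have hfin := finite_latticePoints (fun i ↦ norm_nonneg (x i)) hx.norm_lt_one (mul_pos hc hρ)
  obtain ⟨hW, hW_rank⟩ := finrank_monomialSpan hKt hx hρ
  let W := monomialSpan K x ρ
  have hWA (b : κ → W) (j) : (b j : F) ∈ Algebra.adjoin K (Set.range x) :=
    monomialSpan_le_adjoin K x ρ (b j).2
  let φ : (κ → W) →ₗ[K] F :=
    ∑ j, LinearMap.mulRight K (e j) ∘ₗ W.subtype ∘ₗ LinearMap.proj j
  have φ_apply (b) : φ b = ∑ j, (b j : F) * e j := by simp [φ]
  have lt_norm_φ (b) (hb : b ≠ 0) : c * ρ < ‖φ b‖ := by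
    obtain ⟨j, hj⟩ := Function.ne_iff.mp hb
    calc c * ρ < c * ‖(b j : F)‖ := by
          gcongr; exact lt_norm_of_mem_monomialSpan hKt hx (b j).2 (by simpa using hj)
      _ ≤ ‖φ b‖ := φ_apply b ▸ hcoord _ (hWA b) j
  have φ_injective : Function.Injective φ := by
    refine (injective_iff_map_eq_zero φ).mpr fun b hb ↦ by_contra fun h ↦ ?_
    have := lt_norm_φ b h
    rw [hb, norm_zero] at this
    exact this.not_gt (mul_pos hc hρ)
  have norm_mem : ∀ y ∈ LinearMap.range φ, y ≠ 0 →
      ‖y‖ ∈ hfin.toFinset.image fun ν ↦ ‖∏ i, x i ^ ν i‖ := by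
    rintro _ ⟨b, rfl⟩ hb0
    have hlt := lt_norm_φ b (by rintro rfl; simp at hb0)
    have hpow := hdet _ (hWA b) (φ_apply b ▸ hlt)
    rw [← φ_apply] at hpow
    obtain ⟨ν, hν⟩ := exists_norm_eq_of_norm_pow_eq hKt hx hb0 Fintype.card_ne_zero
      (matrix_det_mem fun p q ↦ by
        rw [Matrix.sum_apply]
        exact sum_mem fun j _ ↦ mul_mem (hWA b j) (hM _ _ _)) hpow
    refine Finset.mem_image.mpr ⟨ν, hfin.mem_toFinset.mpr ?_, hν.symm⟩
    simpa [latticePoints, hν] using hlt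
  have hrank := (finrank_le_card_norms hK _ (LinearMap.range φ) norm_mem).2.trans
    Finset.card_image_le
  rwa [LinearMap.finrank_range_of_inj φ_injective, Module.finrank_pi_fintype, Finset.sum_const,
    Finset.card_univ, smul_eq_mul, hW_rank, ← Set.ncard_eq_toFinset_card _ hfin] at hrank

/-- The counting argument: the `e j` span a space in which the number of values above a given
bound is at least `card κ` times that of `K[x]`, which contradicts polynomial growth. -/
lemma card_eq_one_of_norm_pow_eq_norm_det (hK : IsCoefficientField K) (hx : IsValueBasis x)
    (hc : 0 < c) (hc1 : c < 1)
    (hcoord : ∀ a : κ → F, (∀ j, a j ∈ laurentSubalgebra K x) →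
      ∀ j, c * ‖a j‖ ≤ ‖∑ j, a j * e j‖)
    (hdet : ∀ ε > 0, ∃ M : κ → Matrix κ κ F,
      (∀ j p q, M j p q ∈ laurentSubalgebra K x ∧ ‖M j p q‖ ≤ 1) ∧
      ∀ a : κ → F, (∀ j, a j ∈ laurentSubalgebra K x) → (∀ j, ‖a j‖ ≤ 1) →
        ε < ‖∑ j, a j * e j‖ →
        ‖∑ j, a j * e j‖ ^ Fintype.card κ = ‖(∑ j, a j • M j).det‖) :
    Fintype.card κ = 1 := by
  classical
  obtain ⟨k, hk0, hk⟩ := exists_pow_lt_two_pow (Fintype.card ι)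
  obtain ⟨M, hM, hM_det⟩ := hdet (c ^ k) (pow_pos hc k)
  obtain ⟨x', hx', href, hmem⟩ := exists_refinesTo_mem_adjoin hK.isTriviallyNormed hx
    (Finset.univ.image fun p : κ × κ × κ ↦ M p.1 p.2.1 p.2.2) <| by
      exact Finset.forall_mem_image.mpr fun p _ ↦ hM p.1 p.2.1 p.2.2
  have hle : Algebra.adjoin K (Set.range x') ≤ laurentSubalgebra K x :=
    href.adjoin_range_le_laurentSubalgebra
  have hlt : Fintype.card κ < 2 := lt_two_of_mul_ncard_latticePoints_le
    (fun i ↦ norm_nonneg (x' i)) hx'.norm_lt_one hc hc1 hk0 hk fun ρ hρ hcρ ↦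
      card_mul_ncard_latticePoints_le hK hx' hc hρ (fun a ha ↦ hcoord a fun j ↦ hle (ha j)) M
        (fun j p q ↦ hmem _ (Finset.mem_image.mpr ⟨(j, p, q), Finset.mem_univ _, rfl⟩))
        fun a ha hlt ↦ hM_det a (fun j ↦ hle (ha j))
          (fun j ↦ norm_le_one_of_mem_adjoin hK.isTriviallyNormed hx' (ha j)) (hcρ.trans_lt hlt)
  have := Fintype.card_pos (α := κ)
  omega

end Counting

/-! ### Approximating norms and determinants -/

section NormOfFiniteExtension

variable {L Ω κ : Type*} [NontriviallyNormedField L] [CompleteSpace L] [NormedField Ω]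
  [NormedAlgebra L Ω]

lemma exists_mul_norm_le_norm_sum_smul [Fintype κ] (b : Module.Basis κ L Ω) :
    ∃ c : ℝ, 0 < c ∧ ∀ (a : κ → L) (j : κ), c * ‖a j‖ ≤ ‖∑ j, a j • b j‖ := by
  obtain ⟨C, hC, h⟩ := (LinearMap.injective_iff_antilipschitz _).mp
    b.linearIndependent.fintypeLinearCombination_injective
  refine ⟨(C : ℝ)⁻¹, by positivity, fun a j ↦ (inv_mul_le_iff₀ (by positivity)).mpr ?_⟩
  have hle := h.le_mul_dist a 0
  simp only [map_zero, dist_zero_right, Fintype.linearCombination_apply] at hle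
  exact (norm_le_pi_norm a j).trans hle

variable [FiniteDimensional L Ω]

lemma continuous_algebraNorm : Continuous fun y : Ω ↦ Algebra.norm L y := by
  classical
  let b := Module.finBasis L Ω
  simp only [Algebra.norm_eq_matrix_det b]
  exact (LinearMap.continuous_of_finiteDimensional
    (Algebra.leftMulMatrix b).toLinearMap).matrix_det

lemma norm_algebraNorm_lt_one {y : Ω} (hy : ‖y‖ < 1) : ‖Algebra.norm L y‖ < 1 := by
  have norm_zero_eq : Algebra.norm L (0 : Ω) = 0 := Algebra.norm_zero
  have hlim := (continuous_algebraNorm (L := L) (Ω := Ω)).tendsto 0 |>.comp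
    (tendsto_pow_atTop_nhds_zero_of_norm_lt_one hy)
  simp only [norm_zero_eq, Function.comp_def, map_pow] at hlim
  exact tendsto_pow_atTop_nhds_zero_iff_norm_lt_one.mp hlim

/-- Apply `norm_algebraNorm_lt_one` to `z = y ^ n / N y` and to `z⁻¹`, both of norm one over `L`. -/
lemma norm_algebraNorm (y : Ω) : ‖Algebra.norm L y‖ = ‖y‖ ^ Module.finrank L Ω := by
  rcases eq_or_ne y 0 with rfl | hy
  · rw [Algebra.norm_zero, norm_zero, norm_zero, zero_pow Module.finrank_pos.ne']
  have hN : Algebra.norm L y ≠ 0 := Algebra.norm_ne_zero_iff.mpr hy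
  set z := y ^ Module.finrank L Ω / algebraMap L Ω (Algebra.norm L y) with hz
  have norm_z : Algebra.norm L z = 1 := by
    have := congrArg (Algebra.norm L) (div_mul_cancel₀ (y ^ Module.finrank L Ω)
      ((map_ne_zero (algebraMap L Ω)).mpr hN))
    rw [map_mul, map_pow, Algebra.norm_algebraMap] at this
    exact (mul_eq_right₀ (pow_ne_zero _ hN)).mp this
  have one_le_of_norm_eq_one : ∀ w : Ω, Algebra.norm L w = 1 → 1 ≤ ‖w‖ := fun w hw ↦
    not_lt.mp fun h ↦ (norm_algebraNorm_lt_one (L := L) h).ne (by rw [hw, norm_one])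
  have hz_le : ‖z‖ ≤ 1 := by
    have hz0 : z ≠ 0 := Algebra.norm_ne_zero_iff.mp (norm_z ▸ one_ne_zero)
    have norm_inv_z : Algebra.norm L z⁻¹ = 1 := by
      rw [← mul_one (Algebra.norm L z⁻¹), ← norm_z, ← map_mul, inv_mul_cancel₀ hz0, map_one, norm_z]
    have := one_le_of_norm_eq_one z⁻¹ norm_inv_z
    rw [norm_inv] at this
    exact (one_le_inv₀ (norm_pos_iff.mpr hz0)).mp this
  have hz_eq : ‖z‖ = 1 := hz_le.antisymm (one_le_of_norm_eq_one z norm_z)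
  rw [hz, norm_div, norm_pow, norm_algebraMap',
    div_eq_one_iff_eq (norm_ne_zero_iff.mpr hN)] at hz_eq
  exact hz_eq.symm

end NormOfFiniteExtension

section DetPerturbation

variable {L κ : Type*} [NormedField L] [IsUltrametricDist L] {δ : ℝ}

lemma norm_prod_sub_prod_le (s : Finset κ) (a b : κ → L) (hδ : 0 ≤ δ) (ha : ∀ i ∈ s, ‖a i‖ ≤ 1)
    (hb : ∀ i ∈ s, ‖b i‖ ≤ 1) (h : ∀ i ∈ s, ‖a i - b i‖ ≤ δ) :
    ‖∏ i ∈ s, a i - ∏ i ∈ s, b i‖ ≤ δ := by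
  classical
  induction s using Finset.induction_on with
  | empty => simpa using hδ
  | insert i s hi ih =>
    simp only [Finset.forall_mem_insert] at ha hb h
    rw [Finset.prod_insert hi, Finset.prod_insert hi,
      show a i * ∏ j ∈ s, a j - b i * ∏ j ∈ s, b j =
        (a i - b i) * ∏ j ∈ s, a j + b i * (∏ j ∈ s, a j - ∏ j ∈ s, b j) by ring]
    refine (IsUltrametricDist.norm_add_le_max _ _).trans (max_le ?_ ?_)
    · rw [norm_mul, norm_prod]
      exact (mul_le_of_le_one_right (norm_nonneg _) <|
        Finset.prod_le_one (fun _ _ ↦ norm_nonneg _) ha.2).trans h.1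
    · rw [norm_mul]
      exact (mul_le_of_le_one_left (norm_nonneg _) hb.1).trans (ih ha.2 hb.2 h.2)

variable [Fintype κ] [DecidableEq κ]

lemma norm_det_sub_det_le (A B : Matrix κ κ L) (hδ : 0 ≤ δ) (hA : ∀ i j, ‖A i j‖ ≤ 1)
    (hB : ∀ i j, ‖B i j‖ ≤ 1) (h : ∀ i j, ‖A i j - B i j‖ ≤ δ) : ‖A.det - B.det‖ ≤ δ := by
  rw [Matrix.det_apply, Matrix.det_apply, ← Finset.sum_sub_distrib]
  refine IsUltrametricDist.norm_sum_le_of_forall_le_of_nonneg hδ fun σ _ ↦ ?_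
  have norm_sign_smul : ∀ z : L, ‖Equiv.Perm.sign σ • z‖ = ‖z‖ := fun z ↦ by
    rcases Int.units_eq_one_or (Equiv.Perm.sign σ) with h | h <;> simp [h]
  rw [← smul_sub, norm_sign_smul]
  exact norm_prod_sub_prod_le _ _ _ hδ (fun _ _ ↦ hA _ _) (fun _ _ ↦ hB _ _) fun _ _ ↦ h _ _

lemma norm_det_sum_smul_sub_le {ι : Type*} [Fintype ι] {a : ι → L} (ha : ∀ j, ‖a j‖ ≤ 1)
    {A B : ι → Matrix κ κ L} (hδ : 0 ≤ δ) (hA : ∀ j p q, ‖A j p q‖ ≤ 1)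
    (hB : ∀ j p q, ‖B j p q‖ ≤ 1) (h : ∀ j p q, ‖A j p q - B j p q‖ ≤ δ) :
    ‖(∑ j, a j • A j).det - (∑ j, a j • B j).det‖ ≤ δ := by
  have norm_sum_le : ∀ (c : ι → L) {ρ : ℝ}, 0 ≤ ρ → (∀ j, ‖c j‖ ≤ ρ) → ‖∑ j, a j * c j‖ ≤ ρ :=
    fun c ρ hρ hc ↦ IsUltrametricDist.norm_sum_le_of_forall_le_of_nonneg hρ fun j _ ↦ by
      rw [norm_mul]
      exact (mul_le_of_le_one_left (norm_nonneg _) (ha j)).trans (hc j)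
  refine norm_det_sub_det_le _ _ hδ (fun p q ↦ ?_) (fun p q ↦ ?_) fun p q ↦ ?_ <;>
    simp only [Matrix.sum_apply, Matrix.smul_apply, smul_eq_mul, ← Finset.sum_sub_distrib,
      ← mul_sub]
  · exact norm_sum_le _ zero_le_one fun j ↦ hA j p q
  · exact norm_sum_le _ zero_le_one fun j ↦ hB j p q
  · exact norm_sum_le _ hδ fun j ↦ h j p q

end DetPerturbation

section DenseSubring

lemma sum_smul_map {S T κ ι : Type*} [CommRing S] [CommRing T] [Fintype κ] [DecidableEq κ]
    [Fintype ι] (g : S →+* T) (a : ι → S) (M : ι → Matrix κ κ S) :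
    ∑ j, g (a j) • (M j).map g = g.mapMatrix (∑ j, a j • M j) := by
  ext
  simp [Matrix.sum_apply]

variable {L Ω F : Type*} [NontriviallyNormedField L] [NormedField Ω] [NormedAlgebra L Ω]
  [NormedField F] [NormedAlgebra F Ω] {R : Subring F} {ψ : R →+* L}

lemma norm_map_eq_of_algebraMap_eq (hψ : ∀ r, algebraMap L Ω (ψ r) = algebraMap F Ω r) (r : R) :
    ‖ψ r‖ = ‖(r : F)‖ := by
  rw [← norm_algebraMap' Ω (ψ r), hψ, norm_algebraMap']

lemma exists_norm_map_lt_of_denseRange (hdense : DenseRange ψ) {ε : ℝ} (hε : 0 < ε) :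
    ∃ r, ψ r ≠ 0 ∧ ‖ψ r‖ < ε := by
  obtain ⟨l, hl0, hl⟩ := NormedField.exists_norm_lt L (r := ε / 2) (by positivity)
  obtain ⟨r, hr⟩ := hdense.exists_dist_lt l hl0
  rw [dist_eq_norm] at hr
  have norm_le : ‖ψ r‖ ≤ ‖l‖ + ‖l - ψ r‖ := by simpa using norm_sub_le l (l - ψ r)
  exact ⟨r, fun h ↦ by simp [h] at hr, by linarith⟩

lemma leftMulMatrix_unitsSMul_const {κ : Type*} [Fintype κ] [DecidableEq κ]
    (b : Module.Basis κ L Ω) (w : Lˣ) (y : Ω) :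
    Algebra.leftMulMatrix (b.unitsSMul fun _ ↦ w) y = Algebra.leftMulMatrix b y := by
  ext p q
  rw [Algebra.leftMulMatrix_eq_repr_mul, Algebra.leftMulMatrix_eq_repr_mul,
    Module.Basis.repr_unitsSMul, Module.Basis.unitsSMul_apply, mul_smul_comm]
  simp [Units.smul_def]

lemma norm_det_sum_smul_map (hψ : ∀ r, algebraMap L Ω (ψ r) = algebraMap F Ω r) {κ ι : Type*}
    [Fintype κ] [DecidableEq κ] [Fintype ι] (a : ι → R) (M : ι → Matrix κ κ R) :
    ‖(∑ j, ψ (a j) • (M j).map ψ).det‖ = ‖(∑ j, (a j : F) • (M j).map R.subtype).det‖ := by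
  rw [sum_smul_map, ← RingHom.map_det, norm_map_eq_of_algebraMap_eq hψ]
  exact congrArg _ ((RingHom.map_det R.subtype _).trans
    (congrArg _ (sum_smul_map R.subtype a M).symm))

variable [FiniteDimensional L Ω]

lemma exists_basis_eq_algebraMap (hspan : Submodule.span L (Set.range (algebraMap F Ω)) = ⊤) :
    ∃ (n : ℕ) (b : Module.Basis (Fin n) L Ω) (e : Fin n → F), ∀ j, b j = algebraMap F Ω (e j) := by
  let b := Module.Basis.ofSpan hspan.ge
  have : Finite _ := Module.Finite.finite_basis b
  have hb (j) : ∃ f, algebraMap F Ω f = b.reindex (Finite.equivFin _) j :=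
    Module.Basis.ofSpan_subset hspan.ge ⟨_, (b.reindex_apply _ j).symm⟩
  choose e he using hb
  exact ⟨_, _, e, fun j ↦ (he j).symm⟩

lemma exists_basis_norm_leftMulMatrix_le_one
    (hψ : ∀ r, algebraMap L Ω (ψ r) = algebraMap F Ω r) (hdense : DenseRange ψ)
    (hspan : Submodule.span L (Set.range (algebraMap F Ω)) = ⊤) :
    ∃ (n : ℕ) (b : Module.Basis (Fin n) L Ω) (e : Fin n → F), (∀ j, b j = algebraMap F Ω (e j)) ∧
      ∀ j p q, ‖Algebra.leftMulMatrix b (b j) p q‖ ≤ 1 := by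
  obtain ⟨n, b, e, hbe⟩ := exists_basis_eq_algebraMap hspan
  obtain ⟨B, hB⟩ := (Set.finite_range fun t : Fin n × Fin n × Fin n ↦
    ‖Algebra.leftMulMatrix b (b t.1) t.2.1 t.2.2‖).bddAbove
  obtain ⟨s, hs0, hs⟩ := exists_norm_map_lt_of_denseRange hdense (ε := (|B| + 1)⁻¹) (by positivity)
  let w := Units.mk0 (ψ s) hs0
  have basis_eq : ∀ j, b.unitsSMul (fun _ ↦ w) j = ψ s • b j := fun j ↦
    Module.Basis.unitsSMul_apply j
  refine ⟨n, b.unitsSMul fun _ ↦ w, fun j ↦ s * e j, fun j ↦ ?_, fun j p q ↦ ?_⟩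
  · rw [basis_eq, map_mul, ← hbe, ← hψ, Algebra.smul_def]
  · rw [leftMulMatrix_unitsSMul_const, basis_eq, map_smul, Matrix.smul_apply, norm_smul]
    have entry_le : ‖Algebra.leftMulMatrix b (b j) p q‖ ≤ |B| + 1 := by
      linarith [hB ⟨(j, p, q), rfl⟩, le_abs_self B]
    calc _ ≤ (|B| + 1)⁻¹ * (|B| + 1) := mul_le_mul hs.le entry_le (norm_nonneg _) (by positivity)
      _ = 1 := inv_mul_cancel₀ (by positivity)

variable [CompleteSpace L]

lemma norm_sum_mul_pow_eq (hψ : ∀ r, algebraMap L Ω (ψ r) = algebraMap F Ω r) {κ : Type*}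
    [Fintype κ] [DecidableEq κ] {b : Module.Basis κ L Ω} {e : κ → F}
    (hbe : ∀ j, b j = algebraMap F Ω (e j)) (a : κ → R) :
    ‖∑ j, (a j : F) * e j‖ ^ Fintype.card κ =
      ‖(∑ j, ψ (a j) • Algebra.leftMulMatrix b (b j)).det‖ := by
  have hy : algebraMap F Ω (∑ j, a j * e j) = ∑ j, ψ (a j) • b j := by
    simp only [map_sum, map_mul, ← hbe, ← hψ, Algebra.smul_def]
  rw [← norm_algebraMap' Ω, ← Module.finrank_eq_card_basis b, ← norm_algebraNorm (L := L), hy,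
    Algebra.norm_eq_matrix_det b, map_sum]
  simp only [map_smul]

variable [IsUltrametricDist L]

/-- `‖∑ j, a j * e j‖ ^ n` is the norm of the determinant of `∑ j, a j • A j`, where `A j` is the
matrix of multiplication by `e j`; approximate the entries of the `A j` by elements of `R`. -/
lemma exists_matrix_norm_pow_eq_norm_det
    (hψ : ∀ r, algebraMap L Ω (ψ r) = algebraMap F Ω r) (hdense : DenseRange ψ) {κ : Type*}
    [Fintype κ] [DecidableEq κ] {b : Module.Basis κ L Ω} {e : κ → F}
    (hbe : ∀ j, b j = algebraMap F Ω (e j))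
    (hb : ∀ j p q, ‖Algebra.leftMulMatrix b (b j) p q‖ ≤ 1) {ε : ℝ} (hε : 0 < ε) :
    ∃ M : κ → Matrix κ κ F, (∀ j p q, M j p q ∈ R ∧ ‖M j p q‖ ≤ 1) ∧
      ∀ a : κ → F, (∀ j, a j ∈ R) → (∀ j, ‖a j‖ ≤ 1) → ε < ‖∑ j, a j * e j‖ →
        ‖∑ j, a j * e j‖ ^ Fintype.card κ = ‖(∑ j, a j • M j).det‖ := by
  have norm_ψ := norm_map_eq_of_algebraMap_eq hψ
  let A (j) := Algebra.leftMulMatrix b (b j)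
  have hδ : 0 < min (ε ^ Fintype.card κ) 1 := lt_min (pow_pos hε _) one_pos
  choose M hM using fun j p q ↦ hdense.exists_dist_lt (A j p q) hδ
  simp only [dist_eq_norm] at hM
  have norm_M_le : ∀ j p q, ‖ψ (M j p q)‖ ≤ 1 := fun j p q ↦ by
    have := IsUltrametricDist.norm_add_le_max (A j p q) (ψ (M j p q) - A j p q)
    rw [add_sub_cancel, norm_sub_rev] at this
    exact this.trans (max_le (hb j p q) ((hM j p q).le.trans (min_le_right _ _)))
  refine ⟨fun j ↦ (Matrix.of (M j)).map R.subtype,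
    fun j p q ↦ ⟨(M j p q).2, norm_ψ (M j p q) ▸ norm_M_le j p q⟩, fun a ha ha1 hlt ↦ ?_⟩
  lift a to κ → R using ha
  have hn : Fintype.card κ ≠ 0 := Module.finrank_eq_card_basis b ▸ Module.finrank_pos.ne'
  have det_sub_lt : ‖(∑ j, ψ (a j) • A j).det - (∑ j, ψ (a j) • (Matrix.of (M j)).map ψ).det‖ <
      ‖(∑ j, ψ (a j) • A j).det‖ :=
    (norm_det_sum_smul_sub_le (fun j ↦ (norm_ψ _).trans_le (ha1 j)) hδ.le hb norm_M_le
      fun j p q ↦ (hM j p q).le).trans_lt <| (min_le_left _ _).trans_lt <|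
        (pow_lt_pow_left₀ hlt hε.le hn).trans_eq (norm_sum_mul_pow_eq hψ hbe a)
  rw [norm_sum_mul_pow_eq hψ hbe, ← norm_det_sum_smul_map hψ]
  rw [sub_eq_add_neg] at det_sub_lt
  simpa only [norm_neg] using
    IsUltrametricDist.norm_eq_of_add_norm_lt_max (det_sub_lt.trans_le (le_max_left _ _))

end DenseSubring

/-! ### Density of Laurent polynomials -/

section FiniteOverDense

variable {L Ω F F₀ : Type*} [NontriviallyNormedField L] [CompleteSpace L] [NormedField Ω]
  [NormedAlgebra L Ω] [Field F] [Algebra F Ω] [Field F₀] [Algebra F₀ F] [FiniteDimensional F₀ F]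

lemma finiteDimensional_and_span_range_algebraMap_eq_top
    (hF₀ : ∀ y : F₀, ∃ l : L, algebraMap L Ω l = algebraMap F Ω (algebraMap F₀ F y))
    (hF : DenseRange (algebraMap F Ω)) :
    FiniteDimensional L Ω ∧ Submodule.span L (Set.range (algebraMap F Ω)) = ⊤ := by
  let b := Module.finBasis F₀ F
  choose l hl using hF₀
  let V := Submodule.span L (Set.range fun i ↦ algebraMap F Ω (b i))
  have hfin : FiniteDimensional L V := FiniteDimensional.span_of_finite L (Set.finite_range _)
  have hle : Set.range (algebraMap F Ω) ⊆ V := by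
    rintro _ ⟨f, rfl⟩
    rw [← b.sum_repr f, map_sum]
    refine sum_mem fun i _ ↦ ?_
    rw [Algebra.smul_def, map_mul, ← hl, ← Algebra.smul_def]
    exact Submodule.smul_mem _ _ (Submodule.subset_span ⟨i, rfl⟩)
  have hV : V = ⊤ := Submodule.eq_top_iff'.mpr fun y ↦
    V.closed_of_finiteDimensional.closure_subset_iff.mpr hle (hF y)
  have hspan : Submodule.span L (Set.range (algebraMap F Ω)) = ⊤ :=
    top_le_iff.mp <| hV.ge.trans <| Submodule.span_mono <| by
      rintro _ ⟨i, rfl⟩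
      exact ⟨b i, rfl⟩
  exact ⟨Module.finite_def.mpr (hV ▸ Module.Finite.iff_fg.mp hfin), hspan⟩

end FiniteOverDense

section DensityOfLaurentPolynomials

variable {F ι : Type*} [NormedField F] [IsUltrametricDist F] [Fintype ι] {K : Subfield F}
  {x : ι → F}

lemma exists_norm_linearCombination_sub_lt (hK : IsTriviallyNormed K) {κ : Type*} {v : κ → F}
    (hv : Function.Injective fun k ↦ ‖v k‖) {s : κ →₀ K}
    (hs : Finsupp.linearCombination K v s ≠ 0) :
    ∃ k, ‖Finsupp.linearCombination K v s - s k • v k‖ < ‖s k • v k‖ := by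
  have hs0 : s ≠ 0 := by rintro rfl; simp at hs
  obtain ⟨k, hk, hnorm, hmax⟩ := exists_norm_linearCombination_eq hK hv hs0
  have norm_smul_eq : ‖s k • v k‖ = ‖v k‖ := by
    rw [Algebra.smul_def, norm_mul]
    exact (congrArg (· * ‖v k‖) (hK _ (s k).2 (by simpa using hk))).trans (one_mul _)
  have sub_eq : Finsupp.linearCombination K v s - s k • v k =
      Finsupp.linearCombination K v (s.erase k) := by
    rw [sub_eq_iff_eq_add, ← Finsupp.linearCombination_single K, ← map_add,
      Finsupp.erase_add_single]
  refine ⟨k, ?_⟩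
  rw [sub_eq, norm_smul_eq]
  rcases eq_or_ne (s.erase k) 0 with h0 | h0
  · rw [h0, map_zero, norm_zero, ← hnorm]
    exact norm_pos_iff.mpr hs
  · obtain ⟨k', hk', hnorm', -⟩ := exists_norm_linearCombination_eq hK hv h0
    classical
    rw [Finsupp.support_erase, Finset.mem_erase] at hk'
    exact hnorm' ▸ (hmax k' hk'.2).lt_of_ne fun h ↦ hk'.1 (hv h)

/-- Divide a Laurent polynomial by its leading term and expand the inverse in a geometric series. -/
lemma inv_mem_closure_laurentSubalgebra (hK : IsTriviallyNormed K) (hx : IsValueBasis x) {r : F}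
    (hr : r ∈ laurentSubalgebra K x) : r⁻¹ ∈ closure (laurentSubalgebra K x : Set F) := by
  rcases eq_or_ne r 0 with rfl | hr0
  · simpa using subset_closure (zero_mem (laurentSubalgebra K x))
  obtain ⟨s, rfl⟩ := (mem_laurentSubalgebra_iff hx.ne_zero).mp hr
  set r := Finsupp.linearCombination K (laurentMonomial x) s
  obtain ⟨e, he⟩ := exists_norm_linearCombination_sub_lt hK hx.norm_injective hr0
  let u := (s e • laurentMonomial x e)⁻¹
  have hu : u ∈ laurentSubalgebra K x := by
    have hu_eq : u = (s e)⁻¹ • laurentMonomial x (-e) := by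
      simp only [u, Algebra.smul_def, mul_inv, map_inv₀, laurentMonomial_neg]
    exact hu_eq ▸ Subalgebra.smul_mem _ (laurentMonomial_mem_laurentSubalgebra x _) _
  have ht0 : s e • laurentMonomial x e ≠ 0 := norm_pos_iff.mp ((norm_nonneg _).trans_lt he)
  have hu0 : u ≠ 0 := inv_ne_zero ht0
  have hw : ‖1 - u * r‖ < 1 := by
    have hw_eq : 1 - u * r = -(u * (r - s e • laurentMonomial x e)) := by
      rw [mul_sub, inv_mul_cancel₀ ht0, neg_sub]
    rw [hw_eq, norm_neg, norm_mul, norm_inv]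
    exact (inv_mul_lt_one₀ ((norm_nonneg _).trans_lt he)).mpr he
  have hlim := (hasSum_geometric_of_norm_lt_one hw).tendsto_sum_nat.mul_const u
  rw [sub_sub_cancel, mul_inv, mul_right_comm, inv_mul_cancel₀ hu0, one_mul] at hlim
  exact mem_closure_of_tendsto hlim <| .of_forall fun n ↦ mul_mem
    (sum_mem fun i _ ↦ pow_mem (sub_mem (one_mem _) (mul_mem hu hr)) i) hu

lemma adjoin_subset_closure_laurentSubalgebra (hK : IsTriviallyNormed K) (hx : IsValueBasis x) :
    (IntermediateField.adjoin K (Set.range x) : Set F) ⊆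
      closure (laurentSubalgebra K x : Set F) := by
  intro y hy
  obtain ⟨p, hp, q, hq, rfl⟩ := IntermediateField.mem_adjoin_iff_div.mp hy
  have hle := (RefinesTo.refl x).adjoin_range_le_laurentSubalgebra (K := K)
  rw [← Subalgebra.topologicalClosure_coe, div_eq_mul_inv]
  exact mul_mem (subset_closure (hle hp)) (inv_mem_closure_laurentSubalgebra hK hx (hle hq))

variable {L Ω : Type*} [NontriviallyNormedField L] [CompleteSpace L] [IsUltrametricDist L]
  [NormedField Ω] [NormedAlgebra L Ω] [FiniteDimensional L Ω] [NormedAlgebra F Ω]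
  {ψ : (laurentSubalgebra K x).toSubring →+* L}

lemma finrank_eq_one_of_denseRange (hK : IsCoefficientField K) (hx : IsValueBasis x)
    (hψ : ∀ r, algebraMap L Ω (ψ r) = algebraMap F Ω r) (hdense : DenseRange ψ)
    (hspan : Submodule.span L (Set.range (algebraMap F Ω)) = ⊤) : Module.finrank L Ω = 1 := by
  obtain ⟨n, b, e, hbe, hb⟩ := exists_basis_norm_leftMulMatrix_le_one hψ hdense hspan
  obtain ⟨c, hc, hcoord⟩ := exists_mul_norm_le_norm_sum_smul b
  have : Nonempty (Fin n) := b.index_nonempty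
  rw [Module.finrank_eq_card_basis b]
  refine card_eq_one_of_norm_pow_eq_norm_det hK hx (c := min c (1 / 2)) (by positivity)
    (by norm_num) (fun a ha _ ↦ ?_)
    fun ε hε ↦ exists_matrix_norm_pow_eq_norm_det hψ hdense hbe hb hε
  lift a to Fin n → (laurentSubalgebra K x).toSubring using ha
  refine (mul_le_mul_of_nonneg_right (min_le_left _ _) (norm_nonneg _)).trans ?_
  simpa [← norm_algebraMap' Ω (∑ _, _), hbe, ← hψ, Algebra.smul_def,
    norm_map_eq_of_algebraMap_eq hψ] using hcoord (ψ ∘ a) _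

lemma dense_laurentSubalgebra_of_denseRange (hK : IsCoefficientField K) (hx : IsValueBasis x)
    (hψ : ∀ r, algebraMap L Ω (ψ r) = algebraMap F Ω r) (hdense : DenseRange ψ)
    (hspan : Submodule.span L (Set.range (algebraMap F Ω)) = ⊤) :
    Dense (laurentSubalgebra K x : Set F) := by
  have hsurj := (Module.Free.bijective_algebraMap_of_finrank_eq_one
    (finrank_eq_one_of_denseRange hK hx hψ hdense hspan)).surjective
  rw [Metric.dense_iff]
  intro f ε hε
  obtain ⟨l, hl⟩ := hsurj (algebraMap F Ω f)
  obtain ⟨r, hr⟩ := hdense.exists_dist_lt l hε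
  refine ⟨r, ?_, r.2⟩
  rwa [Metric.mem_ball', dist_eq_norm, ← norm_algebraMap' Ω, map_sub, ← hl, ← hψ, ← map_sub,
    norm_algebraMap', ← dist_eq_norm]

theorem dense_laurentSubalgebra [Nonempty ι] (hK : IsCoefficientField K) (hx : IsValueBasis x)
    [FiniteDimensional (IntermediateField.adjoin K (Set.range x)) F] :
    Dense (laurentSubalgebra K x : Set F) := by
  let F₀ := IntermediateField.adjoin K (Set.range x)
  let Ω := UniformSpace.Completion F
  have : IsUltrametricDist Ω := IsUltrametricDist.of_normedAlgebra F
  let φ : F →+* Ω := algebraMap F Ω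
  let L : Subfield Ω := (F₀.toSubfield.map φ).topologicalClosure
  have hL (y) (hy : y ∈ F₀) : φ y ∈ L := Subfield.le_topologicalClosure _ ⟨y, hy, rfl⟩
  let : NontriviallyNormedField L := .ofNormNeOne <| by
    obtain ⟨i⟩ := ‹Nonempty ι›
    have norm_φ : ‖φ (x i)‖ = ‖x i‖ := norm_algebraMap' Ω (x i)
    refine ⟨⟨φ (x i), hL _ (IntermediateField.subset_adjoin _ _ ⟨i, rfl⟩)⟩, fun h ↦ ?_,
      norm_φ.trans_ne (hx.norm_lt_one i).ne⟩
    exact hx.ne_zero i ((map_eq_zero φ).mp (congrArg Subtype.val h))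
  let : NormedAlgebra L Ω :=
    { (inferInstance : Algebra L Ω) with
      norm_smul_le := fun a b ↦ (norm_mul (a : Ω) b).le }
  have : CompleteSpace L := (Subfield.isClosed_topologicalClosure _).completeSpace_coe
  have hF₀_le := adjoin_subset_closure_laurentSubalgebra hK.isTriviallyNormed hx
  have hR_mem (r : F) (hr : r ∈ laurentSubalgebra K x) : φ r ∈ L :=
    hL r (laurentSubalgebra_le_adjoin x hr)
  obtain ⟨hfin, hspan⟩ := finiteDimensional_and_span_range_algebraMap_eq_top (L := L) (Ω := Ω)
    (F := F) (F₀ := F₀) (fun y ↦ ⟨⟨_, hL y y.2⟩, rfl⟩) UniformSpace.Completion.denseRange_coe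
  have hψ_dense : DenseRange ((φ.comp (laurentSubalgebra K x).toSubring.subtype).codRestrict L
      fun r ↦ hR_mem r r.2) := by
    refine Subtype.dense_iff.mpr fun y hy ↦ ?_
    rw [← Set.range_comp]
    have hy' : y ∈ closure (φ '' closure (laurentSubalgebra K x : Set F)) :=
      closure_mono (Set.image_mono hF₀_le) hy
    rw [closure_image_closure (continuous_algebraMap F Ω), Set.image_eq_range] at hy'
    exact hy'
  exact dense_laurentSubalgebra_of_denseRange hK hx (fun _ ↦ rfl) hψ_dense hspan

end DensityOfLaurentPolynomials

/-! ### Separability -/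

section FrobeniusSum

variable {F κ : Type*} [Field F] (p : ℕ) [ExpChar F p]

/-- The sum `∑ wₖᵖ vₖ`. The family `v` is linearly independent over the field of `p`-th powers if
and only if this map is injective, and it spans `F` over that field if the map is surjective. -/
noncomputable def frobeniusSum (v : κ → F) : (κ →₀ F) →+ F :=
  Finsupp.liftAddHom fun k ↦ (AddMonoidHom.mulRight (v k)).comp (frobenius F p : F →+ F)

variable {p} {v : κ → F}

lemma frobeniusSum_apply (w : κ →₀ F) : frobeniusSum p v w = w.sum fun k c ↦ c ^ p * v k := rfl

lemma frobeniusSum_single (k : κ) (c : F) :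
    frobeniusSum p v (Finsupp.single k c) = c ^ p * v k := by
  rw [frobeniusSum_apply, Finsupp.sum_single_index]
  rw [zero_pow (expChar_ne_zero F p), zero_mul]

lemma frobeniusSum_smul (c : F) (w : κ →₀ F) :
    frobeniusSum p v (c • w) = c ^ p * frobeniusSum p v w := by
  induction w using Finsupp.induction_linear with
  | zero => simp
  | add f g hf hg => rw [smul_add, map_add, map_add, mul_add, hf, hg]
  | single k a =>
    rw [Finsupp.smul_single, frobeniusSum_single, frobeniusSum_single, smul_eq_mul, mul_pow,
      mul_assoc]

lemma frobeniusSum_mapRange {E : Type*} [Field E] [ExpChar E p] (φ : E →+* F) (v : κ → E)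
    (w : κ →₀ E) : frobeniusSum p (φ ∘ v) (w.mapRange φ φ.map_zero) = φ (frobeniusSum p v w) := by
  rw [frobeniusSum_apply, frobeniusSum_apply, Finsupp.sum_mapRange_index, map_finsuppSum]
  · simp only [Function.comp_apply, map_mul, map_pow]
  · intro k
    rw [zero_pow (expChar_ne_zero F p), zero_mul]

lemma exists_bijective_frobeniusSum.{u} (p : ℕ) (F : Type u) [Field F] [ExpChar F p] :
    ∃ (κ : Type u) (b : κ → F), Function.Bijective (frobeniusSum p b) := by
  let B := Module.Basis.ofVectorSpace (frobenius F p).fieldRange F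
  let φ := (frobenius F p).rangeRestrictFieldEquiv
  refine ⟨_, B, ?_⟩
  have h_eq : ⇑(frobeniusSum p B) =
      B.repr.symm ∘ Finsupp.mapRange.addEquiv φ.toAddEquiv := by
    ext w
    simp only [Function.comp_apply, Module.Basis.repr_symm_apply, Finsupp.linearCombination_apply]
    exact (Finsupp.sum_mapRange_index (g := w) (hf := map_zero φ) (h := fun k c ↦ c • B k)
      fun k ↦ zero_smul _ (B k)).symm
  rw [h_eq]
  exact B.repr.symm.bijective.comp (AddEquiv.bijective _)

/-- MacLane's criterion: `E` and `Fᵖ` are linearly disjoint over `Eᵖ` if some family spans `E`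
over `Eᵖ` and is linearly independent over `Fᵖ`. -/
lemma linearIndependent_pow_of_injective_frobeniusSum {E σ : Type*} [Field E] [Algebra E F]
    (hv : Function.Injective (frobeniusSum p v))
    (hspan : ∀ c : E, ∃ w : κ →₀ E,
      frobeniusSum p v (w.mapRange (algebraMap E F) (map_zero _)) = algebraMap E F c)
    {y : σ → F} (hy : LinearIndependent E y) : LinearIndependent E fun j ↦ y j ^ p := by
  rw [linearIndependent_iff']
  intro s g hg j hj
  choose w hw using fun j ↦ hspan (g j)
  let W (j : σ) : κ →₀ F := (w j).mapRange (algebraMap E F) (map_zero _)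
  have hsum : ∑ j ∈ s, y j • W j = 0 := by
    refine (injective_iff_map_eq_zero _).mp hv _ ?_
    rw [map_sum, ← hg]
    exact Finset.sum_congr rfl fun j _ ↦ by
      rw [frobeniusSum_smul, hw, Algebra.smul_def, mul_comm]
  have hw0 (k : κ) : w j k = 0 := by
    refine linearIndependent_iff'.mp hy s (fun j ↦ w j k) ?_ j hj
    simpa [W, Algebra.smul_def, mul_comm] using DFunLike.congr_fun hsum k
  rw [← map_eq_zero (algebraMap E F), ← hw j, show w j = 0 from Finsupp.ext hw0]
  simp

lemma isSeparable_of_injective_frobeniusSum {E : Type*} [Field E] [Algebra E F]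
    [FiniteDimensional E F] (hp : p.Prime) (hv : Function.Injective (frobeniusSum p v))
    (hspan : ∀ c : E, ∃ w : κ →₀ E,
      frobeniusSum p v (w.mapRange (algebraMap E F) (map_zero _)) = algebraMap E F c) :
    Algebra.IsSeparable E F := by
  have : ExpChar E p := (algebraMap E F).expChar (algebraMap E F).injective p
  obtain ⟨s, hs, hsep⟩ :=
    exists_isTranscendenceBasis_and_isSeparable_of_linearIndepOn_pow_of_essFiniteType p hp
      fun s : Finset F ↦ linearIndependent_pow_of_injective_frobeniusSum (σ := s) hv hspan
  have hs_empty := Finset.isEmpty_coe_sort.mp (hs.isEmpty_iff_isAlgebraic.mpr inferInstance)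
  rw [hs_empty, Finset.coe_empty, IntermediateField.adjoin_empty] at hsep
  exact Algebra.IsSeparable.trans E (⊥ : IntermediateField E F) F

end FrobeniusSum

section ReducedMonomials

variable {F κ ι : Type*} [Field F] {p : ℕ} [Fintype ι] {x : ι → F}

/-- The monomials `x^ρ` with exponents `0 ≤ ρᵢ < p`. -/
noncomputable def reducedMonomial (p : ℕ) (x : ι → F) (ρ : ι → Fin p) : F :=
  laurentMonomial x fun i ↦ (ρ i : ℤ)

lemma exists_laurentMonomial_eq_pow_mul_reducedMonomial [NeZero p] (hx : ∀ i, x i ≠ 0)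
    (e : ι → ℤ) :
    ∃ f ρ, laurentMonomial x e = laurentMonomial x f ^ p * reducedMonomial p x ρ := by
  have hp : (p : ℤ) ≠ 0 := NeZero.ne _
  have hlt (i) : (e i % p).toNat < p := by
    have := Int.emod_nonneg (e i) hp
    have := Int.emod_lt_of_pos (e i) (b := p) (by omega)
    omega
  refine ⟨fun i ↦ e i / p, fun i ↦ ⟨(e i % p).toNat, hlt i⟩, ?_⟩
  rw [reducedMonomial, ← zpow_natCast, ← laurentMonomial_zsmul, ← laurentMonomial_add hx]
  congr 1
  funext i
  have hi : ((e i % p).toNat : ℤ) = e i % p := Int.toNat_of_nonneg (Int.emod_nonneg (e i) hp)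
  simp only [Pi.add_apply, Pi.smul_apply, smul_eq_mul, hi, Int.mul_ediv_add_emod]

variable [ExpChar F p]

lemma frobeniusSum_mul_eq_sum_curry {τ : Type*} (v : κ → F) (m : τ → F) (w : τ × κ →₀ F) :
    frobeniusSum p (fun tk ↦ v tk.2 * m tk.1) w =
      ∑ t ∈ w.curry.support, frobeniusSum p v (w.curry t) * m t := by
  have h := Finsupp.sum_curry_index w fun t k c ↦ c ^ p * (v k * m t)
  rw [frobeniusSum_apply, ← h]
  refine Finset.sum_congr rfl fun t _ ↦ ?_
  rw [frobeniusSum_apply, Finsupp.sum_mul]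
  exact Finsupp.sum_congr fun k _ ↦ (mul_assoc _ _ _).symm

variable {K : Subfield F} {b : κ → K}

lemma mem_of_forall_pow_mul_mem (hb : Function.Surjective (frobeniusSum p b))
    (hx : ∀ i, x i ≠ 0) {A : AddSubgroup F}
    (hpow : ∀ z ∈ IntermediateField.adjoin K (Set.range x), ∀ y ∈ A, z ^ p * y ∈ A)
    (hA : ∀ k ρ, (b k : F) * reducedMonomial p x ρ ∈ A) {y : F}
    (hy : y ∈ IntermediateField.adjoin K (Set.range x)) : y ∈ A := by
  have : NeZero p := ⟨expChar_ne_zero F p⟩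
  have monomial_mem (k : κ) (e : ι → ℤ) : (b k : F) * laurentMonomial x e ∈ A := by
    obtain ⟨f, ρ, h⟩ := exists_laurentMonomial_eq_pow_mul_reducedMonomial (p := p) hx e
    rw [h, mul_left_comm]
    exact hpow _ (laurentSubalgebra_le_adjoin x (laurentMonomial_mem_laurentSubalgebra x f)) _
      (hA k ρ)
  have smul_monomial_mem (a : K) (e : ι → ℤ) : a • laurentMonomial x e ∈ A := by
    obtain ⟨w, rfl⟩ := hb a
    rw [frobeniusSum_apply, Finsupp.sum, Finset.sum_smul]
    refine sum_mem fun k _ ↦ ?_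
    rw [Subfield.smul_def, smul_eq_mul, Subfield.coe_mul, SubmonoidClass.coe_pow, mul_assoc]
    exact hpow _ (algebraMap_mem (IntermediateField.adjoin K (Set.range x)) (w k)) _
      (monomial_mem k e)
  have laurent_mem {y : F} (hy : y ∈ laurentSubalgebra K x) : y ∈ A := by
    obtain ⟨s, rfl⟩ := (mem_laurentSubalgebra_iff hx).mp hy
    exact sum_mem fun e _ ↦ smul_monomial_mem (s e) e
  obtain ⟨r, hr, s, hs, rfl⟩ := IntermediateField.mem_adjoin_iff_div.mp hy
  have hrs : r / s = s⁻¹ ^ p * (r * s ^ (p - 1)) := by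
    rcases eq_or_ne s 0 with rfl | hs0
    · simp [zero_pow (expChar_ne_zero F p)]
    · rw [inv_pow, eq_inv_mul_iff_mul_eq₀ (pow_ne_zero p hs0),
        ← pow_sub_one_mul (expChar_ne_zero F p)]
      field_simp
  rw [hrs]
  have hle := (RefinesTo.refl x).adjoin_range_le_laurentSubalgebra (K := K)
  exact hpow _ (inv_mem (IntermediateField.algebra_adjoin_le_adjoin K _ hs)) _
    (laurent_mem (hle (mul_mem hr (pow_mem hs _))))

lemma exists_frobeniusSum_mul_reducedMonomial_eq (hb : Function.Surjective (frobeniusSum p b))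
    (hx : ∀ i, x i ≠ 0) (c : IntermediateField.adjoin K (Set.range x)) :
    ∃ w : (ι → Fin p) × κ →₀ IntermediateField.adjoin K (Set.range x),
      frobeniusSum p (fun ρk ↦ (b ρk.2 : F) * reducedMonomial p x ρk.1)
        (w.mapRange (algebraMap _ F) (map_zero _)) = algebraMap _ F c := by
  let E := IntermediateField.adjoin K (Set.range x)
  let v (ρk : (ι → Fin p) × κ) : F := b ρk.2 * reducedMonomial p x ρk.1
  let Φ : ((ι → Fin p) × κ →₀ E) →+ F :=
    (frobeniusSum p v).comp (Finsupp.mapRange.addMonoidHom (algebraMap E F).toAddMonoidHom)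
  suffices (c : F) ∈ Φ.range from this
  refine mem_of_forall_pow_mul_mem hb hx ?_ (fun k ρ ↦ ?_) c.2
  · rintro z hz _ ⟨w, rfl⟩
    refine ⟨(⟨z, hz⟩ : E) • w, ?_⟩
    have hw : ((⟨z, hz⟩ : E) • w).mapRange (algebraMap E F) (map_zero _) =
        z • w.mapRange (algebraMap E F) (map_zero _) := by
      ext; simp [IntermediateField.algebraMap_apply]
    exact (congrArg _ hw).trans (frobeniusSum_smul z _)
  · exact ⟨Finsupp.single (ρ, k) 1, by simp [Φ, v, frobeniusSum_single]⟩

end ReducedMonomials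

section SeparabilityOverLaurentPolynomials

open Polynomial

variable {F κ ι : Type*} [NormedField F] {K : Subfield F} {p : ℕ}

lemma IsCoefficientField.exists_residueMap (hK : IsCoefficientField K) :
    ∃ r : F → K, r 0 = 0 ∧ ∀ y, ‖y‖ ≤ 1 → ‖y - r y‖ < 1 := by
  have h (y : F) : ∃ c : K, (y = 0 → c = 0) ∧ (‖y‖ ≤ 1 → ‖y - c‖ < 1) := by
    rcases eq_or_ne y 0 with rfl | hy
    · exact ⟨0, fun _ ↦ rfl, by simp⟩
    · by_cases hy1 : ‖y‖ ≤ 1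
      · obtain ⟨c, hc, hlt⟩ := hK.exists_norm_sub_lt_one y hy1
        exact ⟨⟨c, hc⟩, fun h0 ↦ absurd h0 hy, fun _ ↦ hlt⟩
      · exact ⟨0, fun _ ↦ rfl, fun h ↦ absurd h hy1⟩
  choose r hr0 hr using h
  exact ⟨r, hr0 0 rfl, hr⟩

lemma eq_of_norm_pow_mul_reducedMonomial_eq [Fintype ι] {x : ι → F} (hx : IsValueBasis x)
    {ρ σ : ι → Fin p} {y z : F}
    (hy : y ≠ 0) (hz : z ≠ 0)
    (h : ‖y ^ p * reducedMonomial p x ρ‖ = ‖z ^ p * reducedMonomial p x σ‖) : ρ = σ := by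
  obtain ⟨e, he⟩ := hx.exists_norm_eq y hy
  obtain ⟨f, hf⟩ := hx.exists_norm_eq z hz
  have norm_eq (e : ι → ℤ) (ρ : ι → Fin p) :
      ‖laurentMonomial x e‖ ^ p * ‖reducedMonomial p x ρ‖ =
        ‖laurentMonomial x ((p : ℤ) • e + fun i ↦ (ρ i : ℤ))‖ := by
    rw [laurentMonomial_add hx.ne_zero, laurentMonomial_zsmul, norm_mul, zpow_natCast, norm_pow,
      reducedMonomial]
  rw [norm_mul, norm_mul, norm_pow, norm_pow, he, hf, norm_eq, norm_eq] at h
  funext i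
  have hi : (p : ℤ) * e i + ρ i = p * f i + σ i := congrFun (hx.norm_injective h) i
  have hmod := congrArg (· % (p : ℤ)) hi
  simp only [Int.mul_add_emod_self_left] at hmod
  rw [Int.emod_eq_of_lt (by positivity) (by exact_mod_cast (ρ i).2),
    Int.emod_eq_of_lt (by positivity) (by exact_mod_cast (σ i).2)] at hmod
  exact Fin.ext (by exact_mod_cast hmod)

variable [IsUltrametricDist F] [ExpChar F p]

lemma norm_frobeniusSum_lt_one {v : κ → F} (hv : ∀ k, ‖v k‖ ≤ 1) {w : κ →₀ F}
    (hw : ∀ k, ‖w k‖ < 1) : ‖frobeniusSum p v w‖ < 1 := by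
  rw [frobeniusSum_apply]
  rcases w.support.eq_empty_or_nonempty with h | h
  · simp [Finsupp.sum, h]
  obtain ⟨k, -, hk⟩ := IsUltrametricDist.exists_norm_finsetSum_le_of_nonempty h
    fun k ↦ w k ^ p * v k
  refine hk.trans_lt ?_
  rw [norm_mul, norm_pow]
  exact mul_lt_one_of_nonneg_of_lt_one_left (by positivity)
    (pow_lt_one₀ (norm_nonneg _) (hw k) (expChar_ne_zero F p)) (hv k)

variable {b : κ → K}

lemma norm_frobeniusSum_eq_one (hK : IsCoefficientField K)
    (hb : Function.Injective (frobeniusSum p b)) {w : κ →₀ F} (hw : ∀ k, ‖w k‖ ≤ 1) {k₀ : κ}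
    (hk₀ : ‖w k₀‖ = 1) : ‖frobeniusSum p (fun k ↦ (b k : F)) w‖ = 1 := by
  obtain ⟨r, hr0, hr⟩ := hK.exists_residueMap
  let c : κ →₀ K := w.mapRange r hr0
  let c' : κ →₀ F := c.mapRange K.subtype (map_zero _)
  have hc : c ≠ 0 := by
    rintro h
    have hr_k₀ : r (w k₀) = 0 := DFunLike.congr_fun h k₀
    simpa [hr_k₀, hk₀] using hr (w k₀) hk₀.le
  have norm_head : ‖frobeniusSum p (fun k ↦ (b k : F)) c'‖ = 1 := by
    have h := frobeniusSum_mapRange (p := p) K.subtype b c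
    exact (congrArg norm h).trans <| hK.isTriviallyNormed _ (frobeniusSum p b c).2 <|
      ZeroMemClass.coe_eq_zero.not.mpr <| (map_ne_zero_iff _ hb).mpr hc
  have norm_tail : ‖frobeniusSum p (fun k ↦ (b k : F)) (w - c')‖ < 1 :=
    norm_frobeniusSum_lt_one (fun k ↦ hK.isTriviallyNormed.norm_le_one (b k))
      fun k ↦ hr (w k) (hw k)
  rw [← sub_add_cancel w c', map_add, IsUltrametricDist.norm_add_eq_max_of_norm_ne_norm
    (norm_tail.trans_eq norm_head.symm).ne, norm_head, max_eq_right norm_tail.le]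

lemma exists_norm_frobeniusSum_eq (hK : IsCoefficientField K)
    (hb : Function.Injective (frobeniusSum p b)) {w : κ →₀ F} (hw : w ≠ 0) :
    ∃ y : F, y ≠ 0 ∧ ‖frobeniusSum p (fun k ↦ (b k : F)) w‖ = ‖y‖ ^ p := by
  obtain ⟨k₀, hk₀, hmax⟩ := w.support.exists_max_image (fun k ↦ ‖w k‖)
    (Finsupp.support_nonempty_iff.mpr hw)
  have hy : w k₀ ≠ 0 := Finsupp.mem_support_iff.mp hk₀
  have hy_pos : 0 < ‖w k₀‖ := norm_pos_iff.mpr hy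
  have hle (k : κ) : ‖w k‖ ≤ ‖w k₀‖ := by
    by_cases hk : k ∈ w.support
    · exact hmax k hk
    · simp [Finsupp.notMem_support_iff.mp hk]
  have h_one := norm_frobeniusSum_eq_one hK hb (w := (w k₀)⁻¹ • w) (k₀ := k₀)
    (fun k ↦ by simpa [inv_mul_le_one₀ hy_pos] using hle k) (by simp [hy])
  rw [frobeniusSum_smul, norm_mul, norm_pow, norm_inv, inv_pow,
    inv_mul_eq_one₀ (pow_pos hy_pos p).ne'] at h_one
  exact ⟨w k₀, hy, h_one.symm⟩

lemma injective_frobeniusSum_mul_reducedMonomial [Fintype ι] {x : ι → F}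
    (hK : IsCoefficientField K)
    (hx : IsValueBasis x) (hb : Function.Injective (frobeniusSum p b)) :
    Function.Injective (frobeniusSum p fun ρk : (ι → Fin p) × κ ↦
      (b ρk.2 : F) * reducedMonomial p x ρk.1) := by
  refine (injective_iff_map_eq_zero _).mpr fun w hw ↦ ?_
  by_contra hw0
  rw [frobeniusSum_mul_eq_sum_curry (fun k ↦ (b k : F))] at hw
  have hcoord : ∀ ρ ∈ w.curry.support, ∃ y : F, y ≠ 0 ∧
      ‖frobeniusSum p (fun k ↦ (b k : F)) (w.curry ρ) * reducedMonomial p x ρ‖ =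
        ‖y ^ p * reducedMonomial p x ρ‖ := fun ρ hρ ↦ by
    obtain ⟨y, hy, hnorm⟩ := exists_norm_frobeniusSum_eq hK hb (Finsupp.mem_support_iff.mp hρ)
    exact ⟨y, hy, by rw [norm_mul, hnorm, norm_mul, norm_pow]⟩
  have hinj : Set.InjOn (fun ρ ↦ ‖frobeniusSum p (fun k ↦ (b k : F)) (w.curry ρ) *
      reducedMonomial p x ρ‖) w.curry.support := fun ρ hρ σ hσ h ↦ by
    obtain ⟨y, hy, hy_norm⟩ := hcoord ρ hρ
    obtain ⟨z, hz, hz_norm⟩ := hcoord σ hσ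
    exact eq_of_norm_pow_mul_reducedMonomial_eq hx hy hz
      (hy_norm.symm.trans (h.trans hz_norm))
  have hne : w.curry.support.Nonempty := Finsupp.support_nonempty_iff.mpr <|
    (map_ne_zero_iff Finsupp.curryAddEquiv Finsupp.curryAddEquiv.injective).mpr hw0
  obtain ⟨ρ, hρ, hnorm, -⟩ := exists_norm_sum_eq hne hinj
  obtain ⟨y, hy, hy_norm⟩ := hcoord ρ hρ
  rw [hw, norm_zero, hy_norm, eq_comm, norm_eq_zero] at hnorm
  exact mul_ne_zero (pow_ne_zero p hy) (laurentMonomial_ne_zero hx.ne_zero _) hnorm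

theorem isSeparable_adjoin_range [Fintype ι] {x : ι → F} (hK : IsCoefficientField K)
    (hx : IsValueBasis x) [FiniteDimensional (IntermediateField.adjoin K (Set.range x)) F] :
    Algebra.IsSeparable (IntermediateField.adjoin K (Set.range x)) F := by
  rcases CharP.exists' F with _ | ⟨p, _, _⟩
  · have := charZero_of_injective_algebraMap
      (algebraMap (IntermediateField.adjoin K (Set.range x)) F).injective
    infer_instance
  · obtain ⟨κ, b, hb⟩ := exists_bijective_frobeniusSum p K
    exact isSeparable_of_injective_frobeniusSum Fact.out
      (injective_frobeniusSum_mul_reducedMonomial hK hx hb.injective)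
      (exists_frobeniusSum_mul_reducedMonomial_eq hb.surjective hx.ne_zero)

open scoped IntermediateField.algebraAdjoinAdjoin in
theorem exists_polynomial_eval_eq_zero [Fintype ι] {x : ι → F} (hK : IsCoefficientField K)
    (hx : IsValueBasis x) [FiniteDimensional (IntermediateField.adjoin K (Set.range x)) F]
    (ζ : F) : ∃ f : F[X], (∀ i, f.coeff i ∈ Algebra.adjoin K (Set.range x)) ∧
      f.eval ζ = 0 ∧ f.derivative.eval ζ ≠ 0 := by
  let E := IntermediateField.adjoin K (Set.range x)
  let R := Algebra.adjoin K (Set.range x)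
  have := isSeparable_adjoin_range hK hx
  obtain ⟨s, hs, h⟩ := IsLocalization.integerNormalization_spec (nonZeroDivisors R) (minpoly E ζ)
  set g := IsLocalization.integerNormalization (nonZeroDivisors R) (minpoly E ζ)
  have hg : g.map (algebraMap R F) = C (s : F) * (minpoly E ζ).map (algebraMap E F) := by
    rw [IsScalarTower.algebraMap_eq R E F, ← Polynomial.map_map, h, Algebra.smul_def,
      Polynomial.map_mul, Polynomial.algebraMap_apply, map_C]
    rfl
  have hs0 : (s : F) ≠ 0 := ZeroMemClass.coe_eq_zero.not.mpr (nonZeroDivisors.ne_zero hs)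
  refine ⟨g.map (algebraMap R F), fun i ↦ ?_, ?_, ?_⟩
  · rw [coeff_map]; exact (g.coeff i).2
  · rw [hg, eval_mul, eval_map_algebraMap, minpoly.aeval, mul_zero]
  · rw [hg, derivative_C_mul, eval_mul, eval_C, derivative_map, eval_map_algebraMap]
    exact mul_ne_zero hs0 ((Algebra.IsSeparable.isSeparable E ζ).aeval_derivative_ne_zero
      (minpoly.aeval E ζ))

end SeparabilityOverLaurentPolynomials

/-! ### Hensel presentations -/

section RescaledTaylor

open Polynomial

variable {R : Type*} [CommRing R] {S : Subring R} in
lemma coeff_taylor_mem {f : R[X]} (hf : ∀ n, f.coeff n ∈ S) {a : R} (ha : a ∈ S) (n : ℕ) :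
    (taylor a f).coeff n ∈ S := by
  rw [taylor_coeff, eval_eq_sum_range]
  refine sum_mem fun i _ ↦ mul_mem ?_ (pow_mem ha _)
  rw [hasseDeriv_coeff]
  exact mul_mem (natCast_mem S _) (hf _)

variable {F : Type*} [Field F] {f : F[X]} {a π : F}

/-- The polynomial `f(a + πY) / π²` in `Y`. -/
noncomputable def rescaledTaylor (f : F[X]) (a π : F) : F[X] :=
  C (π ^ 2)⁻¹ * (taylor a f).comp (C π * X)

lemma coeff_rescaledTaylor (n : ℕ) :
    (rescaledTaylor f a π).coeff n = (π ^ 2)⁻¹ * ((taylor a f).coeff n * π ^ n) := by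
  rw [rescaledTaylor, coeff_C_mul, comp_C_mul_X_coeff]

lemma coeff_zero_rescaledTaylor (ha : f.eval a = 0) : (rescaledTaylor f a π).coeff 0 = 0 := by
  simp [coeff_rescaledTaylor, ha]

lemma coeff_one_rescaledTaylor (hπ : π ≠ 0) :
    (rescaledTaylor f a π).coeff 1 = f.derivative.eval a / π := by
  rw [coeff_rescaledTaylor, taylor_coeff_one]
  field_simp

lemma taylor_rescaledTaylor (u : F) :
    taylor u (rescaledTaylor f a π) = rescaledTaylor f (a + π * u) π := by
  simp only [rescaledTaylor, taylor_apply, mul_comp, C_comp, comp_assoc, add_comp, X_comp, C_add,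
    C_mul]
  ring_nf

lemma eval_rescaledTaylor_eq_zero {u : F} (h : f.eval (a + π * u) = 0) :
    (rescaledTaylor f a π).eval u = 0 := by
  rw [← taylor_coeff_zero, taylor_rescaledTaylor, coeff_zero_rescaledTaylor h]

lemma eval_derivative_rescaledTaylor (hπ : π ≠ 0) (u : F) :
    (rescaledTaylor f a π).derivative.eval u = f.derivative.eval (a + π * u) / π := by
  rw [← taylor_coeff_one, taylor_rescaledTaylor, coeff_one_rescaledTaylor hπ]

end RescaledTaylor

section HenselPresentation

open Polynomial

variable {F : Type*} [NormedField F]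

/-- A presentation of `ζ` over the ring `A` as `b + πu`, where `b, π ∈ A` and `u` is an integral
element that is a simple root, also modulo the maximal ideal, of a polynomial `g` over `A`. -/
structure HenselPresentation (A : Subring F) (ζ : F) where
  b : F
  π : F
  u : F
  g : F[X]
  b_mem : b ∈ A
  π_mem : π ∈ A
  coeff_mem : ∀ n, g.coeff n ∈ A
  eq_add_mul : ζ = b + π * u
  norm_le_one : ‖u‖ ≤ 1
  eval_eq_zero : g.eval u = 0
  norm_eval_derivative : ‖g.derivative.eval u‖ = 1

variable [IsUltrametricDist F]

/-- The valuation ring of an ultrametric field. -/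
noncomputable def normUnitBall (F : Type*) [NormedField F] [IsUltrametricDist F] : Subring F :=
  (NormedField.valuation (K := F)).integer

lemma mem_normUnitBall {y : F} : y ∈ normUnitBall F ↔ ‖y‖ ≤ 1 := Iff.rfl

variable {f : F[X]} {ζ π : F}

lemma norm_eval_derivative_le_one (hf : ∀ n, ‖f.coeff n‖ ≤ 1) (hζ : ‖ζ‖ ≤ 1) :
    ‖f.derivative.eval ζ‖ ≤ 1 := by
  rw [← taylor_coeff_one]
  exact coeff_taylor_mem (S := normUnitBall F) hf hζ 1

lemma norm_coeff_rescaledTaylor_le_one (hf : ∀ n, ‖f.coeff n‖ ≤ 1) (hζ : ‖ζ‖ ≤ 1)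
    (hroot : f.eval ζ = 0) (hπ : ‖f.derivative.eval ζ‖ = ‖π‖) (hπ0 : π ≠ 0) (n : ℕ) :
    ‖(rescaledTaylor f ζ π).coeff n‖ ≤ 1 := by
  match n with
  | 0 => simp [coeff_zero_rescaledTaylor hroot]
  | 1 => rw [coeff_one_rescaledTaylor hπ0, norm_div, hπ, div_self (norm_ne_zero_iff.mpr hπ0)]
  | n + 2 =>
    have hcoeff : (rescaledTaylor f ζ π).coeff (n + 2) = (taylor ζ f).coeff (n + 2) * π ^ n := by
      rw [coeff_rescaledTaylor]
      field_simp
      ring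
    rw [hcoeff, ← mem_normUnitBall]
    exact mul_mem (coeff_taylor_mem (S := normUnitBall F) hf hζ _)
      (pow_mem (hπ.symm.trans_le (norm_eval_derivative_le_one hf hζ)) n)

lemma nonempty_henselPresentation_of_norm_sub_le {A : Subring F} (hfA : ∀ n, f.coeff n ∈ A)
    (hf : ∀ n, ‖f.coeff n‖ ≤ 1) (hζ : ‖ζ‖ ≤ 1) (hroot : f.eval ζ = 0)
    (hder : ‖f.derivative.eval ζ‖ = ‖π‖) (hπ0 : π ≠ 0) (hπA : π ∈ A) (hπA' : π⁻¹ ∈ A) {b : F}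
    (hb : b ∈ A) (hbζ : ‖ζ - b‖ ≤ ‖π‖) : Nonempty (HenselPresentation (A ⊓ normUnitBall F) ζ) := by
  let u := (ζ - b) / π
  have hu : ‖u‖ ≤ 1 := by
    rw [norm_div]; exact div_le_one_of_le₀ hbζ (norm_nonneg π)
  have hζu : ζ = b + π * u := by rw [mul_div_cancel₀ _ hπ0, add_sub_cancel]
  have hbu : b = ζ + π * -u := by rw [hζu]; ring
  have hπ : ‖π‖ ≤ 1 := hder.symm.trans_le (norm_eval_derivative_le_one hf hζ)
  have hb1 : b ∈ normUnitBall F := by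
    rw [hbu]; exact add_mem hζ (mul_mem hπ (neg_mem (mem_normUnitBall.mpr hu)))
  refine ⟨⟨b, π, u, rescaledTaylor f b π, ⟨hb, hb1⟩, ⟨hπA, hπ⟩, fun n ↦ ⟨?_, ?_⟩, hζu, hu,
    eval_rescaledTaylor_eq_zero (hζu ▸ hroot), ?_⟩⟩
  · rw [coeff_rescaledTaylor, ← inv_pow]
    exact mul_mem (pow_mem hπA' 2) (mul_mem (coeff_taylor_mem hfA hb n) (pow_mem hπA n))
  · rw [hbu, ← taylor_rescaledTaylor]
    exact coeff_taylor_mem (S := normUnitBall F)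
      (norm_coeff_rescaledTaylor_le_one hf hζ hroot hder hπ0)
      (neg_mem (mem_normUnitBall.mpr hu)) n
  · rw [eval_derivative_rescaledTaylor hπ0, ← hζu, norm_div, hder,
      div_self (norm_ne_zero_iff.mpr hπ0)]

variable {ι : Type*} [Fintype ι] [Nonempty ι] {K : Subfield F} {x : ι → F}

lemma exists_polynomial_norm_coeff_le_one (hK : IsCoefficientField K) (hx : IsValueBasis x)
    [FiniteDimensional (IntermediateField.adjoin K (Set.range x)) F] (ζ : F) :
    ∃ f : F[X], (∀ n, f.coeff n ∈ Algebra.adjoin K (Set.range x)) ∧ (∀ n, ‖f.coeff n‖ ≤ 1) ∧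
      f.eval ζ = 0 ∧ f.derivative.eval ζ ≠ 0 := by
  obtain ⟨f, hf_mem, hf_root, hf_der⟩ := exists_polynomial_eval_eq_zero hK hx ζ
  obtain ⟨i⟩ := ‹Nonempty ι›
  let B := ∑ n ∈ f.support, ‖f.coeff n‖
  have hB (n : ℕ) : ‖f.coeff n‖ ≤ 1 + B := by
    by_cases hn : n ∈ f.support
    · exact (Finset.single_le_sum (f := fun n ↦ ‖f.coeff n‖) (fun _ _ ↦ norm_nonneg _) hn).trans
        (by linarith)
    · rw [notMem_support_iff.mp hn, norm_zero]; positivity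
  obtain ⟨N, hN⟩ := exists_pow_lt_of_lt_one (show 0 < (1 + B)⁻¹ by positivity) (hx.norm_lt_one i)
  refine ⟨C (x i ^ N) * f, fun n ↦ ?_, fun n ↦ ?_, ?_, ?_⟩
  · rw [coeff_C_mul]
    exact mul_mem (pow_mem (Algebra.subset_adjoin (Set.mem_range_self i)) N) (hf_mem n)
  · rw [coeff_C_mul, norm_mul, norm_pow]
    calc ‖x i‖ ^ N * ‖f.coeff n‖ ≤ (1 + B)⁻¹ * (1 + B) := by gcongr; exact hB n
      _ = 1 := inv_mul_cancel₀ (by positivity)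
  · rw [eval_mul, hf_root, mul_zero]
  · rw [derivative_C_mul, eval_mul, eval_C]
    exact mul_ne_zero (pow_ne_zero N (hx.ne_zero i)) hf_der

theorem nonempty_henselPresentation (hK : IsCoefficientField K) (hx : IsValueBasis x)
    [FiniteDimensional (IntermediateField.adjoin K (Set.range x)) F] {ζ : F} (hζ : ‖ζ‖ ≤ 1) :
    Nonempty (HenselPresentation ((laurentSubalgebra K x).toSubring ⊓ normUnitBall F) ζ) := by
  classical
  obtain ⟨f, hf_mem, hf, hroot, hder⟩ := exists_polynomial_norm_coeff_le_one hK hx ζ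
  obtain ⟨e, he⟩ := hx.exists_norm_eq _ hder
  have hπ0 := laurentMonomial_ne_zero hx.ne_zero e
  have inv_mem (e : ι → ℤ) : (laurentMonomial x e)⁻¹ ∈ laurentSubalgebra K x :=
    laurentMonomial_neg x e ▸ laurentMonomial_mem_laurentSubalgebra x (-e)
  obtain ⟨b, hb, hbζ⟩ := Metric.mem_closure_iff.mp (dense_laurentSubalgebra hK hx ζ)
    ‖laurentMonomial x e‖ (norm_pos_iff.mpr hπ0)
  have hle := (RefinesTo.refl x).adjoin_range_le_laurentSubalgebra (K := K)
  exact nonempty_henselPresentation_of_norm_sub_le (A := (laurentSubalgebra K x).toSubring)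
    (fun n ↦ hle (hf_mem n)) hf hζ hroot he hπ0
    (laurentMonomial_mem_laurentSubalgebra x e) (inv_mem e) hb
    ((dist_eq_norm ζ b).symm.trans_le hbζ.le)

end HenselPresentation

section HenselSystem

open MvPolynomial

variable {F : Type*} [NormedField F] {A : Subring F}

lemma HenselPresentation.exists_finset_nonempty {ζ : F} (h : HenselPresentation A ζ) :
    ∃ S : Finset F, (S : Set F) ⊆ A ∧
      ∀ B : Subring F, (S : Set F) ⊆ B → Nonempty (HenselPresentation B ζ) := by
  classical
  refine ⟨insert h.b (insert h.π h.g.coeffs), fun y hy ↦ ?_, fun B hB ↦ ⟨{ h with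
    b_mem := hB (by simp), π_mem := hB (by simp), coeff_mem := fun n ↦ ?_ }⟩⟩
  · simp only [Finset.coe_insert, Set.mem_insert_iff, Finset.mem_coe,
      Polynomial.mem_coeffs_iff] at hy
    obtain rfl | rfl | ⟨n, -, rfl⟩ := hy
    exacts [h.b_mem, h.π_mem, h.coeff_mem n]
  · by_cases hn : h.g.coeff n = 0
    · exact hn ▸ zero_mem B
    · exact hB (by simp [Polynomial.coeff_mem_coeffs hn])

lemma castAdd_lt_natAdd {n : ℕ} (k : Fin n) : Fin.castAdd n k < Fin.natAdd n k := by
  have := k.pos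
  rw [Fin.lt_def, Fin.val_castAdd, Fin.val_natAdd]
  lia

variable {n : ℕ} {ζ : Fin n → F}

/-- The triangular system `g k (X k) = 0`, `X (n + k) = b k + π k * X k` attached to Hensel
presentations `ζ k = b k + π k * u k`; its solution is `(u, ζ)`. -/
noncomputable def henselSystem (h : ∀ k, HenselPresentation A (ζ k)) :
    Fin (n + n) → MvPolynomial (Fin (n + n)) F :=
  Fin.append (fun k ↦ (h k).g.toMvPolynomial (Fin.castAdd n k)) fun k ↦
    X (Fin.natAdd n k) - C (h k).b - C (h k).π * X (Fin.castAdd n k)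

variable (h : ∀ k, HenselPresentation A (ζ k))

lemma coeff_henselSystem_mem (i : Fin (n + n)) (m : Fin (n + n) →₀ ℕ) :
    (henselSystem h i).coeff m ∈ A := by
  have hX (j : Fin (n + n)) : X j ∈ (map (σ := Fin (n + n)) A.subtype).range := ⟨X j, map_X _ j⟩
  have hC {a : F} (ha : a ∈ A) : C a ∈ (map (σ := Fin (n + n)) A.subtype).range :=
    ⟨C ⟨a, ha⟩, map_C _ _⟩
  suffices hmem : henselSystem h i ∈ (map (σ := Fin (n + n)) A.subtype).range by
    obtain ⟨q, hq⟩ := hmem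
    rw [← hq, coeff_map]
    exact (q.coeff m).2
  cases i using Fin.addCases with
  | left k =>
    rw [henselSystem, Fin.append_left, Polynomial.toMvPolynomial, Polynomial.aeval_eq_sum_range]
    refine sum_mem fun i _ ↦ ?_
    rw [smul_eq_C_mul]
    exact mul_mem (hC ((h k).coeff_mem i)) (pow_mem (hX _) _)
  | right k =>
    rw [henselSystem, Fin.append_right]
    exact sub_mem (sub_mem (hX _) (hC (h k).b_mem)) (mul_mem (hC (h k).π_mem) (hX _))

lemma henselSystem_mem_supported (i : Fin (n + n)) :
    henselSystem h i ∈ supported F (Set.Iic i) := by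
  cases i using Fin.addCases with
  | left k =>
    rw [henselSystem, Fin.append_left, Polynomial.toMvPolynomial, Polynomial.aeval_eq_sum_range]
    exact sum_mem fun i _ ↦ Subalgebra.smul_mem _
      (pow_mem (X_mem_supported.mpr Set.self_mem_Iic) _) _
  | right k =>
    rw [henselSystem, Fin.append_right]
    exact sub_mem (sub_mem (X_mem_supported.mpr Set.self_mem_Iic) (Subalgebra.algebraMap_mem _ _))
      (mul_mem (Subalgebra.algebraMap_mem _ _)
        (X_mem_supported.mpr (castAdd_lt_natAdd k).le))

lemma notMem_vars_henselSystem {i j : Fin (n + n)} (hij : i < j) :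
    j ∉ (henselSystem h i).vars := fun hj ↦
  hij.not_ge (mem_supported.mp (henselSystem_mem_supported h i) hj)

lemma eval_henselSystem (i : Fin (n + n)) :
    eval (Fin.append (fun k ↦ (h k).u) ζ) (henselSystem h i) = 0 := by
  cases i using Fin.addCases with
  | left k =>
    rw [henselSystem, Fin.append_left, eval_toMvPolynomial, Fin.append_left]
    exact (h k).eval_eq_zero
  | right k =>
    simp only [henselSystem, map_sub, map_mul, eval_X, eval_C, Fin.append_right, Fin.append_left]
    exact sub_eq_zero.mpr (sub_eq_of_eq_add' (h k).eq_add_mul)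

lemma norm_eval_pderiv_henselSystem (i : Fin (n + n)) :
    ‖eval (Fin.append (fun k ↦ (h k).u) ζ) (pderiv i (henselSystem h i))‖ = 1 := by
  cases i using Fin.addCases with
  | left k =>
    rw [henselSystem, Fin.append_left, Polynomial.toMvPolynomial, Derivation.map_aeval,
      pderiv_X_self, smul_eq_mul, mul_one, ← Polynomial.toMvPolynomial, eval_toMvPolynomial,
      Fin.append_left]
    exact (h k).norm_eval_derivative
  | right k =>
    have hk := pderiv_X_of_ne (R := F) (castAdd_lt_natAdd k).ne
    simp only [henselSystem, Fin.append_right, map_sub, pderiv_C_mul, pderiv_X_self, pderiv_C, hk]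
    simp

lemma norm_det_jacobian_henselSystem :
    ‖(Matrix.of fun i j : Fin (n + n) ↦
      eval (Fin.append (fun k ↦ (h k).u) ζ) (pderiv j (henselSystem h i))).det‖ = 1 := by
  rw [Matrix.det_of_isLowerTriangular, norm_prod]
  · exact Finset.prod_eq_one fun i _ ↦ norm_eval_pderiv_henselSystem h i
  · intro i j (hij : i < j)
    rw [Matrix.of_apply, pderiv_eq_zero_of_notMem_vars (notMem_vars_henselSystem h hij), map_zero]

end HenselSystem

section Assemble

variable {ι F : Type*} [Fintype ι] [Nonempty ι] [NormedField F] [IsUltrametricDist F]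
  {K : Subfield F} {x : ι → F}

theorem exists_isValueBasis_henselPresentation (hK : IsCoefficientField K) (hx : IsValueBasis x)
    [FiniteDimensional (IntermediateField.adjoin K (Set.range x)) F] {κ : Type*} [Finite κ]
    (ζ : κ → F) (hζ : ∀ k, ‖ζ k‖ ≤ 1) :
    ∃ x' : ι → F, IsValueBasis x' ∧
      ∀ k, Nonempty (HenselPresentation (Algebra.adjoin K (Set.range x')).toSubring (ζ k)) := by
  classical
  have := Fintype.ofFinite κ
  have h (k : κ) := nonempty_henselPresentation hK hx (hζ k)
  choose S hS_mem hS using fun k ↦ (h k).some.exists_finset_nonempty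
  obtain ⟨x', hx', -, hx'S⟩ := exists_refinesTo_mem_adjoin hK.isTriviallyNormed hx
    (Finset.univ.biUnion S) fun y hy ↦ by
      obtain ⟨k, -, hk⟩ := Finset.mem_biUnion.mp hy
      exact hS_mem k hk
  exact ⟨x', hx', fun k ↦ hS k _ fun y hy ↦
    hx'S y (Finset.mem_biUnion.mpr ⟨k, Finset.mem_univ k, hy⟩)⟩

end Assemble

/-! ### Existence of value bases -/

section FunctionField

variable {F : Type*} [Field F] {K : Subfield F}

lemma isTranscendenceBasis_of_algebraicIndependent {ι : Type*} [Finite ι] {t x : ι → F}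
    (ht : IsTranscendenceBasis K t) (hx : AlgebraicIndependent K x) :
    IsTranscendenceBasis K x :=
  hx.isTranscendenceBasis_of_lift_trdeg_le_of_finite ht.lift_cardinalMk_eq_trdeg.ge

lemma finiteDimensional_adjoin_range {ι : Type*} {x : ι → F} (hx : IsTranscendenceBasis K x)
    {S : Set F} (hS_fin : S.Finite) (hS : IntermediateField.adjoin K S = ⊤) :
    FiniteDimensional (IntermediateField.adjoin K (Set.range x)) F := by
  have := hx.isAlgebraic_field
  have := hS_fin.to_subtype
  have hfin := IntermediateField.finiteDimensional_adjoin
    (K := IntermediateField.adjoin K (Set.range x)) (S := S)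
    fun y _ ↦ Algebra.IsIntegral.isIntegral y
  rw [IntermediateField.adjoin_eq_top_of_adjoin_eq_top K hS] at hfin
  exact IntermediateField.topEquiv.toLinearEquiv.finiteDimensional

end FunctionField

section NormPow

variable {F : Type*} [NormedField F] [IsUltrametricDist F]

/-- A vanishing sum has two terms of equal norm; apply this to the minimal polynomial of `y`. -/
lemma exists_norm_pow_eq_norm_algebraMap (E : Type*) [Field E] [Algebra E F]
    [FiniteDimensional E F] {y : F} (hy : y ≠ 0) :
    ∃ k ∈ Set.Icc 1 (Module.finrank E F), ∃ a : E, a ≠ 0 ∧ ‖y‖ ^ k = ‖algebraMap E F a‖ := by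
  have hy_int : IsIntegral E y := Algebra.IsIntegral.isIntegral y
  set p := minpoly E y
  have hcoeff {i : ℕ} (hi : i ∈ p.support) : algebraMap E F (p.coeff i) ≠ 0 := by simpa using hi
  have hsum : ∑ i ∈ p.support, algebraMap E F (p.coeff i) * y ^ i = 0 := by
    rw [← minpoly.aeval E y, Polynomial.aeval_def, Polynomial.eval₂_eq_sum, Polynomial.sum_def]
  obtain ⟨i, hi, j, hj, hij, heq⟩ : ∃ i ∈ p.support, ∃ j ∈ p.support, i < j ∧
      ‖algebraMap E F (p.coeff i) * y ^ i‖ = ‖algebraMap E F (p.coeff j) * y ^ j‖ := by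
    by_contra! hne
    obtain ⟨i, hi, hnorm, -⟩ := exists_norm_sum_eq
      (Polynomial.support_nonempty.mpr (minpoly.ne_zero hy_int))
      (f := fun i ↦ algebraMap E F (p.coeff i) * y ^ i) fun i hi j hj hij ↦ by
        rcases lt_trichotomy i j with h | h | h
        exacts [(hne i hi j hj h hij).elim, h, (hne j hj i hi h hij.symm).elim]
    rw [hsum, norm_zero] at hnorm
    exact mul_ne_zero (hcoeff hi) (pow_ne_zero _ hy) (norm_eq_zero.mp hnorm.symm)
  have hjN : j ≤ Module.finrank E F :=
    (Polynomial.le_natDegree_of_mem_supp j hj).trans (minpoly.natDegree_le y)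
  refine ⟨j - i, ⟨by lia, by lia⟩, p.coeff i / p.coeff j,
    div_ne_zero (by simpa using hi) (by simpa using hj), ?_⟩
  rw [map_div₀, norm_div, eq_div_iff (norm_ne_zero_iff.mpr (hcoeff hj)),
    ← mul_right_inj' (pow_ne_zero i (norm_ne_zero_iff.mpr hy)), ← mul_assoc, ← pow_add,
    Nat.add_sub_cancel' hij.le, mul_comm, mul_comm (‖y‖ ^ i), ← norm_pow, ← norm_pow, ← norm_mul,
    ← norm_mul, heq]

variable {ι : Type*} [Fintype ι] {K : Subfield F} {x : ι → F}

lemma exists_norm_eq_of_mem_fieldAdjoin (hK : IsTriviallyNormed K) (hx : ∀ i, x i ≠ 0)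
    (hinj : Function.Injective fun e ↦ ‖laurentMonomial x e‖) {y : F}
    (hy : y ∈ IntermediateField.adjoin K (Set.range x)) (hy0 : y ≠ 0) :
    ∃ e, ‖y‖ = ‖laurentMonomial x e‖ := by
  obtain ⟨r, hr, s, hs, rfl⟩ := IntermediateField.mem_adjoin_iff_div.mp hy
  have hrs := div_ne_zero_iff.mp hy0
  obtain ⟨μ, hμ⟩ := exists_norm_eq_of_mem_adjoin hK hinj hr hrs.1
  obtain ⟨ν, hν⟩ := exists_norm_eq_of_mem_adjoin hK hinj hs hrs.2
  refine ⟨(fun i ↦ (μ i : ℤ)) - fun i ↦ (ν i : ℤ), ?_⟩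
  rw [laurentMonomial_sub hx, norm_div, norm_div, hμ, hν]
  simp only [laurentMonomial, zpow_natCast]

lemma exists_norm_pow_eq_norm_laurentMonomial (hK : IsTriviallyNormed K) (hx : ∀ i, x i ≠ 0)
    (hinj : Function.Injective fun e ↦ ‖laurentMonomial x e‖)
    [FiniteDimensional (IntermediateField.adjoin K (Set.range x)) F] :
    ∃ N : ℕ, N ≠ 0 ∧ ∀ y : F, y ≠ 0 → ∃ e, ‖y‖ ^ N = ‖laurentMonomial x e‖ := by
  refine ⟨_, Nat.factorial_ne_zero (Module.finrank (IntermediateField.adjoin K (Set.range x)) F),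
    fun y hy ↦ ?_⟩
  obtain ⟨k, ⟨hk1, hkN⟩, a, ha, hya⟩ :=
    exists_norm_pow_eq_norm_algebraMap (IntermediateField.adjoin K (Set.range x)) hy
  obtain ⟨e, he⟩ := exists_norm_eq_of_mem_fieldAdjoin hK hx hinj a.2 (by simpa using ha)
  obtain ⟨l, hl⟩ := Nat.dvd_factorial hk1 hkN
  refine ⟨(l : ℤ) • e, ?_⟩
  rw [hl, pow_mul, hya, laurentMonomial_zsmul, zpow_natCast, norm_pow, ← he]
  rfl

end NormPow

section Lattice

variable {ι : Type*}

lemma nonempty_basis_of_smul_mem [Finite ι] {L : Submodule ℤ (ι → ℤ)} {N : ℤ} (hN : N ≠ 0)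
    (hL : ∀ e, N • e ∈ L) : Nonempty (Module.Basis ι ℤ L) := by
  have := Fintype.ofFinite ι
  obtain ⟨n, ⟨B⟩⟩ := Submodule.nonempty_basis_of_pid (Pi.basisFun ℤ ι) L
  have hle : Fintype.card ι ≤ Module.finrank ℤ L := by
    rw [← Module.finrank_fintype_fun_eq_card ℤ]
    exact LinearMap.finrank_le_finrank_of_injective
      (f := (LinearMap.lsmul ℤ (ι → ℤ) N).codRestrict L hL)
      fun a b hab ↦ smul_right_injective _ hN (congrArg Subtype.val hab)
  have hge : Module.finrank ℤ L ≤ Fintype.card ι :=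
    Module.finrank_fintype_fun_eq_card ℤ (η := ι) ▸ Submodule.finrank_le L
  have hn : Fintype.card (Fin n) = Fintype.card ι :=
    (Module.finrank_eq_card_basis B).symm.trans (hge.antisymm hle)
  exact ⟨B.reindex (Fintype.equivOfCardEq hn)⟩

variable {F : Type*} [NormedField F] [Fintype ι] {x : ι → F}

/-- The lattice of exponents `e` such that `‖x ^ e‖` is the `N`-th power of a value; if all `N`-th
powers of values arise in this way, it is isomorphic to the value group. -/
def powExponentLattice (hx : ∀ i, x i ≠ 0) (N : ℕ) : Submodule ℤ (ι → ℤ) :=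
  AddSubgroup.toIntSubmodule
    { carrier := {e | ∃ y : F, y ≠ 0 ∧ ‖y‖ ^ N = ‖laurentMonomial x e‖}
      zero_mem' := ⟨1, one_ne_zero, by simp⟩
      add_mem' := by
        rintro a b ⟨y, hy, hya⟩ ⟨z, hz, hzb⟩
        exact ⟨y * z, mul_ne_zero hy hz, by
          rw [laurentMonomial_add hx, norm_mul, norm_mul, mul_pow, hya, hzb]⟩
      neg_mem' := by
        rintro a ⟨y, hy, hya⟩
        exact ⟨y⁻¹, inv_ne_zero hy, by
          rw [laurentMonomial_neg, norm_inv, norm_inv, inv_pow, hya]⟩ }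

lemma mem_powExponentLattice {hx : ∀ i, x i ≠ 0} {N : ℕ} {e : ι → ℤ} :
    e ∈ powExponentLattice hx N ↔ ∃ y : F, y ≠ 0 ∧ ‖y‖ ^ N = ‖laurentMonomial x e‖ :=
  Iff.rfl

lemma nonempty_basis_powExponentLattice (hx : ∀ i, x i ≠ 0) {N : ℕ} (hN : N ≠ 0) :
    Nonempty (Module.Basis ι ℤ (powExponentLattice hx N)) :=
  nonempty_basis_of_smul_mem (Int.natCast_ne_zero.mpr hN) fun e ↦
    mem_powExponentLattice.mpr ⟨laurentMonomial x e, laurentMonomial_ne_zero hx e, by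
      rw [laurentMonomial_zsmul, zpow_natCast, norm_pow]⟩

lemma norm_laurentMonomial_pow_eq (hx : ∀ i, x i ≠ 0) {N : ℕ} {y : ι → F} {b : ι → ι → ℤ}
    (hy : ∀ i, ‖y i‖ ^ N = ‖laurentMonomial x (b i)‖) (c : ι → ℤ) :
    ‖laurentMonomial y c‖ ^ N = ‖laurentMonomial x (∑ i, c i • b i)‖ := by
  rw [laurentMonomial_sum hx, laurentMonomial, norm_prod, norm_prod, ← Finset.prod_pow]
  refine Finset.prod_congr rfl fun i _ ↦ ?_
  rw [laurentMonomial_zsmul, norm_zpow, norm_zpow, ← hy, ← zpow_natCast, ← zpow_natCast, zpow_comm]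

lemma exists_norm_laurentMonomial_basis (hx : ∀ i, x i ≠ 0)
    (hind : ∀ e, ‖laurentMonomial x e‖ = 1 → e = 0) {N : ℕ} (hN : N ≠ 0)
    (hpow : ∀ y : F, y ≠ 0 → ∃ e, ‖y‖ ^ N = ‖laurentMonomial x e‖) :
    ∃ y : ι → F, (∀ i, y i ≠ 0) ∧ (∀ z : F, z ≠ 0 → ∃ c, ‖z‖ = ‖laurentMonomial y c‖) ∧
      ∀ c, ‖laurentMonomial y c‖ = 1 → c = 0 := by
  obtain ⟨B⟩ := nonempty_basis_powExponentLattice hx hN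
  choose y hy0 hy using fun i ↦ mem_powExponentLattice.mp (B i).2
  have hnorm := norm_laurentMonomial_pow_eq hx hy
  have hcoe (c : ι → ℤ) : ∑ i, c i • (B i : ι → ℤ) = ((∑ i, c i • B i : powExponentLattice hx N) :
      ι → ℤ) := by simp
  refine ⟨y, hy0, fun z hz ↦ ?_, fun c hc ↦ ?_⟩
  · obtain ⟨e, he⟩ := hpow z hz
    refine ⟨B.repr ⟨e, mem_powExponentLattice.mpr ⟨z, hz, he⟩⟩,
      (pow_left_inj₀ (norm_nonneg _) (norm_nonneg _) hN).mp ?_⟩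
    rw [hnorm, hcoe, B.sum_repr]
    exact he
  · have hzero : ∑ i, c i • B i = 0 := Subtype.ext <| (hcoe c).symm.trans <| hind _ <| by
      rw [← hnorm, hc, one_pow]
    exact funext (Fintype.linearIndependent_iff.mp B.linearIndependent c hzero)

lemma exists_isValueBasis_of_norm_basis (hx : ∀ i, x i ≠ 0)
    (hgen : ∀ y : F, y ≠ 0 → ∃ e, ‖y‖ = ‖laurentMonomial x e‖)
    (hind : ∀ e, ‖laurentMonomial x e‖ = 1 → e = 0) : ∃ x' : ι → F, IsValueBasis x' := by
  classical
  have hcoord (i : ι) : ‖x i‖ ≠ 1 := fun h ↦ by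
    have := hind (Pi.single i 1) (by rw [laurentMonomial_single, zpow_one, h])
    simpa using congrFun this i
  let s (i : ι) : ℤ := if ‖x i‖ < 1 then 1 else -1
  have hs : s * s = 1 := by ext i; dsimp [s]; split_ifs <;> rfl
  have hmul (e : ι → ℤ) : laurentMonomial (fun i ↦ x i ^ s i) e = laurentMonomial x (s * e) := by
    simp only [laurentMonomial, Pi.mul_apply, zpow_mul]
  refine ⟨fun i ↦ x i ^ s i, fun i ↦ zpow_ne_zero _ (hx i), fun i ↦ ?_, fun y hy ↦ ?_,
    fun e he ↦ ?_⟩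
  · dsimp only [s]
    split_ifs with h
    · simpa using h
    · rw [zpow_neg_one, norm_inv]
      exact inv_lt_one_of_one_lt₀ ((not_lt.mp h).lt_of_ne' (hcoord i))
  · obtain ⟨e, he⟩ := hgen y hy
    exact ⟨s * e, by rw [hmul, ← mul_assoc, hs, one_mul, he]⟩
  · rw [← one_mul e, ← hs, mul_assoc, hind (s * e) (hmul e ▸ he), mul_zero]

theorem exists_isValueBasis [IsUltrametricDist F] {K : Subfield F} (hK : IsTriviallyNormed K)
    (hx : ∀ i, x i ≠ 0) (hind : ∀ e, ‖laurentMonomial x e‖ = 1 → e = 0)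
    [FiniteDimensional (IntermediateField.adjoin K (Set.range x)) F] :
    ∃ x' : ι → F, IsValueBasis x' := by
  obtain ⟨N, hN, hpow⟩ := exists_norm_pow_eq_norm_laurentMonomial hK hx
    (norm_laurentMonomial_injective hx hind)
  obtain ⟨y, hy0, hgen, hy_ind⟩ := exists_norm_laurentMonomial_basis hx hind hN hpow
  exact exists_isValueBasis_of_norm_basis hy0 hgen hy_ind

end Lattice

/-! ### Uniformization -/

section Norm

variable {F : Type*} [inst : Field F] {O : ValuationSubring F}

lemma RankOne.mulArchimedean_valueGroup (h : RankOne O) : MulArchimedean O.ValueGroup := by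
  refine ⟨fun x y hy ↦ ?_⟩
  rcases le_or_gt x 1 with hx | hx
  · exact ⟨0, by rwa [pow_zero]⟩
  obtain ⟨a, rfl⟩ := O.valuation_surjective x
  obtain ⟨b, rfl⟩ := O.valuation_surjective y
  have ne_zero {c : F} (hc : 1 < O.valuation c) : c ≠ 0 :=
    O.valuation.ne_zero_iff.mp (zero_lt_one.trans hc).ne'
  have inMax_inv {c : F} (hc : 1 < O.valuation c) : InMax O c⁻¹ :=
    Or.inr (by rwa [inv_inv, ← O.valuation_le_one_iff, not_le])
  obtain ⟨n, hn⟩ := h b⁻¹ a⁻¹ (inv_ne_zero (ne_zero hy)) (inMax_inv hy) (inv_ne_zero (ne_zero hx))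
    (inMax_inv hx)
  rw [← O.valuation_le_one_iff, div_inv_eq_mul, inv_pow, map_mul, map_inv₀, map_pow,
    inv_mul_le_iff₀ (pow_pos (zero_lt_one.trans hy) n), mul_one] at hn
  exact ⟨n, hn⟩

lemma RankOne.exists_normedField (h : RankOne O) (hO : O ≠ ⊤) :
    ∃ nf : NormedField F, nf.toField = inst ∧ IsUltrametricDist F ∧ ∀ x, ‖x‖ ≤ 1 ↔ x ∈ O := by
  have : O.valuation.IsNontrivial := not_not.mp (mt O.eq_top_iff.mpr hO)
  have := h.mulArchimedean_valueGroup
  have harch : MulArchimedean (MonoidWithZeroHom.ValueGroup₀ (.ofClass O.valuation)) :=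
    MulArchimedean.comap MonoidWithZeroHom.ValueGroup₀.embedding.toMonoidHom
      MonoidWithZeroHom.ValueGroup₀.embedding_strictMono
  obtain ⟨hv⟩ := O.valuation.nonempty_rankOne_iff_mulArchimedean.mpr harch
  let _ : Valued F O.ValueGroup := Valued.mk' O.valuation
  let _ : Valuation.RankOne (Valued.v : Valuation F O.ValueGroup) := hv
  let nf := Valued.toNormedField F O.ValueGroup
  refine ⟨nf, rfl, ?_, fun x ↦ ?_⟩
  · exact IsUltrametricDist.isUltrametricDist_of_forall_norm_add_le_max_norm
      (O.valuation.norm_add_le · ·)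
  · rw [← O.valuation_le_one_iff]
    exact Valued.toNormedField.norm_le_one_iff

end Norm

section Place

variable {F : Type*} [NormedField F] {O : ValuationSubring F} {K : Subfield F}

lemma inMax_iff_norm_lt_one (hO : ∀ x, ‖x‖ ≤ 1 ↔ x ∈ O) (x : F) : InMax O x ↔ ‖x‖ < 1 := by
  rw [InMax, ← hO, norm_inv, not_le]
  rcases eq_or_ne x 0 with rfl | hx
  · simp
  · simp only [hx, false_or, one_lt_inv₀ (norm_pos_iff.mpr hx)]

lemma isVUnit_iff_norm_eq_one (hO : ∀ x, ‖x‖ ≤ 1 ↔ x ∈ O) (x : F) : IsVUnit O x ↔ ‖x‖ = 1 := by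
  rw [IsVUnit, ← hO, ← hO, norm_inv]
  constructor
  · rintro ⟨hx0, hx, hx_inv⟩
    exact hx.antisymm ((inv_le_one₀ (norm_pos_iff.mpr hx0)).mp hx_inv)
  · intro hx
    exact ⟨norm_ne_zero_iff.mp (hx ▸ one_ne_zero), hx.le, by rw [hx, inv_one]⟩

lemma isCoefficientField_of_residueEq (hO : ∀ x, ‖x‖ ≤ 1 ↔ x ∈ O) (htriv : TrivialOn O K)
    (hrat : ResidueEq O K) : IsCoefficientField K where
  isTriviallyNormed c hc hc0 := (isVUnit_iff_norm_eq_one hO c).mp ⟨hc0, htriv c hc⟩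
  exists_norm_sub_lt_one y hy := by
    obtain ⟨c, hc, hyc⟩ := hrat y ((hO y).mp hy)
    exact ⟨c, hc, (inMax_iff_norm_lt_one hO _).mp hyc⟩

lemma ValIndepMod.eq_zero_of_norm_eq_one {d : ℕ} {x : Fin d → F} (hO : ∀ x, ‖x‖ ≤ 1 ↔ x ∈ O)
    (hx : ValIndepMod O K x) {e : Fin d → ℤ} (he : ‖laurentMonomial x e‖ = 1) : e = 0 :=
  hx.2 e ⟨1, K.one_mem, one_ne_zero, by rwa [div_one, isVUnit_iff_norm_eq_one hO]⟩

end Place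

section Generators

variable {F : Type*} [Field F] {O : ValuationSubring F} {K : Subfield F}

lemma exists_generators_mem (O : ValuationSubring F) (S : Finset F) :
    ∃ g : Fin S.card → F, (∀ i, g i ∈ O) ∧ (S : Set F) ⊆ Subfield.closure (Set.range g) := by
  have mem_or_inv_mem (i : Fin S.card) := O.mem_or_inv_mem (S.equivFin.symm i : F)
  have hg (i : Fin S.card) : ∃ y ∈ O, y = S.equivFin.symm i ∨ y⁻¹ = S.equivFin.symm i :=
    (mem_or_inv_mem i).elim (fun h ↦ ⟨_, h, .inl rfl⟩) fun h ↦ ⟨_, h, .inr (inv_inv _)⟩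
  choose g hgO hg using hg
  refine ⟨g, hgO, fun s hs ↦ ?_⟩
  have hmem := Subfield.subset_closure (Set.mem_range_self (f := g) (S.equivFin ⟨s, hs⟩))
  obtain h | h : _ = s ∨ _ = s := Equiv.symm_apply_apply S.equivFin ⟨s, hs⟩ ▸ hg _
  exacts [h ▸ hmem, h ▸ inv_mem hmem]

lemma closure_eq_top_of_adjoin_eq_top {S T : Set F} (hS : IntermediateField.adjoin K S = ⊤)
    (hST : S ⊆ Subfield.closure (K ∪ T)) : Subfield.closure (K ∪ T) = ⊤ := by
  have hle : (IntermediateField.adjoin K S).toSubfield ≤ Subfield.closure (K ∪ T) := by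
    rw [IntermediateField.adjoin_toSubfield, Subfield.closure_le]
    rintro _ (⟨c, rfl⟩ | hs)
    exacts [Subfield.subset_closure (.inl c.2), hST hs]
  rwa [hS, IntermediateField.top_toSubfield, top_le_iff] at hle

lemma adjoin_toSubring_le_closure (htriv : TrivialOn O K) {ι : Type*} (x : ι → F) :
    (Algebra.adjoin K (Set.range x)).toSubring ≤
      Subring.closure (↑(K.toSubring ⊓ O.toSubring) ∪ Set.range x) := by
  rw [Algebra.adjoin_eq_ring_closure]
  refine Subring.closure_mono (Set.union_subset_union_left _ ?_)
  rintro _ ⟨c, rfl⟩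
  exact ⟨c.2, (htriv c c.2).1⟩

end Generators

section Uniformization

variable {F : Type*} [NormedField F] {O : ValuationSubring F} {K : Subfield F} {d n : ℕ}

lemma unifData_of_henselPresentation (hO : ∀ x, ‖x‖ ≤ 1 ↔ x ∈ O) (htriv : TrivialOn O K)
    {x : Fin d → F} (hx : IsTranscendenceBasis K x) (hxO : ∀ i, x i ∈ O) {ζ : Fin n → F}
    (hζO : ∀ k, ζ k ∈ O) (hζ : Subfield.closure (K ∪ Set.range ζ) = ⊤)
    (h : ∀ k, HenselPresentation (Algebra.adjoin K (Set.range x)).toSubring (ζ k)) :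
    UnifData ⊤ K O x (Fin.append (fun k ↦ (h k).u) ζ) := by
  have := hx.isAlgebraic_field
  refine ⟨fun i ↦ ⟨trivial, hxO i⟩, fun i ↦ ⟨trivial, ?_⟩, hx.1,
    fun z _ ↦ Algebra.IsAlgebraic.isAlgebraic z, top_le_iff.mp ?_, henselSystem h, fun i m ↦ ?_,
    fun i j hij ↦ ?_, eval_henselSystem h, ?_⟩
  · cases i using Fin.addCases with
    | left k => rw [Fin.append_left]; exact (hO _).mp (h k).norm_le_one
    | right k => rw [Fin.append_right]; exact hζO k
  · rw [← hζ]
    refine Subfield.closure_mono (Set.union_subset_union Set.subset_union_left ?_)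
    rintro _ ⟨k, rfl⟩
    exact ⟨Fin.natAdd n k, Fin.append_right _ _ k⟩
  · exact adjoin_toSubring_le_closure htriv x (coeff_henselSystem_mem h i m)
  · exact not_not.mp (mt MvPolynomial.mem_vars_iff_degreeOf_ne_zero.mpr
      (notMem_vars_henselSystem h hij))
  · exact (isVUnit_iff_norm_eq_one hO _).mpr (norm_det_jacobian_henselSystem h)

variable [IsUltrametricDist F]

lemma exists_isValueBasis_of_valIndepMod (hO : ∀ x, ‖x‖ ≤ 1 ↔ x ∈ O)
    (hK : IsTriviallyNormed K) {S : Set F} (hS_fin : S.Finite)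
    (hS : IntermediateField.adjoin K S = ⊤) {t x : Fin d → F} (ht : IsTranscendenceBasis K t)
    (hx : ValIndepMod O K x) : ∃ x' : Fin d → F, IsValueBasis x' := by
  have hind (e) := hx.eq_zero_of_norm_eq_one hO (e := e)
  have hx_tr := isTranscendenceBasis_of_algebraicIndependent ht <|
    algebraicIndependent_of_norm_injective hK hx.1 (norm_laurentMonomial_injective hx.1 hind)
  have := finiteDimensional_adjoin_range hx_tr hS_fin hS
  exact exists_isValueBasis hK hx.1 hind

theorem unifIn_of_isValueBasis [Nonempty (Fin d)] (hO : ∀ x, ‖x‖ ≤ 1 ↔ x ∈ O)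
    (htriv : TrivialOn O K) (hrat : ResidueEq O K) {S : Finset F}
    (hS : IntermediateField.adjoin K (S : Set F) = ⊤) {t x : Fin d → F}
    (ht : IsTranscendenceBasis K t) (hx : IsValueBasis x) : UnifIn ⊤ K O := by
  intro m ζ hζ
  have hK := isCoefficientField_of_residueEq hO htriv hrat
  have isTranscendenceBasis {y : Fin d → F} (hy : IsValueBasis y) : IsTranscendenceBasis K y :=
    isTranscendenceBasis_of_algebraicIndependent ht <|
      algebraicIndependent_of_norm_injective hK.isTriviallyNormed hy.ne_zero hy.norm_injective
  have := finiteDimensional_adjoin_range (isTranscendenceBasis hx) S.finite_toSet hS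
  obtain ⟨g, hgO, hgS⟩ := exists_generators_mem O S
  have hζgO (k) : Fin.append ζ g k ∈ O := by
    cases k using Fin.addCases with
    | left k => rw [Fin.append_left]; exact (hζ k).2
    | right k => rw [Fin.append_right]; exact hgO k
  have hg_range : Set.range g ⊆ Set.range (Fin.append ζ g) := by
    rintro _ ⟨k, rfl⟩
    exact ⟨Fin.natAdd m k, Fin.append_right _ _ k⟩
  have htop : Subfield.closure (K ∪ Set.range (Fin.append ζ g)) = ⊤ :=
    closure_eq_top_of_adjoin_eq_top hS <| hgS.trans <|
      Subfield.closure_mono (hg_range.trans Set.subset_union_right)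
  obtain ⟨x', hx', h⟩ := exists_isValueBasis_henselPresentation hK hx (Fin.append ζ g)
    fun k ↦ (hO _).mpr (hζgO k)
  refine ⟨d, _, x', _, unifData_of_henselPresentation hO htriv (isTranscendenceBasis hx')
    (fun i ↦ (hO _).mp (hx'.norm_lt_one i).le) hζgO htop fun k ↦ (h k).some,
    fun k ↦ Fin.natAdd _ (Fin.castAdd _ k), fun k ↦ ?_⟩
  rw [Fin.append_right, Fin.append_left]

end Uniformization

section Nontrivial

variable {F : Type*} [Field F] {O : ValuationSubring F} {K : Subfield F} {d : ℕ}

lemma nonempty_fin_of_transcendental {t : Fin d → F} (ht : IsTranscendenceBasis K t) {z : F}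
    (hz : Transcendental K z) : Nonempty (Fin d) := by
  by_contra hd
  rw [not_nonempty_iff] at hd
  exact hz ((ht.isEmpty_iff_isAlgebraic.mp hd).isAlgebraic z)

lemma ValIndepMod.ne_top [Nonempty (Fin d)] {x : Fin d → F} (hx : ValIndepMod O K x) :
    O ≠ ⊤ := by
  rintro rfl
  obtain ⟨i⟩ := ‹Nonempty (Fin d)›
  have hzero := hx.2 (Pi.single i 1) ⟨1, K.one_mem, one_ne_zero,
    div_ne_zero (laurentMonomial_ne_zero hx.1 _) one_ne_zero, trivial, trivial⟩
  exact one_ne_zero (Pi.single_eq_zero_iff.mp hzero)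

end Nontrivial

end LocalUnif

open LocalUnif in
/-- Corollary to Theorem 1.7; Corollary 5.10 of the paper.
If `P` is a rational Abhyankar place of rank 1 of the function field `F|K`
(i.e. `FP = K`, the value group is archimedean ordered, and
`trdeg F|K = dim_ℚ (ℚ ⊗ v_P F)`), then `(F|K, P)` is uniformizable. -/
theorem statement_5
    (F : Type*) [Field F] (K : Subfield F) (O : ValuationSubring F)
    (hff : IsFunctionField K) (htriv : TrivialOn O K)
    (hrat : ResidueEq O K) (hrk1 : RankOne O)
    (habh : ∃ d : ℕ, TrdegEq K d ∧ RatRankEq O K d) :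
    UnifIn ⊤ K O := by
  obtain ⟨⟨S, hS⟩, z, hz⟩ := hff
  obtain ⟨d, ⟨t, ht⟩, ⟨x, hx⟩, -⟩ := habh
  have := nonempty_fin_of_transcendental ht hz
  obtain ⟨_, rfl, _, hO⟩ := hrk1.exists_normedField hx.ne_top
  have hK := (isCoefficientField_of_residueEq hO htriv hrat).isTriviallyNormed
  obtain ⟨x', hx'⟩ := exists_isValueBasis_of_valIndepMod hO hK S.finite_toSet hS ht hx
  exact unifIn_of_isValueBasis hO htriv hrat hS ht hx'
end
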